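/- arXiv:1907.05801 — 6 statements merged into one kernel-verified Lean document; each statement's English description precedes it below -/
import Mathlib

section
/- Let ℏ>0, m>0, σ₀>0, α∈ℝ\{0}, β := 2α/ℏ. There exists a constant C>0, independent of all parameters, such that for every λ>0 and every ξ=(q,p)∈ℝ² with q·p≠0, and for each choice of sign ±: ‖ Ω_α^±ψ^ℏ_{σ₀,ξ} − (W_β^±φ^ℏ_{σ₀,(·)})(ξ) ‖_{L²(ℝ,dx)} ≤ C·[ (ℏ/(m|α|σ₀)^{2/3})^{3/2−λ} + exp(−(1/2)·((m|α|σ₀)^{2/3}/ℏ)^{2λ}) + exp(−σ₀²p²/ℏ) + exp(−q²/(4ℏσ₀²)) ], where (W_β^±φ^ℏ_{σ₀,(·)})(ξ)(x) = ψ^ℏ_{σ₀,ξ}(x) − θ(∓qp)·(1 ± 2i|p|/(mβ))⁻¹·(ψ^ℏ_{σ₀,ξ}(x)+ψ^ℏ_{σ₀,−ξ}(x)). -/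
open MeasureTheory Complex Filter

noncomputable section

/-- Heaviside step function: `1` for positive arguments, `0` otherwise. -/
def heav (x : ℝ) : ℝ := if 0 < x then 1 else 0

/-- Gaussian coherent state `ψ^ℏ(σ,σ̆,q,p;x)`. -/
def coh (ℏ : ℝ) (σ σ' : ℂ) (q p x : ℝ) : ℂ :=
  ((2 * Real.pi * ℏ : ℝ) : ℂ) ^ (-(1/4 : ℂ)) * σ ^ (-(1/2 : ℂ)) *
    Complex.exp (-(σ' * ((x : ℂ) - (q : ℂ)) ^ 2) / (4 * (ℏ : ℂ) * σ) +
      Complex.I * (p : ℂ) * ((x : ℂ) - (q : ℂ)) / (ℏ : ℂ))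

/-- Fourier transform `ψ̂(k) = (2π)^{-1/2} ∫ e^{-ikx} ψ(x) dx`. -/
def ft (ψ : ℝ → ℂ) (k : ℝ) : ℂ :=
  (((Real.sqrt (2 * Real.pi))⁻¹ : ℝ) : ℂ) *
    ∫ x : ℝ, Complex.exp (-(Complex.I) * (k : ℂ) * (x : ℂ)) * ψ x

/-- Reflection coefficients `R_±(k) = -(1 ± iℏ²|k|/(mα))⁻¹`; `s = ±1`. -/
def Rpm (ℏ m α s k : ℝ) : ℂ :=
  -(1 + (s : ℂ) * Complex.I * (ℏ : ℂ) ^ 2 * ((|k| : ℝ) : ℂ) / ((m : ℂ) * (α : ℂ)))⁻¹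

/-- Generalized eigenfunctions `φ_k⁺(x)`. -/
def phiP (ℏ m α k x : ℝ) : ℂ :=
  (((Real.sqrt (2 * Real.pi))⁻¹ : ℝ) : ℂ) *
    (Complex.exp (Complex.I * (k : ℂ) * (x : ℂ)) +
      Rpm ℏ m α 1 k * Complex.exp (-(Complex.I) * ((|k| : ℝ) : ℂ) * ((|x| : ℝ) : ℂ)))

/-- Bound state `φ_α` of the delta interaction (for `α < 0`). -/
def phiB (ℏ m α x : ℝ) : ℂ :=
  ((Real.sqrt (m * |α|) / ℏ : ℝ) : ℂ) * Complex.exp (((-(m * |α| * |x|) / ℏ ^ 2 : ℝ) : ℂ))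

/-- Quantum evolution `e^{-(it/ℏ)H_α} ψ` via the eigenfunction expansion. -/
def qEvol (ℏ m α t : ℝ) (ψ : ℝ → ℂ) (x : ℝ) : ℂ :=
  (∫ k : ℝ, Complex.exp (-(Complex.I) * (ℏ : ℂ) * (t : ℂ) * (k : ℂ) ^ 2 / (2 * (m : ℂ))) *
      phiP ℏ m α k x * (∫ y : ℝ, (starRingEnd ℂ) (phiP ℏ m α k y) * ψ y)) +
    ((heav (-α) : ℝ) : ℂ) *
      Complex.exp (-(Complex.I) * (t : ℂ) / (ℏ : ℂ) * ((-(m * α ^ 2) / (2 * ℏ ^ 2) : ℝ) : ℂ)) *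
      phiB ℏ m α x * (∫ y : ℝ, phiB ℏ m α y * ψ y)

/-- Classical perturbed evolution `e^{itL_β}` acting on functions of `(q,p)`. -/
def cEvol (m β t : ℝ) (f : ℝ → ℝ → ℂ) (q p : ℝ) : ℂ :=
  f (q + p * t / m) p -
    ((heav (-(t * q * p)) * heav (|p * t| / m - |q|) : ℝ) : ℂ) /
      (1 - (Real.sign t : ℂ) * 2 * Complex.I * ((|p| : ℝ) : ℂ) / ((m : ℂ) * (β : ℂ))) *
      (f (q + p * t / m) p + f (-(q + p * t / m)) (-p))

end

/-- Quantum wave operators `Ω_α^±` in their stationary representation; `s = ±1`. -/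
noncomputable def waveOpQ (ℏ m α s : ℝ) (ψ : ℝ → ℂ) (x : ℝ) : ℂ :=
  ψ x + (((Real.sqrt (2 * Real.pi))⁻¹ : ℝ) : ℂ) *
    ∫ k : ℝ, Complex.exp (-(s : ℂ) * Complex.I * ((|k| : ℝ) : ℂ) * ((|x| : ℝ) : ℂ)) *
      Rpm ℏ m α s k * ft ψ k

open scoped FourierTransform ENNReal ContDiff

lemma aux_fourier_ae (g : ℝ → ℂ) (hg : Integrable g) (hg2 : MemLp g 2 volume) :
    ∀ᵐ x, (𝓕 (hg2.toLp g) : Lp (α := ℝ) ℂ 2 volume) x = 𝓕 g x := by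
  apply ae_eq_of_integral_contDiff_smul_eq
  · exact (Lp.memLp _).locallyIntegrable (by norm_num)
  · have : Continuous (𝓕 g) := by
      exact VectorFourier.fourierIntegral_continuous Real.continuous_fourierChar
        (by exact continuous_inner) hg
    exact this.locallyIntegrable
  · intro φ hφ hφc
    have h1 : HasCompactSupport (fun x => (φ x : ℂ)) :=
      hφc.comp_left (g := fun t : ℝ => (t : ℂ)) (by simp)
    have h2 : ContDiff ℝ ∞ (fun x => (φ x : ℂ)) := Complex.ofRealCLM.contDiff.comp hφ
    let Φ := h1.toSchwartzMap h2
    have hΦ : ∀ x, Φ x = (φ x : ℂ) := fun x => rfl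
    have e1 := Lp.fourier_toTemperedDistribution_eq (hg2.toLp g)
    have e2 := congrArg (fun T => T Φ) e1
    simp only [TemperedDistribution.fourier_apply, Lp.toTemperedDistribution_apply, hΦ] at e2
    have e3 : ∫ x, φ x • (𝓕 (hg2.toLp g) : Lp (α := ℝ) ℂ 2 volume) x
        = ∫ x, (φ x : ℂ) • (𝓕 (hg2.toLp g) : Lp (α := ℝ) ℂ 2 volume) x := by
      simp
    rw [e3, ← e2]
    have e4 : ∫ x, (𝓕 Φ) x • (hg2.toLp g) x = ∫ x, (𝓕 Φ) x • g x := by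
      apply integral_congr_ae
      filter_upwards [hg2.coeFn_toLp] with x hx
      rw [hx]
    rw [e4]
    have e5 := VectorFourier.integral_fourierIntegral_smul_eq_flip (e := Real.fourierChar) (μ := volume) (ν := volume)
      (L := innerₗ ℝ) (f := Φ) (g := g) Real.continuous_fourierChar (by exact continuous_inner)
      Φ.integrable hg
    rw [flip_innerₗ] at e5
    rw [SchwartzMap.fourier_coe]
    refine Eq.trans e5 ?_
    simp [hΦ]
    rfl

lemma aux_planch0 (g : ℝ → ℂ) (hg : Integrable g) (hg2 : MemLp g 2 volume) :
    eLpNorm (𝓕 g) 2 = eLpNorm g 2 := by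
  rw [← eLpNorm_congr_ae (aux_fourier_ae g hg hg2), ← eLpNorm_congr_ae hg2.coeFn_toLp]
  have := Lp.norm_fourier_eq (hg2.toLp g)
  rw [Lp.norm_def, Lp.norm_def] at this
  exact (ENNReal.toReal_eq_toReal_iff' (Lp.eLpNorm_ne_top _) (Lp.eLpNorm_ne_top _)).1 this

lemma aux_cont (g : ℝ → ℂ) (hg : Integrable g) : Continuous (𝓕 g) := 
  VectorFourier.fourierIntegral_continuous Real.continuous_fourierChar
        (by exact continuous_inner) hg

/-- unitary transform -/
noncomputable def PP (c : ℝ) (g : ℝ → ℂ) (y : ℝ) : ℂ :=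
  (((Real.sqrt (2 * Real.pi))⁻¹ : ℝ) : ℂ) * ∫ k : ℝ, cexp (-(c : ℂ) * I * k * y) * g k

lemma PP_eq (c : ℝ) (g : ℝ → ℂ) :
    PP c g = fun y => (((Real.sqrt (2 * Real.pi))⁻¹ : ℝ) : ℂ) * 𝓕 g ((c / (2 * Real.pi)) * y) := by
  funext y
  unfold PP
  rw [Real.fourier_real_eq_integral_exp_smul]
  congr 1
  apply integral_congr_ae
  filter_upwards with k
  simp only [smul_eq_mul]
  congr 2
  push_cast
  have : (Real.pi : ℂ) ≠ 0 := by exact_mod_cast Real.pi_ne_zero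
  field_simp

lemma PP_cont (c : ℝ) (g : ℝ → ℂ) (hg : Integrable g) : Continuous (PP c g) := by
  rw [PP_eq]
  have := aux_cont g hg
  fun_prop

lemma eLpNorm_comp_mul (f : ℝ → ℂ) (hf : Continuous f) (a : ℝ) (ha : a ≠ 0) :
    eLpNorm (fun x => f (a * x)) 2 = ENNReal.ofReal (|a|⁻¹ ^ (1/2 : ℝ)) * eLpNorm f 2 := by
  have h := eLpNorm_map_measure (p := 2) (μ := (volume : Measure ℝ)) (g := f) (f := fun x => a * x)
    hf.aestronglyMeasurable (by fun_prop)
  have h2 : eLpNorm (fun x => f (a * x)) 2 = eLpNorm (f ∘ fun x => a * x) 2 := rfl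
  rw [h2, ← h, Real.map_volume_mul_left ha, eLpNorm_smul_measure_of_ne_top (by norm_num)]
  rw [smul_eq_mul, abs_inv]
  congr 1
  rw [ENNReal.ofReal_rpow_of_nonneg (by positivity) (by positivity)]
  simp

lemma PP_norm (c : ℝ) (hc : c = 1 ∨ c = -1) (g : ℝ → ℂ) (hg : Integrable g) (hg2 : MemLp g 2 volume) :
    eLpNorm (PP c g) 2 = eLpNorm g 2 := by
  have hc1 : |c| = 1 := by rcases hc with rfl | rfl <;> simp
  have hc0 : c ≠ 0 := by rcases hc with rfl | rfl <;> simp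
  have hpi := Real.pi_pos
  rw [PP_eq]
  have := eLpNorm_const_smul (((Real.sqrt (2 * Real.pi))⁻¹ : ℝ) : ℂ)
    (fun y : ℝ => 𝓕 g ((c / (2 * Real.pi)) * y)) 2 volume
  refine Eq.trans this ?_
  rw [eLpNorm_comp_mul _ (aux_cont g hg) _ (by positivity), aux_planch0 g hg hg2, ← mul_assoc,
    ← ofReal_norm, ← ENNReal.ofReal_mul (by positivity)]
  rw [abs_div, hc1, abs_of_pos (by positivity : 0 < 2 * Real.pi)]
  rw [Complex.norm_real, Real.norm_of_nonneg (by positivity), ← Real.sqrt_eq_rpow]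
  simp only [one_div, inv_inv]
  rw [inv_mul_cancel₀ (by positivity)]
  simp

lemma eLpNorm_comp_abs_le (F : ℝ → ℂ) (hF : Continuous F) :
    eLpNorm (fun x => F |x|) 2 volume ≤ 2 * eLpNorm F 2 volume := by
  have h1 : eLpNorm (fun x => F |x|) 2 volume ≤
      eLpNorm ((fun x => ‖F x‖) + fun x => ‖F ((-1) * x)‖) 2 volume := by
    apply eLpNorm_mono_real
    intro x
    simp only [Pi.add_apply]
    rcases abs_choice x with h | h <;> rw [h]
    · linarith [norm_nonneg (F (-1 * x))]
    · rw [neg_one_mul]; linarith [norm_nonneg (F x)]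
  refine h1.trans ((eLpNorm_add_le (by fun_prop) (by fun_prop) (by norm_num)).trans ?_)
  rw [eLpNorm_norm, eLpNorm_norm (fun x => F (-1 * x)), eLpNorm_comp_mul F hF _ (by norm_num)]
  simp [two_mul]

/-- the transform with absolute values -/
noncomputable def HH (s : ℝ) (g : ℝ → ℂ) (x : ℝ) : ℂ :=
  (((Real.sqrt (2 * Real.pi))⁻¹ : ℝ) : ℂ) *
    ∫ k : ℝ, cexp (-(s : ℂ) * I * ((|k| : ℝ) : ℂ) * ((|x| : ℝ) : ℂ)) * g k

lemma norm_phase (s a b : ℝ) : ‖cexp (-(s : ℂ) * I * (a : ℂ) * (b : ℂ))‖ = 1 := by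
  have : -(s : ℂ) * I * (a : ℂ) * (b : ℂ) = ((-s * a * b : ℝ) : ℂ) * I := by
    push_cast; ring
  rw [this, Complex.norm_exp_ofReal_mul_I]

lemma int_phase (s b : ℝ) (g : ℝ → ℂ) (hg : Integrable g) :
    Integrable (fun k : ℝ => cexp (-(s : ℂ) * I * (k : ℂ) * (b : ℂ)) * g k) := by
  apply hg.bdd_mul (c := 1)
  · exact Continuous.aestronglyMeasurable (by fun_prop)
  · filter_upwards with k
    rw [norm_phase]

lemma int_phase_abs (s b : ℝ) (g : ℝ → ℂ) (hg : Integrable g) :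
    Integrable (fun k : ℝ => cexp (-(s : ℂ) * I * ((|k| : ℝ) : ℂ) * (b : ℂ)) * g k) := by
  apply hg.bdd_mul (c := 1)
  · exact Continuous.aestronglyMeasurable (by fun_prop)
  · filter_upwards with k
    rw [norm_phase]

lemma HH_eq (s : ℝ) (g : ℝ → ℂ) (hg : Integrable g) :
    HH s g = (fun x => PP s ((Set.Ioi 0).indicator g) |x|) +
      fun x => PP (-s) ((Set.Iic 0).indicator g) |x| := by
  funext x
  simp only [Pi.add_apply, HH, PP]
  rw [← mul_add, ← integral_add]
  · congr 1
    apply integral_congr_ae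
    filter_upwards with k
    by_cases hk : 0 < k
    · simp [Set.indicator, hk, abs_of_pos hk, hk.not_ge]
    · have hk' : k ≤ 0 := not_lt.1 hk
      simp [Set.indicator, hk, hk', abs_of_nonpos hk']
  · exact int_phase _ _ _ (hg.indicator measurableSet_Ioi)
  · exact int_phase _ _ _ (hg.indicator measurableSet_Iic)

lemma HH_cont (s : ℝ) (g : ℝ → ℂ) (hg : Integrable g) : Continuous (HH s g) := by
  rw [HH_eq s g hg]
  exact ((PP_cont _ _ (hg.indicator measurableSet_Ioi)).comp continuous_abs).add
    ((PP_cont _ _ (hg.indicator measurableSet_Iic)).comp continuous_abs)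

lemma PP_abs_norm (c : ℝ) (hc : c = 1 ∨ c = -1) (g : ℝ → ℂ) (hg : Integrable g)
    (hg2 : MemLp g 2 volume) :
    eLpNorm (fun x => PP c g |x|) 2 volume ≤ 2 * eLpNorm g 2 volume := by
  rw [← PP_norm c hc g hg hg2]
  exact eLpNorm_comp_abs_le _ (PP_cont c g hg)

lemma HH_norm (s : ℝ) (hs : s = 1 ∨ s = -1) (g : ℝ → ℂ) (hg : Integrable g)
    (hg2 : MemLp g 2 volume) :
    eLpNorm (HH s g) 2 volume ≤ 4 * eLpNorm g 2 volume := by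
  rw [HH_eq s g hg]
  have i1 := hg.indicator (measurableSet_Ioi (a := (0:ℝ)))
  have i2 := hg.indicator (measurableSet_Iic (a := (0:ℝ)))
  refine (eLpNorm_add_le
    ((PP_cont _ _ i1).comp continuous_abs).aestronglyMeasurable
    ((PP_cont _ _ i2).comp continuous_abs).aestronglyMeasurable (by norm_num)).trans ?_
  have h1 := PP_abs_norm s hs _ i1 (hg2.indicator measurableSet_Ioi)
  have h2 := PP_abs_norm (-s) (by rcases hs with rfl | rfl <;> simp) _ i2
    (hg2.indicator measurableSet_Iic)
  have h3 : eLpNorm ((Set.Ioi (0:ℝ)).indicator g) 2 volume ≤ eLpNorm g 2 volume :=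
    eLpNorm_indicator_le g
  have h4 : eLpNorm ((Set.Iic (0:ℝ)).indicator g) 2 volume ≤ eLpNorm g 2 volume :=
    eLpNorm_indicator_le g
  calc _ ≤ 2 * eLpNorm g 2 volume + 2 * eLpNorm g 2 volume :=
        add_le_add (h1.trans (by gcongr)) (h2.trans (by gcongr))
    _ = 4 * eLpNorm g 2 volume := by rw [← add_mul]; norm_num

lemma gauss_norm (K b d M : ℝ) (hb : 0 < b) (hM : 0 ≤ M)
    (h : K ^ 2 * Real.sqrt (Real.pi / (2 * b)) ≤ M ^ 2) :
    eLpNorm (fun x : ℝ => K * Real.exp (-b * (x - d) ^ 2)) 2 volume ≤ ENNReal.ofReal M := by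
  have hint : ∫ x : ℝ, (K * Real.exp (-b * (x - d) ^ 2)) ^ 2 =
      K ^ 2 * Real.sqrt (Real.pi / (2 * b)) := by
    have : ∀ x : ℝ, (K * Real.exp (-b * (x - d) ^ 2)) ^ 2 =
        K ^ 2 * Real.exp (-(2 * b) * (x - d) ^ 2) := by
      intro x
      rw [mul_pow, ← Real.exp_nat_mul]
      congr 2; push_cast; ring
    simp_rw [this]
    rw [integral_const_mul, integral_sub_right_eq_self (fun x => Real.exp (-(2 * b) * x ^ 2)),
      integral_gaussian]
  have hI : Integrable (fun x : ℝ => (K * Real.exp (-b * (x - d) ^ 2)) ^ 2) := by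
    have : ∀ x : ℝ, (K * Real.exp (-b * (x - d) ^ 2)) ^ 2 =
        K ^ 2 * Real.exp (-(2 * b) * (x - d) ^ 2) := by
      intro x
      rw [mul_pow, ← Real.exp_nat_mul]
      congr 2; push_cast; ring
    simp_rw [this]
    exact ((integrable_exp_neg_mul_sq (by positivity : 0 < 2 * b)).comp_sub_right d).const_mul _
  have hmem : MemLp (fun x : ℝ => K * Real.exp (-b * (x - d) ^ 2)) 2 volume := by
    rw [memLp_two_iff_integrable_sq (Continuous.aestronglyMeasurable (by fun_prop))]
    exact hI
  rw [hmem.eLpNorm_eq_integral_rpow_norm (by norm_num) (by norm_num)]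
  apply ENNReal.ofReal_le_ofReal
  simp only [ENNReal.toReal_ofNat, Real.rpow_two, Real.norm_eq_abs, sq_abs]
  rw [hint]
  calc _ ≤ (M ^ 2) ^ ((2:ℝ)⁻¹) := by gcongr
    _ = M := by rw [← Real.rpow_natCast, ← Real.rpow_mul hM]; norm_num

/-- coherent state, simplified parameters -/
noncomputable def gx (A : ℂ) (v q κ x : ℝ) : ℂ :=
  A * cexp (-((x : ℂ) - q) ^ 2 / (4 * v) + I * κ * (x - q))

/-- its Fourier transform -/
noncomputable def gk (A : ℂ) (v q κ k : ℝ) : ℂ :=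
  A * (Real.sqrt (2 * v) : ℂ) * cexp (-I * k * q - v * ((k : ℂ) - κ) ^ 2)

lemma csqrt_ofReal (r : ℝ) (hr : 0 ≤ r) : (r : ℂ) ^ (1 / 2 : ℂ) = (Real.sqrt r : ℂ) := by
  rw [Real.sqrt_eq_rpow, Complex.ofReal_cpow hr]; norm_num

lemma ft_gx (A : ℂ) (v q κ : ℝ) (hv : 0 < v) (k : ℝ) :
    ft (gx A v q κ) k = gk A v q κ k := by
  unfold ft gx gk
  have hv' : (v : ℂ) ≠ 0 := by exact_mod_cast hv.ne'
  have e : ∀ x : ℝ, cexp (-I * k * x) * (A * cexp (-((x : ℂ) - q) ^ 2 / (4 * v) + I * κ * (x - q)))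
      = A * cexp ((-((1 / (4 * v) : ℝ) : ℂ)) * (x : ℂ) ^ 2 + (q / (2 * v) + I * (κ - k)) * x
        + (-(q : ℂ) ^ 2 / (4 * v) - I * κ * q)) := by
    intro x
    rw [mul_left_comm, ← Complex.exp_add]
    congr 2
    push_cast
    field_simp
    ring
  simp_rw [e]
  rw [integral_const_mul, integral_cexp_quadratic (by
    rw [Complex.neg_re, Complex.ofReal_re]; simp; exact hv)]
  have e2 : (Real.pi : ℂ) / -(-((1 / (4 * v) : ℝ) : ℂ)) = ((4 * Real.pi * v : ℝ) : ℂ) := by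
    push_cast; field_simp
  rw [e2, csqrt_ofReal _ (by positivity)]
  have e3 : Real.sqrt (4 * Real.pi * v) = Real.sqrt (2 * Real.pi) * Real.sqrt (2 * v) := by
    rw [← Real.sqrt_mul (by positivity)]; congr 1; ring
  have e4 : (Real.sqrt (2 * Real.pi) : ℂ) ≠ 0 := by
    have : 0 < Real.sqrt (2 * Real.pi) := by positivity
    exact_mod_cast this.ne'
  rw [e3]
  have e5 : (-(q : ℂ) ^ 2 / (4 * v) - I * κ * q) -
      (q / (2 * v) + I * (κ - k)) ^ 2 / (4 * (-((1 / (4 * v) : ℝ) : ℂ))) =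
      -I * k * q - v * ((k : ℂ) - κ) ^ 2 := by
    push_cast
    field_simp
    ring_nf
    simp only [Complex.I_sq]
    ring
  rw [e5]
  push_cast
  field_simp

lemma PP_gk (A : ℂ) (v q κ : ℝ) (hv : 0 < v) (c y : ℝ) :
    PP c (gk A v q κ) y = gx A v q κ (-c * y) := by
  unfold PP gx gk
  have hv' : (v : ℂ) ≠ 0 := by exact_mod_cast hv.ne'
  have e : ∀ k : ℝ, cexp (-(c : ℂ) * I * k * y) *
      (A * (Real.sqrt (2 * v) : ℂ) * cexp (-I * k * q - v * ((k : ℂ) - κ) ^ 2))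
      = (A * (Real.sqrt (2 * v) : ℂ)) * cexp ((-(v : ℂ)) * (k : ℂ) ^ 2
        + (2 * v * κ + I * (-c * y - q)) * k + (-v * (κ : ℂ) ^ 2)) := by
    intro x
    rw [mul_left_comm, ← Complex.exp_add]
    congr 2
    ring
  simp_rw [e]
  rw [integral_const_mul, integral_cexp_quadratic (by
    rw [Complex.neg_re, Complex.ofReal_re]; simp; exact hv)]
  have e2 : (Real.pi : ℂ) / -(-(v : ℂ)) = ((Real.pi / v : ℝ) : ℂ) := by
    push_cast; field_simp
  rw [e2, csqrt_ofReal _ (by positivity)]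
  have e3 : Real.sqrt (2 * v) * Real.sqrt (Real.pi / v) = Real.sqrt (2 * Real.pi) := by
    rw [← Real.sqrt_mul (by positivity)]; congr 1; field_simp
  have e4 : (Real.sqrt (2 * Real.pi) : ℂ) ≠ 0 := by
    have : 0 < Real.sqrt (2 * Real.pi) := by positivity
    exact_mod_cast this.ne'
  have e3' : (Real.sqrt (2 * v) : ℂ) * (Real.sqrt (Real.pi / v) : ℂ) = (Real.sqrt (2 * Real.pi) : ℂ) := by
    exact_mod_cast e3
  have e5 : (-v * (κ : ℂ) ^ 2) - (2 * v * κ + I * (-c * y - q)) ^ 2 / (4 * (-(v : ℂ))) =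
      -(((-c * y : ℝ) : ℂ) - q) ^ 2 / (4 * v) + I * κ * (((-c * y : ℝ) : ℂ) - q) := by
    push_cast
    field_simp
    ring_nf
    simp only [Complex.I_sq]
    ring
  rw [e5]
  rw [Complex.ofReal_inv]
  generalize cexp _ = E
  calc _ = ((Real.sqrt (2 * Real.pi) : ℂ))⁻¹ * A * ((Real.sqrt (2 * v) : ℂ) * (Real.sqrt (Real.pi / v) : ℂ)) * E := by ring
    _ = _ := by rw [e3']; field_simp

lemma norm_gx (A : ℂ) (v q κ x : ℝ) :
    ‖gx A v q κ x‖ = ‖A‖ * Real.exp (-(x - q) ^ 2 / (4 * v)) := by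
  unfold gx
  rw [norm_mul, Complex.norm_exp]
  congr 2
  have : -((x : ℂ) - q) ^ 2 / (4 * v) + I * κ * (x - q) =
    ((-(x - q) ^ 2 / (4 * v) : ℝ) : ℂ) + ((κ * (x - q) : ℝ) : ℂ) * I := by push_cast; ring
  rw [this, Complex.add_re, Complex.ofReal_re, Complex.re_ofReal_mul, Complex.I_re]; ring

lemma norm_gk (A : ℂ) (v q κ k : ℝ) :
    ‖gk A v q κ k‖ = ‖A‖ * Real.sqrt (2 * v) * Real.exp (-v * (k - κ) ^ 2) := by
  unfold gk
  rw [norm_mul, norm_mul, Complex.norm_exp, Complex.norm_real,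
    Real.norm_of_nonneg (Real.sqrt_nonneg _)]
  congr 2
  have : -I * (k : ℂ) * q - v * ((k : ℂ) - κ) ^ 2 =
    ((-v * (k - κ) ^ 2 : ℝ) : ℂ) + ((-k * q : ℝ) : ℂ) * I := by push_cast; ring
  rw [this, Complex.add_re, Complex.ofReal_re, Complex.re_ofReal_mul, Complex.I_re]; ring

lemma cont_gk (A : ℂ) (v q κ : ℝ) : Continuous (gk A v q κ) := by
  unfold gk; fun_prop

lemma int_gk (A : ℂ) (v q κ : ℝ) (hv : 0 < v) : Integrable (gk A v q κ) := by
  have h : Integrable (fun k : ℝ => ‖A‖ * Real.sqrt (2 * v) * Real.exp (-v * (k - κ) ^ 2)) :=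
    ((integrable_exp_neg_mul_sq hv).comp_sub_right κ).const_mul _
  refine h.mono (cont_gk A v q κ).aestronglyMeasurable ?_
  filter_upwards with k
  rw [norm_gk, Real.norm_of_nonneg (by positivity)]

/-- one over one plus i r -/
noncomputable def JJ (r : ℝ) : ℂ := (1 + (r : ℂ) * I)⁻¹

lemma JJ_den (r : ℝ) : 1 ≤ ‖1 + (r : ℂ) * I‖ := by
  have := Complex.abs_re_le_norm (1 + (r : ℂ) * I)
  simpa using this

lemma JJ_ne (r : ℝ) : 1 + (r : ℂ) * I ≠ 0 := by
  intro h
  have := JJ_den r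
  rw [h] at this; norm_num at this

lemma JJ_cont : Continuous JJ := by
  unfold JJ
  exact Continuous.inv₀ (by fun_prop) JJ_ne

lemma JJ_le (r : ℝ) : ‖JJ r‖ ≤ 1 := by
  unfold JJ
  rw [norm_inv]
  exact inv_le_one_of_one_le₀ (JJ_den r)

lemma JJ_sub (r t : ℝ) : ‖JJ r - JJ t‖ ≤ |r - t| := by
  have h : JJ r - JJ t = ((t - r : ℝ) : ℂ) * I * (JJ r * JJ t) := by
    unfold JJ
    rw [← mul_inv, inv_sub_inv (JJ_ne r) (JJ_ne t), div_eq_mul_inv]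
    push_cast
    ring
  rw [h, norm_mul, norm_mul, norm_mul, Complex.norm_I, Complex.norm_real, mul_one, Real.norm_eq_abs,
    abs_sub_comm]
  have h1 : ‖JJ r‖ * ‖JJ t‖ ≤ 1 := mul_le_one₀ (JJ_le r) (norm_nonneg _) (JJ_le t)
  nlinarith [abs_nonneg (r - t)]

lemma final_scalar (ℏ X lam : ℝ) (hℏ : 0 < ℏ) (hX : 0 < X) (hl : 0 < lam) :
    min ((ℏ / X) ^ ((3 : ℝ) / 2)) 1 ≤
      2 * ((ℏ / X) ^ ((3 : ℝ) / 2 - lam) + Real.exp (-(1 / 2) * (X / ℏ) ^ (2 * lam))) := by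
  have hpos : 0 < ℏ / X := by positivity
  have h1 : 0 < (ℏ / X) ^ ((3 : ℝ) / 2 - lam) := by positivity
  have h2 := Real.exp_pos (-(1 / 2) * (X / ℏ) ^ (2 * lam))
  rcases le_total (ℏ / X) 1 with h | h
  · have := Real.rpow_le_rpow_of_exponent_ge hpos h (by linarith : (3:ℝ) / 2 - lam ≤ 3 / 2)
    refine (min_le_left _ _).trans ?_
    linarith
  · refine (min_le_right _ _).trans ?_
    have hx : X / ℏ ≤ 1 := by
      rw [div_le_one hℏ]; rwa [one_le_div hX] at h
    have h3 : (X / ℏ) ^ (2 * lam) ≤ 1 := Real.rpow_le_one (by positivity) hx (by positivity)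
    have h4 : Real.exp (-(1/2)) ≤ Real.exp (-(1 / 2) * (X / ℏ) ^ (2 * lam)) := by
      apply Real.exp_le_exp.2; linarith
    have h5 : (1:ℝ) / 2 ≤ Real.exp (-(1/2)) := by
      have := Real.add_one_le_exp (-(1/2) : ℝ)
      linarith
    linarith

lemma eta_eq (ℏ Y σ : ℝ) (hℏ : 0 < ℏ) (hY : 0 < Y) (hσ : 0 < σ) :
    ℏ ^ 2 / Y / Real.sqrt (ℏ * σ ^ 2) = (ℏ / (Y * σ) ^ ((2 : ℝ) / 3)) ^ ((3 : ℝ) / 2) := by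
  rw [Real.div_rpow hℏ.le (by positivity), ← Real.rpow_mul (by positivity)]
  norm_num
  have : ℏ ^ ((3 : ℝ) / 2) = ℏ * Real.sqrt ℏ := by
    rw [Real.sqrt_eq_rpow]
    nth_rewrite 2 [← Real.rpow_one ℏ]
    rw [← Real.rpow_add hℏ]; norm_num
  rw [this, Real.sqrt_mul hℏ.le, Real.sqrt_sq hσ.le]
  have h2 := Real.mul_self_sqrt hℏ.le
  have h3 : 0 < Real.sqrt ℏ := by positivity
  field_simp
  rw [sq, h2]

lemma gk_norm_le (A : ℂ) (v q κ : ℝ) (hv : 0 < v)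
    (hA : ‖A‖ ^ 2 * Real.sqrt (2 * Real.pi * v) = 1) :
    eLpNorm (gk A v q κ) 2 volume ≤ ENNReal.ofReal 1 := by
  refine le_trans (eLpNorm_mono_real (g := fun k => (‖A‖ * Real.sqrt (2 * v)) * Real.exp (-v * (k - κ) ^ 2))
    (fun k => (norm_gk A v q κ k).le)) ?_
  apply gauss_norm _ _ _ _ hv (by norm_num)
  rw [mul_pow, Real.sq_sqrt (by positivity)]
  have : 2 * v * Real.sqrt (Real.pi / (2 * v)) = Real.sqrt (2 * Real.pi * v) := by
    rw [← Real.sqrt_sq (by positivity : 0 ≤ 2 * v), ← Real.sqrt_mul (by positivity),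
      Real.sqrt_sq (by positivity)]
    congr 1; field_simp
  rw [mul_assoc, this, hA]; norm_num

lemma g1_norm_le (A : ℂ) (v q κ b : ℝ) (hv : 0 < v)
    (hA : ‖A‖ ^ 2 * Real.sqrt (2 * Real.pi * v) = 1) :
    eLpNorm (fun k => (JJ (b * |κ|) - JJ (b * |k|)) * gk A v q κ k) 2 volume ≤
      ENNReal.ofReal (2 * min (|b| / Real.sqrt v) 1) := by
  have hsv : 0 < Real.sqrt v := by positivity
  rcases le_total (|b| / Real.sqrt v) 1 with h | h
  · rw [min_eq_left h]
    refine le_trans (eLpNorm_mono_real (g := fun k => (|b| / Real.sqrt v * (‖A‖ * Real.sqrt (2 * v)))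
      * Real.exp (-(v / 2) * (k - κ) ^ 2)) (fun k => ?_)) ?_
    · rw [norm_mul, norm_gk]
      have h1 : ‖JJ (b * |κ|) - JJ (b * |k|)‖ ≤ |b| * |k - κ| := by
        refine (JJ_sub _ _).trans ?_
        rw [← mul_sub, abs_mul]
        rw [abs_sub_comm k κ]
        exact mul_le_mul_of_nonneg_left (abs_abs_sub_abs_le _ _) (abs_nonneg b)
      have h2 : Real.sqrt v * |k - κ| ≤ Real.exp (v / 2 * (k - κ) ^ 2) := by
        have h3 := Real.add_one_le_exp (v / 2 * (k - κ) ^ 2)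
        have h4 : (Real.sqrt v * |k - κ|) ^ 2 = v * (k - κ) ^ 2 := by
          rw [mul_pow, sq_abs, Real.sq_sqrt hv.le]
        nlinarith [sq_nonneg (Real.sqrt v * |k - κ| - 1)]
      have h5 : Real.exp (-(v / 2) * (k - κ) ^ 2) =
          Real.exp (v / 2 * (k - κ) ^ 2) * Real.exp (-v * (k - κ) ^ 2) := by
        rw [← Real.exp_add]; congr 1; ring
      rw [h5]
      calc _ ≤ (|b| * |k - κ|) * (‖A‖ * Real.sqrt (2 * v) * Real.exp (-v * (k - κ) ^ 2)) := by gcongr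
        _ = (|b| / Real.sqrt v * (‖A‖ * Real.sqrt (2 * v))) *
            ((Real.sqrt v * |k - κ|) * Real.exp (-v * (k - κ) ^ 2)) := by field_simp
        _ ≤ _ := by gcongr
    · apply gauss_norm _ _ _ _ (by positivity) (by positivity)
      have e : 2 * (v / 2) = v := by ring
      rw [mul_pow, mul_pow, mul_pow, Real.sq_sqrt (by positivity : 0 ≤ 2 * v), e]
      have e2 : 2 * v * Real.sqrt (Real.pi / v) = Real.sqrt 2 * Real.sqrt (2 * Real.pi * v) := by
        have e0 : 2 * v = Real.sqrt ((2 * v) ^ 2) := (Real.sqrt_sq (by positivity)).symm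
        rw [← Real.sqrt_mul (by positivity), e0, ← Real.sqrt_mul (by positivity)]
        congr 1; field_simp
        try ring
      have e3 : Real.sqrt 2 ≤ 2 := by
        rw [Real.sqrt_le_left (by norm_num)]; norm_num
      calc _ = (|b| / Real.sqrt v) ^ 2 * (‖A‖ ^ 2 * (2 * v * Real.sqrt (Real.pi / v))) := by ring
        _ = (|b| / Real.sqrt v) ^ 2 * (Real.sqrt 2 * (‖A‖ ^ 2 * Real.sqrt (2 * Real.pi * v))) := by
            rw [e2]; ring
        _ = (|b| / Real.sqrt v) ^ 2 * Real.sqrt 2 := by rw [hA, mul_one]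
        _ ≤ _ := by rw [mul_comm (2 ^ 2 : ℝ)]; gcongr; linarith
  · rw [min_eq_right h]
    refine le_trans (eLpNorm_le_nnreal_smul_eLpNorm_of_ae_le_mul (c := 2) (g := gk A v q κ) ?_ 2) ?_
    · filter_upwards with k
      rw [nnnorm_mul]
      gcongr
      refine (nnnorm_sub_le _ _).trans ?_
      have h1 : ‖JJ (b * |κ|)‖₊ ≤ 1 := JJ_le _
      have h2 : ‖JJ (b * |k|)‖₊ ≤ 1 := JJ_le _
      calc _ ≤ (1 : NNReal) + 1 := add_le_add h1 h2
        _ = 2 := by norm_num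
    · have := gk_norm_le A v q κ hv hA
      rw [ENNReal.ofReal_mul (by norm_num), ENNReal.smul_def, smul_eq_mul]
      gcongr
      simp

/-- wrong-direction momentum part -/
noncomputable def NN (A : ℂ) (v q κ : ℝ) : ℝ → ℂ :=
  {k : ℝ | k * κ ≤ 0}.indicator (gk A v q κ)

lemma NN_meas (κ : ℝ) : MeasurableSet {k : ℝ | k * κ ≤ 0} :=
  measurableSet_le (by fun_prop) (by fun_prop)

lemma NN_norm_le (A : ℂ) (v q κ : ℝ) (hv : 0 < v)
    (hA : ‖A‖ ^ 2 * Real.sqrt (2 * Real.pi * v) = 1) :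
    eLpNorm (NN A v q κ) 2 volume ≤ ENNReal.ofReal (Real.exp (-(v * κ ^ 2))) := by
  refine le_trans (eLpNorm_mono_real (g := fun k => (Real.exp (-(v * κ ^ 2)) * (‖A‖ * Real.sqrt (2 * v)))
      * Real.exp (-v * (k - 0) ^ 2)) (fun k => ?_)) ?_
  · unfold NN
    by_cases hk : k * κ ≤ 0
    · rw [Set.indicator_of_mem (by exact hk), norm_gk]
      calc _ ≤ ‖A‖ * Real.sqrt (2 * v) * Real.exp (-(v * κ ^ 2) + -v * (k - 0) ^ 2) := by
            gcongr
            nlinarith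
        _ = _ := by rw [Real.exp_add]; ring
    · rw [Set.indicator_of_notMem (by exact hk), norm_zero]
      positivity
  · apply gauss_norm _ _ _ _ hv (by positivity)
    rw [mul_pow, mul_pow, Real.sq_sqrt (by positivity)]
    have : 2 * v * Real.sqrt (Real.pi / (2 * v)) = Real.sqrt (2 * Real.pi * v) := by
      rw [← Real.sqrt_sq (by positivity : 0 ≤ 2 * v), ← Real.sqrt_mul (by positivity),
        Real.sqrt_sq (by positivity)]
      congr 1; field_simp
    rw [mul_assoc, mul_assoc, this, hA, mul_one]

lemma gx_tail (A : ℂ) (v q κ y : ℝ) (hv : 0 < v) (h : y * q ≤ 0) :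
    ‖gx A v q κ y‖ ≤ (Real.exp (-(q ^ 2 / (4 * v))) * ‖A‖) * Real.exp (-(1 / (4 * v)) * (y - 0) ^ 2) := by
  rw [norm_gx]
  calc _ ≤ ‖A‖ * Real.exp (-(q ^ 2 / (4 * v)) + -(1 / (4 * v)) * (y - 0) ^ 2) := by
        gcongr
        have : -(q ^ 2 / (4 * v)) + -(1 / (4 * v)) * (y - 0) ^ 2 = (-(q ^ 2 + y ^ 2)) / (4 * v) := by
          field_simp; ring
        rw [this]
        gcongr
        nlinarith
    _ = _ := by rw [Real.exp_add]; ring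

lemma tail_norm (A : ℂ) (v q : ℝ) (hv : 0 < v)
    (hA : ‖A‖ ^ 2 * Real.sqrt (2 * Real.pi * v) = 1) :
    eLpNorm (fun y : ℝ => (Real.exp (-(q ^ 2 / (4 * v))) * ‖A‖) * Real.exp (-(1 / (4 * v)) * (y - 0) ^ 2))
      2 volume ≤ ENNReal.ofReal (Real.exp (-(q ^ 2 / (4 * v)))) := by
  apply gauss_norm _ _ _ _ (by positivity) (by positivity)
  have : Real.pi / (2 * (1 / (4 * v))) = 2 * Real.pi * v := by field_simp; norm_num
  rw [this, mul_pow, mul_assoc, hA, mul_one]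

lemma HH_split (A : ℂ) (v q κ s ε : ℝ) (hv : 0 < v)
    (hε : ∀ k, 0 < k * κ → |k| = ε * k) (x : ℝ) :
    HH s (gk A v q κ) x = gx A v q κ (-(s * ε) * |x|) + HH s (NN A v q κ) x
      - PP (s * ε) (NN A v q κ) |x| := by
  have hN : Integrable (NN A v q κ) := (int_gk A v q κ hv).indicator (NN_meas κ)
  have hG := int_gk A v q κ hv
  rw [← PP_gk A v q κ hv]
  unfold HH PP
  rw [← mul_add, ← mul_sub, ← integral_add (int_phase _ _ _ hG) (int_phase_abs _ _ _ hN),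
    ← integral_sub (by exact (int_phase _ _ _ hG).add (int_phase_abs _ _ _ hN))
      (int_phase _ _ _ hN)]
  congr 1
  apply integral_congr_ae
  filter_upwards with k
  by_cases hk : k * κ ≤ 0
  · simp only [NN, Set.indicator_of_mem (show k ∈ {k : ℝ | k * κ ≤ 0} from hk)]
    ring
  · simp only [NN, Set.indicator_of_notMem (show k ∉ {k : ℝ | k * κ ≤ 0} from hk)]
    rw [hε k (not_le.1 hk)]
    push_cast
    ring_nf

lemma resid (A : ℂ) (v q κ t x : ℝ) (hv : 0 < v) (ht : t = 1 ∨ t = -1) :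
    ‖gx A v q κ (t * |x|) - ((heav (t * q) : ℝ) : ℂ) * (gx A v q κ x + gx A v q κ (-x))‖ ≤
      (Real.exp (-(q ^ 2 / (4 * v))) * ‖A‖) * Real.exp (-(1 / (4 * v)) * (x - 0) ^ 2) := by
  have hsum : gx A v q κ x + gx A v q κ (-x) = gx A v q κ (t * |x|) + gx A v q κ (-t * |x|) := by
    rcases ht with rfl | rfl <;> rcases abs_choice x with h | h <;> rw [h] <;> simp [add_comm]
  have hsq : ∀ y, (y = t * |x| ∨ y = -t * |x|) → (y - 0) ^ 2 = (x - 0) ^ 2 := by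
    intro y hy
    rcases ht with rfl | rfl <;> rcases hy with rfl | rfl <;> simp
  have hx := abs_nonneg x
  rw [hsum]
  by_cases h : 0 < t * q
  · have e : gx A v q κ (t * |x|) - ((heav (t * q) : ℝ) : ℂ) *
      (gx A v q κ (t * |x|) + gx A v q κ (-t * |x|)) = - gx A v q κ (-t * |x|) := by
      simp [heav, h]
    rw [e, norm_neg, ← hsq _ (Or.inr rfl)]
    exact gx_tail A v q κ _ hv (by nlinarith)
  · have e : gx A v q κ (t * |x|) - ((heav (t * q) : ℝ) : ℂ) *
      (gx A v q κ (t * |x|) + gx A v q κ (-t * |x|)) = gx A v q κ (t * |x|) := by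
      simp [heav, h]
    rw [e, ← hsq _ (Or.inl rfl)]
    exact gx_tail A v q κ _ hv (by nlinarith)

lemma core (A : ℂ) (v q κ b s : ℝ) (hv : 0 < v) (hs : s = 1 ∨ s = -1) (hκ : κ ≠ 0)
    (hA : ‖A‖ ^ 2 * Real.sqrt (2 * Real.pi * v) = 1) :
    eLpNorm (fun x => HH s (fun k => -JJ (b * |k|) * gk A v q κ k) x +
      ((heav (-(s * q * κ)) : ℝ) : ℂ) * JJ (b * |κ|) * (gx A v q κ x + gx A v q κ (-x))) 2 volume ≤
    ENNReal.ofReal (8 * min (|b| / Real.sqrt v) 1 + 6 * Real.exp (-(v * κ ^ 2))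
      + Real.exp (-(q ^ 2 / (4 * v)))) := by
  obtain ⟨ε, hε1, hε, hh⟩ : ∃ ε : ℝ, (ε = 1 ∨ ε = -1) ∧ (∀ k, 0 < k * κ → |k| = ε * k) ∧
      heav (-(s * q * κ)) = heav (-(s * ε) * q) := by
    rcases lt_or_gt_of_ne hκ with h | h
    · refine ⟨-1, Or.inr rfl, fun k hk => ?_, ?_⟩
      · rw [abs_of_neg (by nlinarith)]; ring
      · unfold heav
        congr 1
        apply propext
        constructor <;> intro h' <;> nlinarith
    · refine ⟨1, Or.inl rfl, fun k hk => ?_, ?_⟩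
      · rw [abs_of_pos (by nlinarith)]; ring
      · unfold heav
        congr 1
        apply propext
        constructor <;> intro h' <;> nlinarith
  have hsε : s * ε = 1 ∨ s * ε = -1 := by
    rcases hs with rfl | rfl <;> rcases hε1 with rfl | rfl <;> simp
  have hsε' : -(s * ε) = 1 ∨ -(s * ε) = -1 := by
    rcases hsε with h | h <;> rw [h] <;> simp
  have hG := int_gk A v q κ hv
  have hN : Integrable (NN A v q κ) := hG.indicator (NN_meas κ)
  set g1 : ℝ → ℂ := fun k => (JJ (b * |κ|) - JJ (b * |k|)) * gk A v q κ k with hg1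
  have hg1c : Continuous g1 := by
    have h1 := JJ_cont
    have h2 := cont_gk A v q κ
    fun_prop
  have hg1i : Integrable g1 := by
    apply hG.bdd_mul (c := 2)
    · have h1 := JJ_cont
      exact Continuous.aestronglyMeasurable (by fun_prop)
    · filter_upwards with k
      refine (norm_sub_le _ _).trans ?_
      linarith [JJ_le (b * |κ|), JJ_le (b * |k|)]
  have hg1n := g1_norm_le A v q κ b hv hA
  have hNn := NN_norm_le A v q κ hv hA
  have hg1m : MemLp g1 2 volume :=
    ⟨hg1c.aestronglyMeasurable, lt_of_le_of_lt hg1n ENNReal.ofReal_lt_top⟩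
  have hNm : MemLp (NN A v q κ) 2 volume :=
    ⟨hN.aestronglyMeasurable, lt_of_le_of_lt hNn ENNReal.ofReal_lt_top⟩
  have hsplit : ∀ x, HH s (fun k => -JJ (b * |k|) * gk A v q κ k) x =
      HH s g1 x - JJ (b * |κ|) * HH s (gk A v q κ) x := by
    intro x
    unfold HH
    rw [mul_left_comm, ← mul_sub, ← integral_const_mul (JJ (b * |κ|)),
      ← integral_sub (int_phase_abs _ _ _ hg1i) ((int_phase_abs _ _ _ hG).const_mul _)]
    congr 1
    apply integral_congr_ae
    filter_upwards with k
    simp only [hg1]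
    ring
  set T : ℝ → ℝ := fun y => (Real.exp (-(q ^ 2 / (4 * v))) * ‖A‖) *
    Real.exp (-(1 / (4 * v)) * (y - 0) ^ 2) with hT
  have hbound : ∀ x, ‖HH s (fun k => -JJ (b * |k|) * gk A v q κ k) x +
      ((heav (-(s * q * κ)) : ℝ) : ℂ) * JJ (b * |κ|) * (gx A v q κ x + gx A v q κ (-x))‖ ≤
      (((fun x => ‖HH s g1 x‖) + fun x => ‖HH s (NN A v q κ) x‖) +
        (fun x => ‖PP (s * ε) (NN A v q κ) |x|‖) + T) x := by
    intro x
    rw [hsplit, HH_split A v q κ s ε hv hε, hh]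
    have hr := resid A v q κ (-(s * ε)) x hv hsε'
    simp only [Pi.add_apply]
    have e : HH s g1 x - JJ (b * |κ|) * (gx A v q κ (-(s * ε) * |x|) + HH s (NN A v q κ) x -
        PP (s * ε) (NN A v q κ) |x|) + ((heav (-(s * ε) * q) : ℝ) : ℂ) * JJ (b * |κ|) *
          (gx A v q κ x + gx A v q κ (-x)) =
        HH s g1 x - JJ (b * |κ|) * (HH s (NN A v q κ) x - PP (s * ε) (NN A v q κ) |x| +
          (gx A v q κ (-(s * ε) * |x|) - ((heav (-(s * ε) * q) : ℝ) : ℂ) *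
            (gx A v q κ x + gx A v q κ (-x)))) := by ring
    rw [e]
    refine (norm_sub_le _ _).trans ?_
    rw [norm_mul]
    have h1 := JJ_le (b * |κ|)
    generalize gx A v q κ (-(s * ε) * |x|) - ((heav (-(s * ε) * q) : ℝ) : ℂ) *
            (gx A v q κ x + gx A v q κ (-x)) = Z at hr ⊢
    have h2 := norm_add_le (HH s (NN A v q κ) x - PP (s * ε) (NN A v q κ) |x|) Z
    have h3 := norm_sub_le (HH s (NN A v q κ) x) (PP (s * ε) (NN A v q κ) |x|)
    have h4 := mul_le_of_le_one_left
      (norm_nonneg (HH s (NN A v q κ) x - PP (s * ε) (NN A v q κ) |x| + Z)) h1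
    have h5 : ‖Z‖ ≤ T x := hr
    linarith
  have c1 : Continuous (fun x => ‖HH s g1 x‖) := (HH_cont s g1 hg1i).norm
  have c2 : Continuous (fun x => ‖HH s (NN A v q κ) x‖) := (HH_cont s _ hN).norm
  have c3 : Continuous (fun x => ‖PP (s * ε) (NN A v q κ) |x|‖) :=
    ((PP_cont (s * ε) _ hN).comp continuous_abs).norm
  have c4 : Continuous T := by fun_prop
  refine (eLpNorm_mono_real hbound).trans ?_
  refine (eLpNorm_add_le ((c1.add c2).add c3).aestronglyMeasurable c4.aestronglyMeasurable
    (by norm_num)).trans ?_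
  have hmin : 0 ≤ min (|b| / Real.sqrt v) 1 := le_min (by positivity) (by norm_num)
  rw [ENNReal.ofReal_add (by positivity) (by positivity)]
  refine add_le_add ?_ (tail_norm A v q hv hA)
  refine (eLpNorm_add_le (c1.add c2).aestronglyMeasurable c3.aestronglyMeasurable
    (by norm_num)).trans ?_
  have n1 : eLpNorm (fun x => ‖HH s g1 x‖) 2 volume ≤
      ENNReal.ofReal (8 * min (|b| / Real.sqrt v) 1) := by
    rw [eLpNorm_norm]
    refine (HH_norm s hs g1 hg1i hg1m).trans ?_
    calc _ ≤ 4 * ENNReal.ofReal (2 * min (|b| / Real.sqrt v) 1) := by gcongr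
      _ = _ := by
        rw [← ENNReal.ofReal_ofNat 4, ← ENNReal.ofReal_mul (by norm_num)]
        congr 1; ring
  have n2 : eLpNorm (fun x => ‖HH s (NN A v q κ) x‖) 2 volume ≤
      ENNReal.ofReal (4 * Real.exp (-(v * κ ^ 2))) := by
    rw [eLpNorm_norm]
    refine (HH_norm s hs _ hN hNm).trans ?_
    rw [ENNReal.ofReal_mul (by norm_num), ENNReal.ofReal_ofNat]
    gcongr
  have n3 : eLpNorm (fun x => ‖PP (s * ε) (NN A v q κ) |x|‖) 2 volume ≤
      ENNReal.ofReal (2 * Real.exp (-(v * κ ^ 2))) := by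
    rw [eLpNorm_norm (fun x => PP (s * ε) (NN A v q κ) |x|)]
    refine (PP_abs_norm (s * ε) hsε _ hN hNm).trans ?_
    rw [ENNReal.ofReal_mul (by norm_num), ENNReal.ofReal_ofNat]
    gcongr
  calc _ ≤ (ENNReal.ofReal (8 * min (|b| / Real.sqrt v) 1) +
          ENNReal.ofReal (4 * Real.exp (-(v * κ ^ 2)))) +
          ENNReal.ofReal (2 * Real.exp (-(v * κ ^ 2))) := by
        refine add_le_add ((eLpNorm_add_le c1.aestronglyMeasurable c2.aestronglyMeasurable
          (by norm_num)).trans (add_le_add n1 n2)) n3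
    _ = _ := by
        rw [← ENNReal.ofReal_add (by positivity) (by positivity),
          ← ENNReal.ofReal_add (by positivity) (by positivity)]
        congr 1; ring

lemma coh_eq (ℏ σ₀ q p : ℝ) (hℏ : 0 < ℏ) (hσ : 0 < σ₀) (x : ℝ) :
    coh ℏ (σ₀ : ℂ) ((σ₀ : ℂ))⁻¹ q p x =
      gx (((2 * Real.pi * ℏ : ℝ) : ℂ) ^ (-(1/4 : ℂ)) * (σ₀ : ℂ) ^ (-(1/2 : ℂ)))
        (ℏ * σ₀ ^ 2) q (p / ℏ) x := by
  unfold coh gx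
  have h1 : (ℏ : ℂ) ≠ 0 := by exact_mod_cast hℏ.ne'
  have h2 : (σ₀ : ℂ) ≠ 0 := by exact_mod_cast hσ.ne'
  congr 2
  push_cast
  field_simp

lemma gx_neg (A : ℂ) (v q κ x : ℝ) : gx A v (-q) (-κ) x = gx A v q κ (-x) := by
  unfold gx
  congr 2
  push_cast
  ring

lemma A_norm (ℏ σ₀ : ℝ) (hℏ : 0 < ℏ) (hσ : 0 < σ₀) :
    ‖((2 * Real.pi * ℏ : ℝ) : ℂ) ^ (-(1/4 : ℂ)) * (σ₀ : ℂ) ^ (-(1/2 : ℂ))‖ ^ 2 *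
      Real.sqrt (2 * Real.pi * (ℏ * σ₀ ^ 2)) = 1 := by
  have hpi := Real.pi_pos
  have hP : 0 < 2 * Real.pi * ℏ := by positivity
  rw [norm_mul, Complex.norm_cpow_eq_rpow_re_of_pos hP, Complex.norm_cpow_eq_rpow_re_of_pos hσ]
  have r1 : (-(1/4 : ℂ)).re = -(1/4) := by norm_num
  have r2 : (-(1/2 : ℂ)).re = -(1/2) := by norm_num
  rw [r1, r2]
  have e : 2 * Real.pi * (ℏ * σ₀ ^ 2) = (2 * Real.pi * ℏ) * σ₀ ^ 2 := by ring
  rw [e, Real.sqrt_mul hP.le, Real.sqrt_sq hσ.le]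
  generalize 2 * Real.pi * ℏ = P at *
  rw [mul_pow, ← Real.rpow_natCast, ← Real.rpow_mul hP.le, ← Real.rpow_natCast (σ₀ ^ _),
    ← Real.rpow_mul hσ.le, Real.sqrt_eq_rpow]
  have e1 : P ^ (-(1/4 : ℝ) * ((2 : ℕ) : ℝ)) = (P ^ (1/2 : ℝ))⁻¹ := by
    rw [← Real.rpow_neg hP.le]; norm_num
  have e2 : σ₀ ^ (-(1/2 : ℝ) * ((2 : ℕ) : ℝ)) = σ₀⁻¹ := by
    rw [← Real.rpow_neg_one]; norm_num
  rw [e1, e2]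
  have : 0 < P ^ (1/2 : ℝ) := by positivity
  field_simp

/-- Theorem 2, Eq. (t2_1): semiclassical approximation of the quantum wave
operators `Ω_α^±` applied to a coherent state by the classical wave operators `W_β^±`. -/
theorem statement2 :
    ∃ C : ℝ, 0 < C ∧
      ∀ (ℏ m σ₀ α : ℝ), 0 < ℏ → 0 < m → 0 < σ₀ → α ≠ 0 →
      ∀ lam : ℝ, 0 < lam →
      ∀ q p : ℝ, q * p ≠ 0 →
      ∀ s : ℝ, (s = 1 ∨ s = -1) →
      eLpNorm (fun x : ℝ =>
          waveOpQ ℏ m α s (fun y => coh ℏ (σ₀ : ℂ) ((σ₀ : ℂ))⁻¹ q p y) x -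
          (coh ℏ (σ₀ : ℂ) ((σ₀ : ℂ))⁻¹ q p x -
            ((heav (-(s * q * p)) : ℝ) : ℂ) *
              (1 + (s : ℂ) * 2 * Complex.I * ((|p| : ℝ) : ℂ) /
                ((m : ℂ) * ((2 * α / ℏ : ℝ) : ℂ)))⁻¹ *
              (coh ℏ (σ₀ : ℂ) ((σ₀ : ℂ))⁻¹ q p x + coh ℏ (σ₀ : ℂ) ((σ₀ : ℂ))⁻¹ (-q) (-p) x)))
        2 volume
      ≤ ENNReal.ofReal (C * (
          (ℏ / (m * |α| * σ₀) ^ ((2 : ℝ) / 3)) ^ ((3 : ℝ) / 2 - lam)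
        + Real.exp (-(1 / 2) * ((m * |α| * σ₀) ^ ((2 : ℝ) / 3) / ℏ) ^ (2 * lam))
        + Real.exp (-(σ₀ ^ 2 * p ^ 2 / ℏ))
        + Real.exp (-(q ^ 2 / (4 * ℏ * σ₀ ^ 2))))) := by
  refine ⟨16, by norm_num, ?_⟩
  intro ℏ m σ₀ α hℏ hm hσ hα lam hlam q p hqp s hs
  have hp : p ≠ 0 := right_ne_zero_of_mul hqp
  have hv : 0 < ℏ * σ₀ ^ 2 := by positivity
  have hκ : p / ℏ ≠ 0 := div_ne_zero hp hℏ.ne'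
  have hA := A_norm ℏ σ₀ hℏ hσ
  set A : ℂ := ((2 * Real.pi * ℏ : ℝ) : ℂ) ^ (-(1/4 : ℂ)) * (σ₀ : ℂ) ^ (-(1/2 : ℂ)) with hAdef
  have hc1 : (ℏ : ℂ) ≠ 0 := by exact_mod_cast hℏ.ne'
  have hc2 : (m : ℂ) ≠ 0 := by exact_mod_cast hm.ne'
  have hc3 : (α : ℂ) ≠ 0 := by exact_mod_cast hα
  have hcore := core A (ℏ * σ₀ ^ 2) q (p / ℏ) (s * ℏ ^ 2 / (m * α)) s hv hs hκ hA
  have hfun : (fun x : ℝ =>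
          waveOpQ ℏ m α s (fun y => coh ℏ (σ₀ : ℂ) ((σ₀ : ℂ))⁻¹ q p y) x -
          (coh ℏ (σ₀ : ℂ) ((σ₀ : ℂ))⁻¹ q p x -
            ((heav (-(s * q * p)) : ℝ) : ℂ) *
              (1 + (s : ℂ) * 2 * Complex.I * ((|p| : ℝ) : ℂ) /
                ((m : ℂ) * ((2 * α / ℏ : ℝ) : ℂ)))⁻¹ *
              (coh ℏ (σ₀ : ℂ) ((σ₀ : ℂ))⁻¹ q p x + coh ℏ (σ₀ : ℂ) ((σ₀ : ℂ))⁻¹ (-q) (-p) x))) =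
      (fun x => HH s (fun k => -JJ (s * ℏ ^ 2 / (m * α) * |k|) * gk A (ℏ * σ₀ ^ 2) q (p / ℏ) k) x +
      ((heav (-(s * q * (p / ℏ))) : ℝ) : ℂ) * JJ (s * ℏ ^ 2 / (m * α) * |p / ℏ|) *
        (gx A (ℏ * σ₀ ^ 2) q (p / ℏ) x + gx A (ℏ * σ₀ ^ 2) q (p / ℏ) (-x))) := by
    funext x
    have hcoh : (fun y => coh ℏ (σ₀ : ℂ) ((σ₀ : ℂ))⁻¹ q p y) = gx A (ℏ * σ₀ ^ 2) q (p / ℏ) :=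
      funext (coh_eq ℏ σ₀ q p hℏ hσ)
    have hcoh2 : coh ℏ (σ₀ : ℂ) ((σ₀ : ℂ))⁻¹ (-q) (-p) x = gx A (ℏ * σ₀ ^ 2) q (p / ℏ) (-x) := by
      rw [coh_eq ℏ σ₀ (-q) (-p) hℏ hσ, neg_div, gx_neg]
    have hheav : heav (-(s * q * p)) = heav (-(s * q * (p / ℏ))) := by
      unfold heav
      have : -(s * q * (p / ℏ)) = (-(s * q * p)) / ℏ := by ring
      simp only [this, div_pos_iff_of_pos_right hℏ]
    have hJ : (1 + (s : ℂ) * 2 * Complex.I * ((|p| : ℝ) : ℂ) /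
                ((m : ℂ) * ((2 * α / ℏ : ℝ) : ℂ)))⁻¹ = JJ (s * ℏ ^ 2 / (m * α) * |p / ℏ|) := by
      unfold JJ
      rw [abs_div, abs_of_pos hℏ]
      congr 2
      push_cast
      field_simp
    have hR : ∀ k, Rpm ℏ m α s k = -JJ (s * ℏ ^ 2 / (m * α) * |k|) := by
      intro k
      unfold Rpm JJ
      congr 3
      push_cast
      ring
    have hW : waveOpQ ℏ m α s (gx A (ℏ * σ₀ ^ 2) q (p / ℏ)) x = gx A (ℏ * σ₀ ^ 2) q (p / ℏ) x +
        HH s (fun k => -JJ (s * ℏ ^ 2 / (m * α) * |k|) * gk A (ℏ * σ₀ ^ 2) q (p / ℏ) k) x := by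
      unfold waveOpQ HH
      simp_rw [hR, ft_gx A (ℏ * σ₀ ^ 2) q (p / ℏ) hv, mul_assoc]
    rw [hcoh, hcoh2, hheav, hJ, hW, coh_eq ℏ σ₀ q p hℏ hσ]
    ring
  rw [hfun]
  refine hcore.trans (ENNReal.ofReal_le_ofReal ?_)
  have hY : 0 < m * |α| := by positivity
  have hb : |s * ℏ ^ 2 / (m * α)| = ℏ ^ 2 / (m * |α|) := by
    have : |s| = 1 := by rcases hs with rfl | rfl <;> simp
    rw [abs_div, abs_mul, abs_mul, this, abs_of_pos hm, abs_of_pos (by positivity : 0 < ℏ ^ 2), one_mul]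
  rw [hb, eta_eq ℏ (m * |α|) σ₀ hℏ hY hσ]
  have hf := final_scalar ℏ ((m * |α| * σ₀) ^ ((2 : ℝ) / 3)) lam hℏ (by positivity) hlam
  have e1 : ℏ * σ₀ ^ 2 * (p / ℏ) ^ 2 = σ₀ ^ 2 * p ^ 2 / ℏ := by field_simp
  have e2 : 4 * (ℏ * σ₀ ^ 2) = 4 * ℏ * σ₀ ^ 2 := by ring
  rw [e1, e2]
  have p1 := Real.exp_pos (-(σ₀ ^ 2 * p ^ 2 / ℏ))
  have p2 := Real.exp_pos (-(q ^ 2 / (4 * ℏ * σ₀ ^ 2)))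
  linarith
end

section
/- Let ℏ>0, m>0, σ₀>0, α∈ℝ\{0}, β := 2α/ℏ. There exists a constant C>0, independent of all parameters, such that for every λ>0 and every ξ=(q,p)∈ℝ² with q·p≠0: ‖ S_αψ^ℏ_{σ₀,ξ} − (S^cl_βφ^ℏ_{σ₀,(·)})(ξ) ‖_{L²(ℝ,dx)} ≤ C·[ (ℏ/(m|α|σ₀)^{2/3})^{3/2−λ} + exp(−(1/2)·((m|α|σ₀)^{2/3}/ℏ)^{2λ}) + exp(−σ₀²p²/ℏ) + exp(−q²/(8ℏσ₀²)) + exp(−m|α||q|/(8ℏ²)) ], where S_α := (Ω_α^+)^*∘Ω_α^− (Hilbert-space adjoint in L²(ℝ)) and (S^cl_βφ^ℏ_{σ₀,(·)})(ξ)(x) = ψ^ℏ_{σ₀,ξ}(x) − (1 − 2i|p|/(mβ))⁻¹·(ψ^ℏ_{σ₀,ξ}(x)+ψ^ℏ_{σ₀,−ξ}(x)). -/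
open MeasureTheory Complex Filter

namespace DeltaScat

open FourierTransform
open scoped SchwartzMap

lemma fourier_toLp_ae {f : ℝ → ℂ} (hf : Integrable f) (hf2 : MemLp f 2) :
    (𝓕 (hf2.toLp f) : Lp ℂ 2 (volume : Measure ℝ)) =ᵐ[volume] 𝓕 f := by
  have hc : Continuous (𝓕 f) :=
    VectorFourier.fourierIntegral_continuous Real.continuous_fourierChar (by fun_prop) hf
  apply ae_eq_of_integral_contDiff_smul_eq
  · exact ((Lp.memLp _).locallyIntegrable (by norm_num))
  · exact hc.locallyIntegrable
  intro g hg hgs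
  have hg1 : HasCompactSupport (fun x => (g x : ℂ)) := hgs.comp_left (g := fun r : ℝ => (r : ℂ)) rfl
  have hg2 : ContDiff ℝ (⊤ : ℕ∞) (fun x => (g x : ℂ)) := Complex.ofRealCLM.contDiff.comp hg
  set s : 𝓢(ℝ, ℂ) := hg1.toSchwartzMap hg2
  have hs : ∀ x, s x = (g x : ℂ) := fun x => rfl
  have h1 := congrArg (fun T => T s) (Lp.fourier_toTemperedDistribution_eq (hf2.toLp f))
  simp only [TemperedDistribution.fourier_apply, Lp.toTemperedDistribution_apply] at h1
  have h2 : ∫ x, (𝓕 s) x • (hf2.toLp f : ℝ → ℂ) x = ∫ x, (𝓕 s) x • f x := by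
    apply integral_congr_ae
    filter_upwards [hf2.coeFn_toLp] with x hx
    rw [hx]
  have h3 : ∫ x, (𝓕 (s : ℝ → ℂ)) x • f x = ∫ x, s x • (𝓕 f) x := by
    have := VectorFourier.integral_fourierIntegral_smul_eq_flip (L := innerₗ ℝ) (μ := volume)
      (ν := volume) Real.continuous_fourierChar (by fun_prop) s.integrable hf
    rwa [flip_innerₗ] at this
  rw [SchwartzMap.fourier_coe] at h2
  simp only [SchwartzMap.fourier_coe] at h1
  rw [h2, h3] at h1
  simp only [hs] at h1
  simpa [Complex.real_smul] using h1.symm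

lemma memLp_fourier {f : ℝ → ℂ} (hf : Integrable f) (hf2 : MemLp f 2) : MemLp (𝓕 f) 2 :=
  (memLp_congr_ae (fourier_toLp_ae hf hf2)).1 (Lp.memLp _)

lemma plancherel_fourier {f g : ℝ → ℂ} (hf : Integrable f) (hf2 : MemLp f 2)
    (hg : Integrable g) (hg2 : MemLp g 2) :
    ∫ x, starRingEnd ℂ (𝓕 f x) * 𝓕 g x = ∫ x, starRingEnd ℂ (f x) * g x := by
  have h := Lp.inner_fourier_eq (hf2.toLp f) (hg2.toLp g)
  rw [L2.inner_def, L2.inner_def] at h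
  have e1 : ∫ x, inner ℂ ((𝓕 (hf2.toLp f) : Lp ℂ 2 (volume : Measure ℝ)) x)
      ((𝓕 (hg2.toLp g) : Lp ℂ 2 (volume : Measure ℝ)) x) =
      ∫ x, starRingEnd ℂ (𝓕 f x) * 𝓕 g x := by
    apply integral_congr_ae
    filter_upwards [fourier_toLp_ae hf hf2, fourier_toLp_ae hg hg2] with x h1 h2
    rw [h1, h2, RCLike.inner_apply, mul_comm]
  have e2 : ∫ x, inner ℂ ((hf2.toLp f) x) ((hg2.toLp g) x) =
      ∫ x, starRingEnd ℂ (f x) * g x := by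
    apply integral_congr_ae
    filter_upwards [hf2.coeFn_toLp, hg2.coeFn_toLp] with x h1 h2
    rw [h1, h2, RCLike.inner_apply, mul_comm]
  rw [← e1, ← e2, h]

lemma memLp_neg {f : ℝ → ℂ} (hf2 : MemLp f 2) : MemLp (fun x => f (-x)) 2 :=
  hf2.comp_measurePreserving (Measure.measurePreserving_neg volume)

lemma memLp_finv {f : ℝ → ℂ} (hf : Integrable f) (hf2 : MemLp f 2) : MemLp (𝓕⁻ f) 2 := by
  rw [Real.fourierInv_eq_fourier_comp_neg]
  exact memLp_fourier hf.comp_neg (memLp_neg hf2)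

lemma plancherel {f g : ℝ → ℂ} (hf : Integrable f) (hf2 : MemLp f 2)
    (hg : Integrable g) (hg2 : MemLp g 2) :
    ∫ x, starRingEnd ℂ (𝓕⁻ f x) * 𝓕⁻ g x = ∫ x, starRingEnd ℂ (f x) * g x := by
  rw [Real.fourierInv_eq_fourier_comp_neg, Real.fourierInv_eq_fourier_comp_neg,
    plancherel_fourier hf.comp_neg (memLp_neg hf2) hg.comp_neg (memLp_neg hg2)]
  exact integral_neg_eq_self (fun x => starRingEnd ℂ (f x) * g x) volume

lemma continuous_finv {f : ℝ → ℂ} (hf : Integrable f) : Continuous (𝓕⁻ f) := by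
  rw [Real.fourierInv_eq_fourier_comp_neg]
  exact VectorFourier.fourierIntegral_continuous Real.continuous_fourierChar
    (L := innerₗ ℝ) (by fun_prop) hf.comp_neg

lemma hasDerivAt_finv {f : ℝ → ℂ} (hf : Integrable f) (hf' : Integrable (fun x : ℝ => (x : ℂ) * f x))
    (x : ℝ) :
    HasDerivAt (𝓕⁻ f) (𝓕⁻ (fun ξ : ℝ => (2 * Real.pi * I * ξ) * f ξ) x) x := by
  have h := Real.hasDerivAt_fourier hf.comp_neg
    (by simpa [Complex.real_smul] using hf'.comp_neg.neg) x
  rw [Real.fourierInv_eq_fourier_comp_neg, Real.fourierInv_eq_fourier_comp_neg]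
  have e : (fun x : ℝ => 2 * ↑Real.pi * I * ↑(-x) * f (-x)) =
      fun x : ℝ => (-2 * ↑Real.pi * I * ↑x) • f (-x) := by
    funext y
    simp
  rw [e]
  exact h

lemma tendsto_finv (f : ℝ → ℂ) : Tendsto (𝓕⁻ f) (cocompact ℝ) (nhds 0) := by
  rw [Real.fourierInv_eq_fourier_comp_neg]
  exact Real.zero_at_infty_fourier _

lemma integrable_conj_mul {f g : ℝ → ℂ} (hf : MemLp f 2) (hg : MemLp g 2) :
    Integrable (fun x => starRingEnd ℂ (f x) * g x) := by
  have hf' : MemLp (fun x => starRingEnd ℂ (f x)) 2 := hf.star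
  exact hf'.integrable_mul hg

lemma finv_odd {f : ℝ → ℂ} (h : ∀ x, f (-x) = - f x) (x : ℝ) : 𝓕⁻ f (-x) = - 𝓕⁻ f x := by
  rw [Real.fourierInv_eq_fourier_neg, neg_neg, Real.fourierInv_eq_fourier_comp_neg]
  simp only [h]
  simp [Real.fourier_eq, integral_neg]

lemma finv_even {f : ℝ → ℂ} (h : ∀ x, f (-x) = f x) (x : ℝ) : 𝓕⁻ f (-x) = 𝓕⁻ f x := by
  rw [Real.fourierInv_eq_fourier_neg, neg_neg, Real.fourierInv_eq_fourier_comp_neg]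
  simp only [h]

lemma integral_odd_zero {f : ℝ → ℂ} (h : ∀ x, f (-x) = - f x) : ∫ x, f x = 0 := by
  have := integral_neg_eq_self f volume
  simp only [h, integral_neg] at this
  have h2 : (2 : ℂ) * ∫ x, f x = 0 := by linear_combination -this
  simpa using h2

/-- The cross term vanishes. -/
lemma integral_sign_deriv {F F' : ℝ → ℂ} (h : ∀ x, HasDerivAt F (F' x) x) (hF' : Integrable F')
    (h0 : F 0 = 0) (hl : Tendsto F (cocompact ℝ) (nhds 0)) :
    ∫ x : ℝ, ((Real.sign x : ℝ) : ℂ) * F' x = 0 := by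
  have hm : AEStronglyMeasurable (fun x : ℝ => ((Real.sign x : ℝ) : ℂ)) volume := by
    apply Measurable.aestronglyMeasurable
    apply Complex.measurable_ofReal.comp
    unfold Real.sign
    exact Measurable.ite measurableSet_Iio measurable_const
      (Measurable.ite measurableSet_Ioi measurable_const measurable_const)
  have hi : Integrable (fun x : ℝ => ((Real.sign x : ℝ) : ℂ) * F' x) := by
    refine hF'.bdd_mul (c := 1) hm (Eventually.of_forall fun x => ?_)
    rcases Real.sign_apply_eq x with h | h | h <;> simp [h]
  rw [← intervalIntegral.integral_Iic_add_Ioi (b := 0) hi.integrableOn hi.integrableOn]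
  have e1 : ∫ x in Set.Iic (0:ℝ), ((Real.sign x : ℝ) : ℂ) * F' x = - ∫ x in Set.Iic (0:ℝ), F' x := by
    rw [← integral_neg, integral_Iic_eq_integral_Iio, integral_Iic_eq_integral_Iio]
    refine setIntegral_congr_fun measurableSet_Iio fun x hx => ?_
    simp [Real.sign_of_neg hx]
  have e2 : ∫ x in Set.Ioi (0:ℝ), ((Real.sign x : ℝ) : ℂ) * F' x = ∫ x in Set.Ioi (0:ℝ), F' x := by
    refine setIntegral_congr_fun measurableSet_Ioi fun x hx => ?_
    simp [Real.sign_of_pos hx]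
  rw [e1, e2, integral_Ioi_of_hasDerivAt_of_tendsto' (fun x _ => h x) hF'.integrableOn
      (hl.mono_left atTop_le_cocompact),
    integral_Iic_of_hasDerivAt_of_tendsto' (fun x _ => h x) hF'.integrableOn
      (hl.mono_left atBot_le_cocompact), h0]
  simp


lemma measurable_sign : Measurable (fun x : ℝ => ((Real.sign x : ℝ) : ℂ)) := by
  apply Complex.measurable_ofReal.comp
  unfold Real.sign
  exact Measurable.ite measurableSet_Iio measurable_const
    (Measurable.ite measurableSet_Ioi measurable_const measurable_const)

lemma norm_sign_le (x : ℝ) : ‖((Real.sign x : ℝ) : ℂ)‖ ≤ 1 := by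
  rcases Real.sign_apply_eq x with h | h | h <;> simp [h]

lemma memLp_sign_mul {f : ℝ → ℂ} (hf : MemLp f 2) :
    MemLp (fun x => ((Real.sign x : ℝ) : ℂ) * f x) 2 := by
  refine hf.of_le (measurable_sign.aestronglyMeasurable.mul hf.1) (Eventually.of_forall fun x => ?_)
  rw [norm_mul]
  exact mul_le_of_le_one_left (norm_nonneg _) (norm_sign_le x)

lemma finv_const_mul {c : ℂ} {f g : ℝ → ℂ} (h : ∀ ξ, f ξ = c * g ξ) (x : ℝ) :
    𝓕⁻ f x = c * 𝓕⁻ g x := by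
  rw [Real.fourierInv_eq, Real.fourierInv_eq, ← integral_const_mul]
  congr 1
  funext v
  simp only [Circle.smul_def, smul_eq_mul, h]
  ring

lemma integral_add3 {f g h : ℝ → ℂ} (hf : Integrable f) (hg : Integrable g) (hh : Integrable h) :
    ∫ x, (f x + g x + h x) = (∫ x, f x) + (∫ x, g x) + ∫ x, h x := by
  rw [← integral_add hf hg]
  exact integral_add (hf.add hg) hh

lemma inner_formula {a : ℝ} {O1 O2 g1 g2 h1 h2 : ℝ → ℂ}
    (hO1 : Integrable O1) (hO1' : MemLp O1 2) (hO2 : Integrable O2) (hO2' : MemLp O2 2)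
    (hg1 : Integrable g1) (hg1' : MemLp g1 2) (hg2 : Integrable g2) (hg2' : MemLp g2 2)
    (hh1 : Integrable h1) (hh1' : MemLp h1 2) (hh2 : Integrable h2) (hh2' : MemLp h2 2)
    (hx1 : Integrable (fun x : ℝ => (x : ℂ) * g1 x))
    (hx2 : Integrable (fun x : ℝ => (x : ℂ) * g2 x))
    (e1 : ∀ ξ : ℝ, h1 ξ = a * ((2 * Real.pi * I * ξ) * g1 ξ))
    (e2 : ∀ ξ : ℝ, h2 ξ = a * ((2 * Real.pi * I * ξ) * g2 ξ))
    (oO1 : ∀ x, O1 (-x) = - O1 x) (oO2 : ∀ x, O2 (-x) = - O2 x)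
    (og1 : ∀ x, g1 (-x) = - g1 x) (og2 : ∀ x, g2 (-x) = - g2 x) :
    ∫ x, starRingEnd ℂ (𝓕⁻ O1 x + ((Real.sign x : ℝ) : ℂ) * 𝓕⁻ g1 x + 𝓕⁻ h1 x) *
      (𝓕⁻ O2 x + ((Real.sign x : ℝ) : ℂ) * 𝓕⁻ g2 x + 𝓕⁻ h2 x) =
    ∫ x, (starRingEnd ℂ (O1 x) * O2 x + starRingEnd ℂ (g1 x) * g2 x
      + starRingEnd ℂ (h1 x) * h2 x) := by
  have eh1 : ∀ x, h1 (-x) = h1 x := fun x => by rw [e1, e1, og1]; push_cast; ring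
  have eh2 : ∀ x, h2 (-x) = h2 x := fun x => by rw [e2, e2, og2]; push_cast; ring
  have lo1 := memLp_finv hO1 hO1'
  have lo2 := memLp_finv hO2 hO2'
  have lw1 := memLp_finv hg1 hg1'
  have lw2 := memLp_finv hg2 hg2'
  have lk1 := memLp_finv hh1 hh1'
  have lk2 := memLp_finv hh2 hh2'
  have po1 := finv_odd oO1
  have po2 := finv_odd oO2
  have pw1 := finv_odd og1
  have pw2 := finv_odd og2
  have pk1 := finv_even eh1
  have pk2 := finv_even eh2
  have P1 := plancherel hO1 hO1' hO2 hO2'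
  have P2 := plancherel hg1 hg1' hg2 hg2'
  have P3 := plancherel hh1 hh1' hh2 hh2'
  have dd1 := hasDerivAt_finv hg1 hx1
  have dd2 := hasDerivAt_finv hg2 hx2
  have u1 : ∀ x, 𝓕⁻ h1 x = a * 𝓕⁻ (fun ξ : ℝ => (2 * Real.pi * I * ξ) * g1 ξ) x :=
    finv_const_mul e1
  have u2 : ∀ x, 𝓕⁻ h2 x = a * 𝓕⁻ (fun ξ : ℝ => (2 * Real.pi * I * ξ) * g2 ξ) x :=
    finv_const_mul e2
  have tw1 := tendsto_finv g1
  have tw2 := tendsto_finv g2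
  generalize 𝓕⁻ (fun ξ : ℝ => (2 * Real.pi * I * ξ) * g1 ξ) = w1' at *
  generalize 𝓕⁻ (fun ξ : ℝ => (2 * Real.pi * I * ξ) * g2 ξ) = w2' at *
  rw [integral_add3 (integrable_conj_mul hO1' hO2') (integrable_conj_mul hg1' hg2')
    (integrable_conj_mul hh1' hh2'), ← P1, ← P2, ← P3]
  clear P1 P2 P3 hO1 hO1' hO2 hO2' hg1 hg1' hg2 hg2' hh1 hh1' hh2 hh2' hx1 hx2 e1 e2 oO1 oO2 og1 og2
    eh1 eh2
  generalize 𝓕⁻ O1 = o1 at *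
  generalize 𝓕⁻ O2 = o2 at *
  generalize 𝓕⁻ g1 = w1 at *
  generalize 𝓕⁻ g2 = w2 at *
  generalize 𝓕⁻ h1 = k1 at *
  generalize 𝓕⁻ h2 = k2 at *
  have w10 : w1 0 = 0 := by
    have := pw1 0
    rw [neg_zero] at this
    have h2 : (2 : ℂ) * w1 0 = 0 := by linear_combination this
    simpa using h2
  have cross : ∫ x : ℝ, ((Real.sign x : ℝ) : ℂ) *
      (starRingEnd ℂ (w1 x) * k2 x + starRingEnd ℂ (k1 x) * w2 x) = 0 := by
    apply integral_sign_deriv (F := fun x => (a : ℂ) * (starRingEnd ℂ (w1 x) * w2 x))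
    · intro x
      have hc : HasDerivAt (fun x => starRingEnd ℂ (w1 x)) (starRingEnd ℂ (w1' x)) x :=
        (dd1 x).star
      have hd := (hc.mul (dd2 x)).const_mul (a : ℂ)
      have ee : starRingEnd ℂ (w1 x) * k2 x + starRingEnd ℂ (k1 x) * w2 x =
          (a : ℂ) * (starRingEnd ℂ (w1' x) * w2 x + starRingEnd ℂ (w1 x) * w2' x) := by
        rw [u1, u2, map_mul, conj_ofReal]
        ring
      rw [ee]
      exact hd
    · exact (integrable_conj_mul lw1 lk2).add (integrable_conj_mul lk1 lw2)
    · simp [w10]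
    · have hc : Tendsto (fun x => starRingEnd ℂ (w1 x)) (cocompact ℝ) (nhds 0) := by
        have := (Complex.continuous_conj.tendsto 0).comp tw1
        rw [map_zero] at this
        exact this
      have := (hc.mul tw2).const_mul (a : ℂ)
      rw [mul_zero, mul_zero] at this
      exact this
  have crossI : Integrable (fun x : ℝ => ((Real.sign x : ℝ) : ℂ) *
      (starRingEnd ℂ (w1 x) * k2 x + starRingEnd ℂ (k1 x) * w2 x)) := by
    refine ((integrable_conj_mul lw1 lk2).add (integrable_conj_mul lk1 lw2)).bdd_mul (c := 1)
      measurable_sign.aestronglyMeasurable (Eventually.of_forall norm_sign_le)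
  set Z : ℝ → ℂ := fun x => (starRingEnd ℂ (o1 x) * (((Real.sign x : ℝ) : ℂ) * w2 x)
      + starRingEnd ℂ (o1 x) * k2 x) + (starRingEnd ℂ (((Real.sign x : ℝ) : ℂ) * w1 x) * o2 x
      + starRingEnd ℂ (k1 x) * o2 x) with hZ
  have ZI : Integrable Z :=
    ((integrable_conj_mul lo1 (memLp_sign_mul lw2)).add (integrable_conj_mul lo1 lk2)).add
    ((integrable_conj_mul (memLp_sign_mul lw1) lo2).add (integrable_conj_mul lk1 lo2))
  have Z0 : ∫ x, Z x = 0 := by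
    apply integral_odd_zero
    intro x
    simp only [hZ, po1, po2, pw1, pw2, pk1, pk2, Real.sign_neg, map_neg, map_mul]
    push_cast
    simp only [map_neg]
    ring
  have tot : ∀ x, starRingEnd ℂ (o1 x + ((Real.sign x : ℝ) : ℂ) * w1 x + k1 x) *
      (o2 x + ((Real.sign x : ℝ) : ℂ) * w2 x + k2 x) =
      (starRingEnd ℂ (o1 x) * o2 x + starRingEnd ℂ (w1 x) * w2 x
      + starRingEnd ℂ (k1 x) * k2 x) + Z x + ((Real.sign x : ℝ) : ℂ) *
      (starRingEnd ℂ (w1 x) * k2 x + starRingEnd ℂ (k1 x) * w2 x) := by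
    intro x
    have hs : (((Real.sign x : ℝ) : ℂ) * ((Real.sign x : ℝ) : ℂ)) *
        (starRingEnd ℂ (w1 x) * w2 x) = starRingEnd ℂ (w1 x) * w2 x := by
      rcases lt_trichotomy x 0 with h | h | h
      · simp [Real.sign_of_neg h]
      · simp [h, w10]
      · simp [Real.sign_of_pos h]
    simp only [hZ, map_add, map_mul, conj_ofReal]
    linear_combination hs
  simp_rw [tot]
  have i1 := integrable_conj_mul lo1 lo2
  have i2 := integrable_conj_mul lw1 lw2
  have i3 := integrable_conj_mul lk1 lk2
  have i4 : Integrable (fun x => starRingEnd ℂ (o1 x) * o2 x + starRingEnd ℂ (w1 x) * w2 x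
      + starRingEnd ℂ (k1 x) * k2 x) := (i1.add i2).add i3
  rw [integral_add3 i4 ZI crossI, cross, Z0, integral_add3 i1 i2 i3]
  ring

/-- Even part of the Fourier transform. -/
noncomputable def Ev (A : ℝ → ℂ) (ξ : ℝ) : ℂ := (A ξ + A (-ξ)) / 2

/-- Odd part of the Fourier transform. -/
noncomputable def Od (A : ℝ → ℂ) (ξ : ℝ) : ℂ := (A ξ - A (-ξ)) / 2

/-- Denominator. -/
noncomputable def den (b s ξ : ℝ) : ℂ := 1 + (s : ℂ) * I * ((b * |ξ| : ℝ) : ℂ)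

/-- Fourier side of the auxiliary odd function. -/
noncomputable def gg (b s : ℝ) (A : ℝ → ℂ) (ξ : ℝ) : ℂ :=
  (s : ℂ) * ((Real.sign ξ : ℝ) : ℂ) * Ev A ξ * (den b s ξ)⁻¹

/-- Fourier side of its derivative. -/
noncomputable def hh (b s : ℝ) (A : ℝ → ℂ) (ξ : ℝ) : ℂ :=
  ((b / (2 * Real.pi) : ℝ) : ℂ) * ((2 * Real.pi * I * ξ) * gg b s A ξ)

lemma den_re (b s ξ : ℝ) : (den b s ξ).re = 1 := by
  simp [den]

lemma den_im (b s ξ : ℝ) : (den b s ξ).im = s * (b * |ξ|) := by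
  simp [den]

lemma den_ne (b s ξ : ℝ) : den b s ξ ≠ 0 := fun h => by
  have := den_re b s ξ
  rw [h] at this
  simp at this

lemma one_le_norm_den (b s ξ : ℝ) : 1 ≤ ‖den b s ξ‖ := by
  have := Complex.abs_re_le_norm (den b s ξ)
  rw [den_re] at this
  simpa using this

lemma norm_den_inv_le (b s ξ : ℝ) : ‖(den b s ξ)⁻¹‖ ≤ 1 := by
  rw [norm_inv]
  exact inv_le_one_of_one_le₀ (one_le_norm_den b s ξ)

lemma abs_le_norm_den {b s ξ : ℝ} (hs : s ^ 2 = 1) : |b * ξ| ≤ ‖den b s ξ‖ := by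
  have := Complex.abs_im_le_norm (den b s ξ)
  rw [den_im] at this
  have h1 : |s| = 1 := by
    have := sq_abs s
    rw [hs] at this
    nlinarith [abs_nonneg s]
  simpa [abs_mul, h1] using this

lemma continuous_den (b s : ℝ) : Continuous (den b s) := by
  unfold den
  fun_prop

lemma den_neg (b s ξ : ℝ) : den b s (-ξ) = den b s ξ := by simp [den]

lemma Ev_neg (A : ℝ → ℂ) (ξ : ℝ) : Ev A (-ξ) = Ev A ξ := by
  simp [Ev, add_comm]

lemma Od_neg (A : ℝ → ℂ) (ξ : ℝ) : Od A (-ξ) = - Od A ξ := by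
  simp only [Od, neg_neg]; ring

lemma gg_neg (b s : ℝ) (A : ℝ → ℂ) (ξ : ℝ) : gg b s A (-ξ) = - gg b s A ξ := by
  simp only [gg, den_neg, Ev_neg, Real.sign_neg]
  push_cast
  ring

lemma norm_gg_le {b s : ℝ} (hs : s ^ 2 = 1) (A : ℝ → ℂ) (ξ : ℝ) : ‖gg b s A ξ‖ ≤ ‖Ev A ξ‖ := by
  have h1 : |s| = 1 := by
    have := sq_abs s
    rw [hs] at this
    nlinarith [abs_nonneg s]
  unfold gg
  rw [norm_mul, norm_mul, norm_mul, Complex.norm_real, Real.norm_eq_abs, h1, one_mul]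
  have h2 := norm_sign_le ξ
  have h3 := norm_den_inv_le b s ξ
  calc _ ≤ 1 * ‖Ev A ξ‖ * 1 := by gcongr
    _ = _ := by ring

lemma norm_hh_le {b s : ℝ} (hs : s ^ 2 = 1) (A : ℝ → ℂ) (ξ : ℝ) : ‖hh b s A ξ‖ ≤ ‖Ev A ξ‖ := by
  have h1 : |s| = 1 := by
    have := sq_abs s
    rw [hs] at this
    nlinarith [abs_nonneg s]
  have e : hh b s A ξ = (((b * ξ : ℝ) : ℂ) * (den b s ξ)⁻¹) *
      (I * (s : ℂ)) * ((Real.sign ξ : ℝ) : ℂ) * Ev A ξ := by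
    unfold hh gg
    have : (Real.pi : ℂ) ≠ 0 := by exact_mod_cast Real.pi_ne_zero
    push_cast
    field_simp
  have h3 : ‖((b * ξ : ℝ) : ℂ) * (den b s ξ)⁻¹‖ ≤ 1 := by
    rw [norm_mul, norm_inv, Complex.norm_real, Real.norm_eq_abs, ← div_eq_mul_inv]
    exact div_le_one_of_le₀ (abs_le_norm_den hs) (norm_nonneg _)
  rw [e, norm_mul, norm_mul, norm_mul, norm_mul I, Complex.norm_real, Real.norm_eq_abs, h1, norm_I]
  have h2 := norm_sign_le ξ
  calc _ ≤ 1 * (1 * 1) * 1 * ‖Ev A ξ‖ := by gcongr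
    _ = _ := by ring

lemma continuous_Ev {A : ℝ → ℂ} (hc : Continuous A) : Continuous (Ev A) := by unfold Ev; fun_prop

lemma meas_gg {A : ℝ → ℂ} (hc : Continuous A) (b s : ℝ) : AEStronglyMeasurable (gg b s A) volume := by
  apply Measurable.aestronglyMeasurable
  unfold gg
  exact ((measurable_const.mul measurable_sign).mul (continuous_Ev hc).measurable).mul
    (continuous_den b s).measurable.inv

lemma meas_hh {A : ℝ → ℂ} (hc : Continuous A) (b s : ℝ) : AEStronglyMeasurable (hh b s A) volume := by
  unfold hh
  refine AEStronglyMeasurable.mul aestronglyMeasurable_const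
    (AEStronglyMeasurable.mul ?_ (meas_gg hc b s))
  exact Continuous.aestronglyMeasurable (by fun_prop)

lemma int_Ev {A : ℝ → ℂ} (hA : Integrable A) : Integrable (Ev A) := (hA.add hA.comp_neg).div_const 2

lemma int_Od {A : ℝ → ℂ} (hA : Integrable A) : Integrable (Od A) := (hA.sub hA.comp_neg).div_const 2

lemma memLp_Ev {A : ℝ → ℂ} (hA2 : MemLp A 2) : MemLp (Ev A) 2 := by
  have := (hA2.add (memLp_neg hA2)).const_mul (1/2 : ℂ)
  refine (memLp_congr_ae (Eventually.of_forall fun x => ?_)).1 this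
  simp [Ev]; ring

lemma memLp_Od {A : ℝ → ℂ} (hA2 : MemLp A 2) : MemLp (Od A) 2 := by
  have := (hA2.sub (memLp_neg hA2)).const_mul (1/2 : ℂ)
  refine (memLp_congr_ae (Eventually.of_forall fun x => ?_)).1 this
  simp [Od]; ring

lemma int_gg {A : ℝ → ℂ} (hc : Continuous A) (hA : Integrable A) (b : ℝ) {s : ℝ} (hs : s ^ 2 = 1) : Integrable (gg b s A) :=
  (int_Ev hA).mono (meas_gg hc b s) (Eventually.of_forall (norm_gg_le hs A))

lemma int_hh {A : ℝ → ℂ} (hc : Continuous A) (hA : Integrable A) (b : ℝ) {s : ℝ} (hs : s ^ 2 = 1) : Integrable (hh b s A) :=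
  (int_Ev hA).mono (meas_hh hc b s) (Eventually.of_forall (norm_hh_le hs A))

lemma memLp_gg {A : ℝ → ℂ} (hc : Continuous A) (hA2 : MemLp A 2) (b : ℝ) {s : ℝ} (hs : s ^ 2 = 1) : MemLp (gg b s A) 2 :=
  (memLp_Ev hA2).of_le (meas_gg hc b s) (Eventually.of_forall (norm_gg_le hs A))

lemma memLp_hh {A : ℝ → ℂ} (hc : Continuous A) (hA2 : MemLp A 2) (b : ℝ) {s : ℝ} (hs : s ^ 2 = 1) : MemLp (hh b s A) 2 :=
  (memLp_Ev hA2).of_le (meas_hh hc b s) (Eventually.of_forall (norm_hh_le hs A))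

lemma int_xgg {A : ℝ → ℂ} (hc : Continuous A) (hA : Integrable A) {b : ℝ} (hb : b ≠ 0) {s : ℝ} (hs : s ^ 2 = 1) :
    Integrable (fun x : ℝ => (x : ℂ) * gg b s A x) := by
  have := (int_hh hc hA b hs).const_mul ((b : ℂ) * I)⁻¹
  refine this.congr (Eventually.of_forall fun x => ?_)
  have h1 : (Real.pi : ℂ) ≠ 0 := by exact_mod_cast Real.pi_ne_zero
  have h2 : (b : ℂ) ≠ 0 := by exact_mod_cast hb
  simp only [hh]
  push_cast
  field_simp

lemma integral_eq_of_odd_sub {f g : ℝ → ℂ} (hf : Integrable f) (hg : Integrable g)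
    (h : ∀ x, f (-x) - g (-x) = -(f x - g x)) : ∫ x, f x = ∫ x, g x := by
  rw [← sub_eq_zero, ← integral_sub hf hg]
  exact integral_odd_zero h

/-- key exponential identity -/
lemma exp_key {s : ℝ} (hs : s = 1 ∨ s = -1) (ξ x : ℝ) :
    2 * cexp (-(s : ℂ) * I * ((2 * Real.pi * |ξ| * |x| : ℝ) : ℂ)) =
      (cexp (((2 * Real.pi * (ξ * x) : ℝ) : ℂ) * I) + cexp (((2 * Real.pi * (-ξ * x) : ℝ) : ℂ) * I))
      - (s : ℂ) * ((Real.sign x : ℝ) : ℂ) * ((Real.sign ξ : ℝ) : ℂ) *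
      (cexp (((2 * Real.pi * (ξ * x) : ℝ) : ℂ) * I) -
        cexp (((2 * Real.pi * (-ξ * x) : ℝ) : ℂ) * I)) := by
  have a1 : ∀ c : ℂ, -(-(1:ℂ)) * I * c = c * I := fun c => by ring
  have a2 : ∀ c : ℂ, -(1:ℂ) * I * c = (-c) * I := fun c => by ring
  rcases lt_trichotomy ξ 0 with h | h | h <;> rcases lt_trichotomy x 0 with h' | h' | h' <;>
  rcases hs with rfl | rfl <;>
  first
    | (subst h; simp; norm_num; done)
    | (subst h; simp; done)
    | (subst h'; simp; norm_num; done)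
    | (simp only [Real.sign_of_neg, Real.sign_of_pos, abs_of_neg, abs_of_pos, h, h']
       push_cast
       simp only [a1, a2]
       ring_nf)

lemma sign_mul_self' (ξ : ℝ) : ((Real.sign ξ : ℝ) : ℂ) * (ξ : ℂ) = ((|ξ| : ℝ) : ℂ) := by
  rcases lt_trichotomy ξ 0 with h | h | h
  · simp [Real.sign_of_neg h, abs_of_neg h]
  · simp [h]
  · simp [Real.sign_of_pos h, abs_of_pos h]

lemma wave_formula {b s : ℝ} (hs : s = 1 ∨ s = -1) {ψ : ℝ → ℂ} (hψc : Continuous ψ)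
    (hψ : Integrable ψ) (hF : Integrable (𝓕 ψ)) (x : ℝ) :
    ψ x + ∫ ξ : ℝ, cexp (-(s : ℂ) * I * ((2 * Real.pi * |ξ| * |x| : ℝ) : ℂ)) *
      (-(den b s ξ)⁻¹) * 𝓕 ψ ξ =
    𝓕⁻ (Od (𝓕 ψ)) x + ((Real.sign x : ℝ) : ℂ) * 𝓕⁻ (gg b s (𝓕 ψ)) x + 𝓕⁻ (hh b s (𝓕 ψ)) x := by
  have hs2 : s ^ 2 = 1 := by rcases hs with rfl | rfl <;> norm_num
  have hFc : Continuous (𝓕 ψ) :=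
    VectorFourier.fourierIntegral_continuous Real.continuous_fourierChar (by fun_prop) hψ
  have hinv : ψ x = 𝓕⁻ (𝓕 ψ) x := by rw [hψc.fourierInv_fourier_eq hψ hF]
  rw [hinv]
  generalize 𝓕 ψ = A at *
  have ii : ∀ f : ℝ → ℂ, Integrable f → Integrable
      (fun ξ : ℝ => cexp (((2 * Real.pi * (ξ * x) : ℝ) : ℂ) * I) * f ξ) := by
    intro f hf
    refine hf.bdd_mul (c := 1) (Continuous.aestronglyMeasurable (by fun_prop))
      (Eventually.of_forall fun ξ => ?_)
    rw [Complex.norm_exp_ofReal_mul_I]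
  have iA := ii A hF
  have iO := ii _ (int_Od hF)
  have ig := (ii _ (int_gg hFc hF b hs2)).const_mul ((Real.sign x : ℝ) : ℂ)
  have ih := ii _ (int_hh hFc hF b hs2)
  have iR : Integrable (fun ξ : ℝ => cexp (-(s : ℂ) * I * ((2 * Real.pi * |ξ| * |x| : ℝ) : ℂ)) *
      (-(den b s ξ)⁻¹) * A ξ) := by
    refine hF.bdd_mul (c := 1) (Continuous.aestronglyMeasurable ?_)
      (Eventually.of_forall fun ξ => ?_)
    · have := (continuous_den b s).inv₀ (den_ne b s)
      exact Continuous.mul (by fun_prop) this.neg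
    · have e : -(s : ℂ) * I * ((2 * Real.pi * |ξ| * |x| : ℝ) : ℂ) =
          ((-s * (2 * Real.pi * |ξ| * |x|) : ℝ) : ℂ) * I := by push_cast; ring
      rw [norm_mul, e, Complex.norm_exp_ofReal_mul_I, norm_neg, one_mul]
      exact norm_den_inv_le b s ξ
  have fe : ∀ f : ℝ → ℂ, 𝓕⁻ f x = ∫ ξ : ℝ, cexp (((2 * Real.pi * (ξ * x) : ℝ) : ℂ) * I) * f ξ := by
    intro f
    rw [Real.fourierInv_eq']
    simp [mul_comm x]
  rw [fe, fe, fe, fe, ← integral_const_mul, ← integral_add iA iR, ← integral_add3 iO ig ih]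
  refine integral_eq_of_odd_sub (iA.add iR) ((iO.add ig).add ih) fun ξ => ?_
  have key := exp_key hs ξ x
  have hd := mul_inv_cancel₀ (den_ne b s ξ)
  have hden : den b s ξ = 1 + (s : ℂ) * I * ((b : ℂ) * (((Real.sign ξ : ℝ) : ℂ) * (ξ : ℂ))) := by
    rw [sign_mul_self']; simp [den]
  have hhe : ∀ ξ : ℝ, hh b s A ξ = b * I * ξ * gg b s A ξ := by
    intro ξ
    have h1 : (Real.pi : ℂ) ≠ 0 := by exact_mod_cast Real.pi_ne_zero
    simp only [hh]
    push_cast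
    field_simp
  simp only [hhe, gg_neg, Od_neg, den_neg, abs_neg, neg_neg]
  simp only [Od, Ev, gg]
  generalize cexp (-(s : ℂ) * I * ((2 * Real.pi * |ξ| * |x| : ℝ) : ℂ)) = e at *
  generalize cexp (((2 * Real.pi * (ξ * x) : ℝ) : ℂ) * I) = z at *
  generalize cexp (((2 * Real.pi * (-ξ * x) : ℝ) : ℂ) * I) = z' at *
  generalize (den b s ξ)⁻¹ = v at *
  generalize den b s ξ = d at *
  generalize A ξ = P at *
  generalize A (-ξ) = N at *
  push_cast
  linear_combination (-(P + N) / 2 * (z + z')) * hd - (P + N) / 2 * v * key +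
    (P + N) / 2 * v * (z + z') * hden

lemma ft_eq (ψ : ℝ → ℂ) (ξ : ℝ) :
    ft ψ (2 * Real.pi * ξ) = (((Real.sqrt (2 * Real.pi))⁻¹ : ℝ) : ℂ) * 𝓕 ψ ξ := by
  unfold ft
  rw [Real.fourier_eq']
  congr 1
  apply integral_congr_ae
  refine Eventually.of_forall fun x => ?_
  simp only [smul_eq_mul]
  congr 2
  simp
  ring

lemma Rpm_eq (ℏ m α s ξ : ℝ) :
    Rpm ℏ m α s (2 * Real.pi * ξ) = -(den (2 * Real.pi * ℏ ^ 2 / (m * α)) s ξ)⁻¹ := by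
  unfold Rpm den
  rw [abs_mul, abs_of_pos (by positivity : (0:ℝ) < 2 * Real.pi)]
  congr 3
  push_cast
  ring

lemma waveOp_eq (ℏ m α s : ℝ) (ψ : ℝ → ℂ) (x : ℝ) :
    waveOpQ ℏ m α s ψ x = ψ x +
      ∫ ξ : ℝ, cexp (-(s : ℂ) * I * ((2 * Real.pi * |ξ| * |x| : ℝ) : ℂ)) *
      (-(den (2 * Real.pi * ℏ ^ 2 / (m * α)) s ξ)⁻¹) * 𝓕 ψ ξ := by
  unfold waveOpQ
  congr 1
  have h := Measure.integral_comp_mul_left (fun k : ℝ =>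
    Complex.exp (-(s : ℂ) * Complex.I * ((|k| : ℝ) : ℂ) * ((|x| : ℝ) : ℂ)) *
      Rpm ℏ m α s k * ft ψ k) (2 * Real.pi)
  have hp : (0:ℝ) < 2 * Real.pi := by positivity
  have hpc : ((2 * Real.pi : ℝ) : ℂ) ≠ 0 := by exact_mod_cast hp.ne'
  rw [abs_of_pos (inv_pos.2 hp), Complex.real_smul] at h
  have h2 : ∀ z w : ℂ, w = (((2 * Real.pi)⁻¹ : ℝ) : ℂ) * z → z = ((2 * Real.pi : ℝ) : ℂ) * w := by
    intro z w hw
    rw [hw, Complex.ofReal_inv, ← mul_assoc, mul_inv_cancel₀ hpc, one_mul]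
  rw [h2 _ _ h, ← mul_assoc, ← integral_const_mul]
  apply integral_congr_ae
  refine Eventually.of_forall fun ξ => ?_
  simp only [Rpm_eq, ft_eq]
  have hq : (((Real.sqrt (2 * Real.pi))⁻¹ : ℝ) : ℂ) * ((2 * Real.pi : ℝ) : ℂ) *
      (((Real.sqrt (2 * Real.pi))⁻¹ : ℝ) : ℂ) = 1 := by
    norm_cast
    have := Real.mul_self_sqrt hp.le
    have h0 := (Real.sqrt_pos.2 hp).ne'
    field_simp
    nlinarith
  have he : -(s : ℂ) * I * ((|2 * Real.pi * ξ| : ℝ) : ℂ) * ((|x| : ℝ) : ℂ) =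
      -(s : ℂ) * I * ((2 * Real.pi * |ξ| * |x| : ℝ) : ℂ) := by
    rw [abs_mul, abs_of_pos hp]
    push_cast
    ring
  rw [he]
  linear_combination (cexp (-(s : ℂ) * I * ((2 * Real.pi * |ξ| * |x| : ℝ) : ℂ)) *
      (-(den (2 * Real.pi * ℏ ^ 2 / (m * α)) s ξ)⁻¹) * 𝓕 ψ ξ) * hq

lemma sign_sq_mul {ξ : ℝ} (h : ξ ≠ 0) : ((Real.sign ξ : ℝ) : ℂ) * ((Real.sign ξ : ℝ) : ℂ) = 1 := by
  rcases lt_or_gt_of_ne h with h | h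
  · simp [Real.sign_of_neg h]
  · simp [Real.sign_of_pos h]

lemma den_conj (b ξ : ℝ) : starRingEnd ℂ (den b 1 ξ) = den b (-1) ξ := by
  simp [den]

lemma den_mul (b ξ : ℝ) : den b 1 ξ * den b (-1) ξ = 1 + (b * ξ) ^ 2 := by
  have h : ((|ξ| : ℝ) : ℂ) ^ 2 = (ξ : ℂ) ^ 2 := by
    rw [← Complex.ofReal_pow, sq_abs, Complex.ofReal_pow]
  simp only [den]
  push_cast
  linear_combination (-(I^2) * b^2) * h - (b * ξ)^2 * I_sq

lemma integral_eq_of_odd_sub_ne {f g : ℝ → ℂ} (hf : Integrable f) (hg : Integrable g)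
    (h : ∀ x, x ≠ 0 → f (-x) - g (-x) = -(f x - g x)) : ∫ x, f x = ∫ x, g x := by
  rw [← sub_eq_zero, ← integral_sub hf hg]
  have h1 := integral_neg_eq_self (fun x => f x - g x) volume
  have h2 : ∫ x, (f (-x) - g (-x)) = ∫ x, -(f x - g x) := by
    apply integral_congr_ae
    have : ∀ᵐ x : ℝ, x ≠ 0 := by simp [ae_iff]
    filter_upwards [this] with x hx using h x hx
  rw [h2, integral_neg] at h1
  have h3 : (2 : ℂ) * ∫ x, (f x - g x) = 0 := by linear_combination -h1
  simpa using h3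

/-- Stationary formula for the scattering matrix element. -/
lemma inner_scat {b : ℝ} (hb : b ≠ 0) {A₁ A₂ : ℝ → ℂ}
    (hc1 : Continuous A₁) (hA1 : Integrable A₁) (hA1' : MemLp A₁ 2)
    (hc2 : Continuous A₂) (hA2 : Integrable A₂) (hA2' : MemLp A₂ 2) :
    ∫ x, starRingEnd ℂ (𝓕⁻ (Od A₁) x + ((Real.sign x : ℝ) : ℂ) * 𝓕⁻ (gg b 1 A₁) x
        + 𝓕⁻ (hh b 1 A₁) x) *
      (𝓕⁻ (Od A₂) x + ((Real.sign x : ℝ) : ℂ) * 𝓕⁻ (gg b (-1) A₂) x + 𝓕⁻ (hh b (-1) A₂) x) =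
    ∫ ξ, starRingEnd ℂ (A₁ ξ) * (A₂ ξ + -(den b (-1) ξ)⁻¹ * (A₂ ξ + A₂ (-ξ))) := by
  have s1 : (1:ℝ)^2 = 1 := by norm_num
  have s2 : (-1:ℝ)^2 = 1 := by norm_num
  rw [inner_formula (a := b / (2 * Real.pi)) (int_Od hA1) (memLp_Od hA1') (int_Od hA2) (memLp_Od hA2')
    (int_gg hc1 hA1 b s1) (memLp_gg hc1 hA1' b s1) (int_gg hc2 hA2 b s2) (memLp_gg hc2 hA2' b s2)
    (int_hh hc1 hA1 b s1) (memLp_hh hc1 hA1' b s1) (int_hh hc2 hA2 b s2) (memLp_hh hc2 hA2' b s2)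
    (int_xgg hc1 hA1 hb s1) (int_xgg hc2 hA2 hb s2) (fun ξ => rfl) (fun ξ => rfl)
    (Od_neg _) (Od_neg _) (gg_neg _ _ _) (gg_neg _ _ _)]
  have hr : MemLp (fun ξ => A₂ ξ + -(den b (-1) ξ)⁻¹ * (A₂ ξ + A₂ (-ξ))) 2 := by
    refine hA2'.add ?_
    have := hA2'.add (memLp_neg hA2')
    refine this.of_le ?_ (Eventually.of_forall fun ξ => ?_)
    · apply Continuous.aestronglyMeasurable
      have := (continuous_den b (-1)).inv₀ (den_ne b (-1))
      exact this.neg.mul (hc2.add (hc2.comp continuous_neg))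
    · rw [norm_mul, norm_neg]
      exact mul_le_of_le_one_left (norm_nonneg _) (norm_den_inv_le _ _ _)
  refine integral_eq_of_odd_sub_ne (((integrable_conj_mul (memLp_Od hA1') (memLp_Od hA2')).add
    (integrable_conj_mul (memLp_gg hc1 hA1' b s1) (memLp_gg hc2 hA2' b s2))).add
    (integrable_conj_mul (memLp_hh hc1 hA1' b s1) (memLp_hh hc2 hA2' b s2)))
    (integrable_conj_mul hA1' hr) fun ξ hξ => ?_
  have hp : (Real.pi : ℂ) ≠ 0 := by exact_mod_cast Real.pi_ne_zero
  have hd := den_ne b (-1) ξ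
  have hd1 := den_ne b 1 ξ
  have hm := den_mul b ξ
  have key : starRingEnd ℂ (gg b 1 A₁ ξ) * gg b (-1) A₂ ξ + starRingEnd ℂ (hh b 1 A₁ ξ) * hh b (-1) A₂ ξ =
      starRingEnd ℂ (Ev A₁ ξ) * Ev A₂ ξ * (1 - 2 * (den b (-1) ξ)⁻¹) := by
    have e1 : starRingEnd ℂ (hh b 1 A₁ ξ) * hh b (-1) A₂ ξ = (b * ξ)^2 * (starRingEnd ℂ (gg b 1 A₁ ξ) * gg b (-1) A₂ ξ) := by
      simp only [hh, map_mul, Complex.conj_ofReal, map_ofNat, Complex.conj_I]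
      push_cast
      field_simp
      linear_combination (-(b * ξ)^2 * (starRingEnd ℂ (gg b 1 A₁ ξ) * gg b (-1) A₂ ξ)) * I_sq
    have e2 : starRingEnd ℂ (gg b 1 A₁ ξ) * gg b (-1) A₂ ξ * (den b (-1) ξ * den b (-1) ξ) = -(starRingEnd ℂ (Ev A₁ ξ) * Ev A₂ ξ) := by
      simp only [gg, map_mul, Complex.conj_ofReal, map_inv₀, den_conj]
      have := sign_sq_mul hξ
      field_simp
      push_cast
      linear_combination (-(starRingEnd ℂ (Ev A₁ ξ) * Ev A₂ ξ)) * this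
    have e3 : den b 1 ξ = 2 - den b (-1) ξ := by simp [den]; ring
    have e4 : starRingEnd ℂ (gg b 1 A₁ ξ) * gg b (-1) A₂ ξ = -(starRingEnd ℂ (Ev A₁ ξ) * Ev A₂ ξ) * ((den b (-1) ξ)⁻¹ * (den b (-1) ξ)⁻¹) := by
      rw [← e2]; field_simp
    rw [e1, e4]
    rw [e3] at hm
    have : (1 + ((b:ℂ) * ξ)^2) * ((den b (-1) ξ)⁻¹ * (den b (-1) ξ)⁻¹) = 2 * (den b (-1) ξ)⁻¹ - 1 := by
      rw [← hm]; field_simp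
    linear_combination (-(starRingEnd ℂ (Ev A₁ ξ) * Ev A₂ ξ)) * this
  have key' : starRingEnd ℂ (gg b 1 A₁ (-ξ)) * gg b (-1) A₂ (-ξ) + starRingEnd ℂ (hh b 1 A₁ (-ξ)) * hh b (-1) A₂ (-ξ) =
      starRingEnd ℂ (gg b 1 A₁ ξ) * gg b (-1) A₂ ξ + starRingEnd ℂ (hh b 1 A₁ ξ) * hh b (-1) A₂ ξ := by
    simp only [hh, gg_neg, map_mul, map_neg, Complex.ofReal_neg]
    ring
  rw [den_neg, neg_neg]
  simp only [Ev] at key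
  simp only [Od, neg_neg]
  simp only [map_div₀, map_sub, map_add, map_ofNat] at key ⊢
  linear_combination key' + 2 * key

/-- Functions for which all the integral manipulations are legitimate. -/
structure Nice (ψ : ℝ → ℂ) : Prop where
  cont : Continuous ψ
  int : Integrable ψ
  mem : MemLp ψ 2
  intF : Integrable (𝓕 ψ)

lemma Nice.contF {ψ : ℝ → ℂ} (h : Nice ψ) : Continuous (𝓕 ψ) :=
  VectorFourier.fourierIntegral_continuous Real.continuous_fourierChar (by fun_prop) h.int

lemma nice_schwartz (φ : 𝓢(ℝ, ℂ)) : Nice φ where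
  cont := φ.continuous
  int := φ.integrable
  mem := φ.memLp 2
  intF := by
    rw [← SchwartzMap.fourier_coe]
    exact (𝓕 φ).integrable

lemma scat_inner {ℏ m α : ℝ} (hℏ : ℏ ≠ 0) (hm : m ≠ 0) (hα : α ≠ 0) {φ ψ : ℝ → ℂ}
    (hφ : Nice φ) (hψ : Nice ψ) :
    ∫ x, starRingEnd ℂ (waveOpQ ℏ m α 1 φ x) * waveOpQ ℏ m α (-1) ψ x =
    ∫ ξ, starRingEnd ℂ (𝓕 φ ξ) * (𝓕 ψ ξ +
      -(den (2 * Real.pi * ℏ ^ 2 / (m * α)) (-1) ξ)⁻¹ * (𝓕 ψ ξ + 𝓕 ψ (-ξ))) := by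
  have hb : 2 * Real.pi * ℏ ^ 2 / (m * α) ≠ 0 := by
    have := Real.pi_ne_zero
    positivity
  rw [← inner_scat hb hφ.contF hφ.intF (memLp_fourier hφ.int hφ.mem)
    hψ.contF hψ.intF (memLp_fourier hψ.int hψ.mem)]
  simp only [waveOp_eq]
  congr 1
  funext x
  rw [wave_formula (Or.inl rfl) hφ.cont hφ.int hφ.intF,
    wave_formula (Or.inr rfl) hψ.cont hψ.int hψ.intF]

lemma inner_eq {u v : Lp ℂ 2 (volume : Measure ℝ)} {f g : ℝ → ℂ}
    (hf : (u : ℝ → ℂ) =ᵐ[volume] f) (hg : (v : ℝ → ℂ) =ᵐ[volume] g) :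
    inner ℂ u v = ∫ x, starRingEnd ℂ (f x) * g x := by
  rw [L2.inner_def]
  apply integral_congr_ae
  filter_upwards [hf, hg] with x h1 h2
  rw [h1, h2, RCLike.inner_apply, mul_comm]

lemma fourier_lin {ψ : ℝ → ℂ} (hψ : Integrable ψ) (c : ℂ) (ξ : ℝ) :
    𝓕 (fun x => ψ x + c * (ψ x + ψ (-x))) ξ = 𝓕 ψ ξ + c * (𝓕 ψ ξ + 𝓕 ψ (-ξ)) := by
  have hn : 𝓕 ψ (-ξ) = 𝓕 (fun x => ψ (-x)) ξ := by
    rw [← Real.fourierInv_eq_fourier_neg, Real.fourierInv_eq_fourier_comp_neg]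
  have key : ∀ f : ℝ → ℂ, Integrable f → Integrable (fun v : ℝ => Real.fourierChar (-(v * ξ)) • f v) := by
    intro f hf
    have := (VectorFourier.fourierIntegral_convergent_iff (μ := volume) (f := f) Real.continuous_fourierChar
      (L := innerₗ ℝ) (by fun_prop) ξ).2 hf
    simpa [mul_comm] using this
  have h2 : Integrable (fun v : ℝ => c * (Real.fourierChar (-(v * ξ)) • ψ v +
      Real.fourierChar (-(v * ξ)) • ψ (-v))) := ((key _ hψ).add (key _ hψ.comp_neg)).const_mul c
  rw [hn]
  simp only [Real.fourier_real_eq]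
  rw [← integral_add (key _ hψ) (key _ hψ.comp_neg), ← integral_const_mul,
    ← integral_add (key _ hψ) h2]
  congr 1
  funext x
  simp only [Circle.smul_def, smul_eq_mul, Pi.add_apply]
  ring

lemma abstract_bound {ℏ m α : ℝ} (hℏ : ℏ ≠ 0) (hm : m ≠ 0) (hα : α ≠ 0) {ψ : ℝ → ℂ}
    (hψ : Nice ψ) (c : ℂ)
    (Ωp Ωm : Lp ℂ 2 (volume : Measure ℝ) →L[ℂ] Lp ℂ 2 (volume : Measure ℝ))
    (hp : ∀ (g : ℝ → ℂ), Integrable g volume → ∀ gL : Lp ℂ 2 (volume : Measure ℝ),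
        (gL : ℝ → ℂ) =ᵐ[volume] g → (Ωp gL : ℝ → ℂ) =ᵐ[volume] waveOpQ ℏ m α 1 g)
    (hmm : ∀ (g : ℝ → ℂ), Integrable g volume → ∀ gL : Lp ℂ 2 (volume : Measure ℝ),
        (gL : ℝ → ℂ) =ᵐ[volume] g → (Ωm gL : ℝ → ℂ) =ᵐ[volume] waveOpQ ℏ m α (-1) g)
    (ψL : Lp ℂ 2 (volume : Measure ℝ)) (hψL : (ψL : ℝ → ℂ) =ᵐ[volume] ψ) :
    eLpNorm (fun x : ℝ => (ContinuousLinearMap.adjoint Ωp (Ωm ψL) : ℝ → ℂ) x -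
        (ψ x + c * (ψ x + ψ (-x)))) 2 volume ≤
    eLpNorm (fun ξ : ℝ => (-(den (2 * Real.pi * ℏ ^ 2 / (m * α)) (-1) ξ)⁻¹ - c) *
      (𝓕 ψ ξ + 𝓕 ψ (-ξ))) 2 volume := by
  set b := 2 * Real.pi * ℏ ^ 2 / (m * α) with hbdef
  have hF2 := memLp_fourier hψ.int hψ.mem
  have hcd := (continuous_den b (-1)).inv₀ (den_ne b (-1))
  have hr : MemLp (fun ξ => -(den b (-1) ξ)⁻¹ * (𝓕 ψ ξ + 𝓕 ψ (-ξ))) 2 := by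
    refine (hF2.add (memLp_neg hF2)).of_le ?_ (Eventually.of_forall fun ξ => ?_)
    · apply Continuous.aestronglyMeasurable
      exact hcd.neg.mul (hψ.contF.add (hψ.contF.comp continuous_neg))
    · rw [norm_mul, norm_neg]
      exact mul_le_of_le_one_left (norm_nonneg _) (norm_den_inv_le _ _ _)
  have hG : MemLp (fun ξ : ℝ => (-(den b (-1) ξ)⁻¹ - c) * (𝓕 ψ ξ + 𝓕 ψ (-ξ))) 2 := by
    have := hr.sub ((hF2.add (memLp_neg hF2)).const_mul c)
    refine (memLp_congr_ae (Eventually.of_forall fun x => ?_)).1 this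
    simp only [Pi.sub_apply, Pi.add_apply]
    ring
  have hsum : MemLp (fun ξ => 𝓕 ψ ξ + -(den b (-1) ξ)⁻¹ * (𝓕 ψ ξ + 𝓕 ψ (-ξ))) 2 := hF2.add hr
  have hcl : MemLp (fun x => ψ x + c * (ψ x + ψ (-x))) 2 :=
    hψ.mem.add ((hψ.mem.add (memLp_neg hψ.mem)).const_mul c)
  have hclI : Integrable (fun x => ψ x + c * (ψ x + ψ (-x))) :=
    hψ.int.add ((hψ.int.add hψ.int.comp_neg).const_mul c)
  set D : Lp ℂ 2 (volume : Measure ℝ) :=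
    ContinuousLinearMap.adjoint Ωp (Ωm ψL) - hcl.toLp _ with hD
  set GG : Lp ℂ 2 (volume : Measure ℝ) := hG.toLp _ with hGG
  have hφ : ∀ φ : 𝓢(ℝ, ℂ), ‖inner ℂ (φ.toLp 2 : Lp ℂ 2 (volume : Measure ℝ)) D‖ ≤
      ‖(φ.toLp 2 : Lp ℂ 2 (volume : Measure ℝ))‖ * ‖GG‖ := by
    intro φ
    have hN := nice_schwartz φ
    have hae := φ.coeFn_toLp 2 (volume : Measure ℝ)
    have hFae : (𝓕 (φ.toLp 2 : Lp ℂ 2 (volume : Measure ℝ)) : Lp ℂ 2 (volume : Measure ℝ))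
        =ᵐ[volume] 𝓕 (φ : ℝ → ℂ) := fourier_toLp_ae hN.int hN.mem
    have e : inner ℂ (φ.toLp 2 : Lp ℂ 2 (volume : Measure ℝ)) D =
        inner ℂ (𝓕 (φ.toLp 2 : Lp ℂ 2 (volume : Measure ℝ)) : Lp ℂ 2 (volume : Measure ℝ)) GG := by
      rw [hD, inner_sub_right, ContinuousLinearMap.adjoint_inner_right,
        inner_eq (hp _ hN.int _ hae) (hmm _ hψ.int _ hψL), scat_inner hℏ hm hα hN hψ,
        inner_eq hae hcl.coeFn_toLp, ← plancherel_fourier hN.int hN.mem hclI hcl,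
        inner_eq hFae hG.coeFn_toLp, ← hbdef,
        ← integral_sub (integrable_conj_mul (memLp_fourier hN.int hN.mem) hsum)
          (integrable_conj_mul (memLp_fourier hN.int hN.mem) (memLp_fourier hclI hcl))]
      congr 1
      funext ξ
      rw [fourier_lin hψ.int]
      ring
    rw [e]
    refine (norm_inner_le_norm _ _).trans ?_
    rw [Lp.norm_fourier_eq]
  have hall : ∀ u : Lp ℂ 2 (volume : Measure ℝ), ‖inner ℂ u D‖ ≤ ‖u‖ * ‖GG‖ := by
    intro u
    have hd := SchwartzMap.denseRange_toLpCLM (E := ℝ) (F := ℂ) (μ := (volume : Measure ℝ)) (p := 2) ENNReal.ofNat_ne_top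
    refine hd.induction_on (p := fun u => ‖inner ℂ u D‖ ≤ ‖u‖ * ‖GG‖) u ?_ ?_
    · exact isClosed_le (by fun_prop) (by fun_prop)
    · intro φ
      exact hφ φ
  have hDG : ‖D‖ ≤ ‖GG‖ := by
    have := hall D
    rw [inner_self_eq_norm_sq_to_K] at this
    rcases eq_or_lt_of_le (norm_nonneg D) with h0 | h0
    · rw [← h0]; exact norm_nonneg _
    · simp at this
      nlinarith
  have h1 : eLpNorm (fun x : ℝ => (ContinuousLinearMap.adjoint Ωp (Ωm ψL) : ℝ → ℂ) x -
        (ψ x + c * (ψ x + ψ (-x)))) 2 volume = eLpNorm D 2 volume := by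
    apply eLpNorm_congr_ae
    filter_upwards [Lp.coeFn_sub (ContinuousLinearMap.adjoint Ωp (Ωm ψL)) (hcl.toLp _),
      hcl.coeFn_toLp] with x h1 h2
    rw [hD, h1, Pi.sub_apply, h2]
  rw [h1, ← eLpNorm_congr_ae hG.coeFn_toLp]
  rw [Lp.norm_def, Lp.norm_def] at hDG
  exact (ENNReal.toReal_le_toReal (Lp.eLpNorm_ne_top D) (Lp.eLpNorm_ne_top GG)).1 hDG

lemma eLpNorm_two_le {f : ℝ → ℂ} {g : ℝ → ℝ} {R : ℝ} (hR : 0 ≤ R)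
    (hfg : ∀ x, ‖f x‖ ^ 2 ≤ g x) (hg : Integrable g) (hI : ∫ x, g x ≤ R ^ 2) :
    eLpNorm f 2 volume ≤ ENNReal.ofReal R := by
  rw [eLpNorm_eq_lintegral_rpow_enorm_toReal (by norm_num) (by norm_num)]
  have h1 : ∫⁻ x, ‖f x‖ₑ ^ (2 : ENNReal).toReal ≤ ENNReal.ofReal R ^ (2:ℝ) := by
    calc ∫⁻ x, ‖f x‖ₑ ^ (2 : ENNReal).toReal ≤ ∫⁻ x, ENNReal.ofReal (g x) := by
          apply lintegral_mono
          intro x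
          simp only [ENNReal.toReal_ofNat]
          rw [← ofReal_norm_eq_enorm, ENNReal.ofReal_rpow_of_nonneg (norm_nonneg _) (by norm_num)]
          apply ENNReal.ofReal_le_ofReal
          simpa using hfg x
      _ = ENNReal.ofReal (∫ x, g x) := by
          rw [ofReal_integral_eq_lintegral_ofReal hg
            (Eventually.of_forall fun x => (sq_nonneg _).trans (hfg x))]
      _ ≤ ENNReal.ofReal (R ^ 2) := ENNReal.ofReal_le_ofReal hI
      _ = ENNReal.ofReal R ^ (2:ℝ) := by
          rw [ENNReal.ofReal_rpow_of_nonneg hR (by norm_num)]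
          simp
  calc _ ≤ (ENNReal.ofReal R ^ (2:ℝ)) ^ (1 / (2 : ENNReal).toReal) :=
        ENNReal.rpow_le_rpow h1 (by positivity)
    _ = ENNReal.ofReal R := by
        rw [← ENNReal.rpow_mul]; simp

lemma int_gauss_shift {γ : ℝ} (hγ : 0 < γ) (ξ₀ : ℝ) :
    Integrable (fun ξ : ℝ => Real.exp (-γ * (ξ - ξ₀) ^ 2)) :=
  (integrable_exp_neg_mul_sq hγ).comp_sub_right ξ₀

lemma integral_gauss_shift (γ : ℝ) (ξ₀ : ℝ) :
    ∫ ξ : ℝ, Real.exp (-γ * (ξ - ξ₀) ^ 2) = Real.sqrt (Real.pi / γ) := by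
  rw [integral_sub_right_eq_self (fun ξ : ℝ => Real.exp (-γ * ξ ^ 2)) ξ₀]
  exact integral_gaussian γ

lemma bound_two {A u : ℝ → ℂ} {κ γ ξ₀ : ℝ} (hγ : 0 < γ) (hκ : 0 < κ)
    (hκγ : κ * Real.sqrt (Real.pi / (2 * γ)) = 1)
    (hA : ∀ ξ, ‖A ξ‖ ^ 2 = κ * Real.exp (-(2 * γ) * (ξ - ξ₀) ^ 2))
    (hu : ∀ ξ, ‖u ξ‖ ≤ 2) : eLpNorm (fun ξ => u ξ * A ξ) 2 volume ≤ ENNReal.ofReal 2 := by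
  refine eLpNorm_two_le (g := fun ξ => 4 * κ * Real.exp (-(2 * γ) * (ξ - ξ₀) ^ 2)) (by norm_num)
    (fun ξ => ?_) ((int_gauss_shift (by positivity) ξ₀).const_mul _) ?_
  · rw [norm_mul, mul_pow, hA, mul_assoc]
    have : ‖u ξ‖ ^ 2 ≤ 4 := by nlinarith [hu ξ, norm_nonneg (u ξ)]
    gcongr
  · rw [integral_const_mul, integral_gauss_shift, mul_assoc, hκγ]
    norm_num

lemma bound_lin {A u : ℝ → ℂ} {κ γ ξ₀ b : ℝ} (hγ : 0 < γ) (hκ : 0 < κ)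
    (hκγ : κ * Real.sqrt (Real.pi / (2 * γ)) = 1)
    (hA : ∀ ξ, ‖A ξ‖ ^ 2 = κ * Real.exp (-(2 * γ) * (ξ - ξ₀) ^ 2))
    (hu : ∀ ξ, ‖u ξ‖ ≤ |b| * |ξ - ξ₀|) :
    eLpNorm (fun ξ => u ξ * A ξ) 2 volume ≤ ENNReal.ofReal (|b| * Real.sqrt (2 / γ)) := by
  refine eLpNorm_two_le (g := fun ξ => (b ^ 2 / γ * κ) * Real.exp (-γ * (ξ - ξ₀) ^ 2))
    (by positivity) (fun ξ => ?_) ((int_gauss_shift hγ ξ₀).const_mul _) ?_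
  · rw [norm_mul, mul_pow, hA]
    have h1 : ‖u ξ‖ ^ 2 ≤ b ^ 2 * (ξ - ξ₀) ^ 2 := by
      have := pow_le_pow_left₀ (norm_nonneg _) (hu ξ) 2
      rwa [mul_pow, sq_abs, sq_abs] at this
    have h2 : γ * (ξ - ξ₀) ^ 2 * Real.exp (-γ * (ξ - ξ₀) ^ 2) ≤ 1 := by
      have := Real.add_one_le_exp (γ * (ξ - ξ₀) ^ 2)
      rw [neg_mul, Real.exp_neg]
      rw [mul_inv_le_iff₀ (Real.exp_pos _)]
      linarith
    have h3 : Real.exp (-(2 * γ) * (ξ - ξ₀) ^ 2) =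
        Real.exp (-γ * (ξ - ξ₀) ^ 2) * Real.exp (-γ * (ξ - ξ₀) ^ 2) := by
      rw [← Real.exp_add]; congr 1; ring
    set E := Real.exp (-γ * (ξ - ξ₀) ^ 2) with hE
    have hE0 : 0 < E := Real.exp_pos _
    rw [h3]
    calc ‖u ξ‖ ^ 2 * (κ * (E * E)) ≤ (b ^ 2 * (ξ - ξ₀) ^ 2) * (κ * (E * E)) := by gcongr
      _ = (b ^ 2 / γ * κ * E) * (γ * (ξ - ξ₀) ^ 2 * E) := by field_simp
      _ ≤ (b ^ 2 / γ * κ * E) * 1 := by gcongr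
      _ = _ := by ring
  · rw [integral_const_mul, integral_gauss_shift, mul_pow, sq_abs, Real.sq_sqrt (by positivity)]
    have h4 : Real.sqrt (Real.pi / γ) = Real.sqrt 2 * Real.sqrt (Real.pi / (2 * γ)) := by
      rw [← Real.sqrt_mul (by norm_num)]; congr 1; field_simp
    rw [h4]
    have h5 : Real.sqrt 2 ≤ 2 := by
      rw [Real.sqrt_le_left (by norm_num)]; norm_num
    calc b ^ 2 / γ * κ * (Real.sqrt 2 * Real.sqrt (Real.pi / (2 * γ)))
        = b ^ 2 / γ * Real.sqrt 2 * (κ * Real.sqrt (Real.pi / (2 * γ))) := by ring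
      _ = b ^ 2 / γ * Real.sqrt 2 := by rw [hκγ, mul_one]
      _ ≤ b ^ 2 / γ * 2 := by gcongr
      _ = b ^ 2 * (2 / γ) := by ring

lemma norm_res_le (b ξ ξ₀ : ℝ) :
    ‖-(den b (-1) ξ)⁻¹ - -(den b (-1) ξ₀)⁻¹‖ ≤ |b| * |ξ - ξ₀| := by
  have h1 := den_ne b (-1) ξ
  have h2 := den_ne b (-1) ξ₀
  have e : -(den b (-1) ξ)⁻¹ - -(den b (-1) ξ₀)⁻¹ =
      ((den b (-1) ξ)⁻¹ * (den b (-1) ξ₀)⁻¹) * (den b (-1) ξ - den b (-1) ξ₀) := by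
    field_simp
    ring
  have e2 : den b (-1) ξ - den b (-1) ξ₀ = -I * ((b * (|ξ| - |ξ₀|) : ℝ) : ℂ) := by
    simp only [den]; push_cast; ring
  have h3 := abs_abs_sub_abs_le_abs_sub ξ ξ₀
  have h4 := norm_den_inv_le b (-1) ξ
  have h5 := norm_den_inv_le b (-1) ξ₀
  rw [e, norm_mul, norm_mul, e2, norm_mul, norm_neg, norm_I, one_mul, Complex.norm_real,
    Real.norm_eq_abs, abs_mul]
  calc _ ≤ (1 * 1) * (|b| * |ξ - ξ₀|) := mul_le_mul
        (mul_le_mul h4 h5 (norm_nonneg _) zero_le_one)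
        (mul_le_mul_of_nonneg_left h3 (abs_nonneg b)) (by positivity) (by norm_num)
    _ = _ := by ring

lemma norm_res_le_two (b ξ ξ₀ : ℝ) :
    ‖-(den b (-1) ξ)⁻¹ - -(den b (-1) ξ₀)⁻¹‖ ≤ 2 := by
  refine (norm_sub_le _ _).trans ?_
  rw [norm_neg, norm_neg]
  linarith [norm_den_inv_le b (-1) ξ, norm_den_inv_le b (-1) ξ₀]

lemma bound_sym {A u : ℝ → ℂ} {R : ℝ} (hA : Continuous A) (hu : Continuous u)
    (hue : ∀ ξ, u (-ξ) = u ξ) (hR : 0 ≤ R)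
    (h : eLpNorm (fun ξ => u ξ * A ξ) 2 volume ≤ ENNReal.ofReal R) :
    eLpNorm (fun ξ => u ξ * (A ξ + A (-ξ))) 2 volume ≤ ENNReal.ofReal (2 * R) := by
  have hc : Continuous (fun ξ => u ξ * A ξ) := hu.mul hA
  have hc' : Continuous (fun ξ => u (-ξ) * A (-ξ)) := hc.comp continuous_neg
  have h1 : (fun ξ => u ξ * (A ξ + A (-ξ))) =
      (fun ξ => u ξ * A ξ) + (fun ξ => u (-ξ) * A (-ξ)) := by
    funext ξ
    simp only [Pi.add_apply, hue]
    ring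
  have h2 : eLpNorm (fun ξ => u (-ξ) * A (-ξ)) 2 volume = eLpNorm (fun ξ => u ξ * A ξ) 2 volume :=
    eLpNorm_comp_measurePreserving (g := fun ξ => u ξ * A ξ) hc.aestronglyMeasurable
      (Measure.measurePreserving_neg (volume : Measure ℝ))
  rw [h1]
  refine (eLpNorm_add_le hc.aestronglyMeasurable hc'.aestronglyMeasurable (by norm_num)).trans ?_
  rw [h2, two_mul, ENNReal.ofReal_add hR hR]
  exact add_le_add h h

lemma norm_pref {ℏ σ₀ : ℝ} (hℏ : 0 < ℏ) (hσ : 0 < σ₀) :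
    ‖((2 * Real.pi * ℏ : ℝ) : ℂ) ^ (-(1/4 : ℂ)) * (σ₀ : ℂ) ^ (-(1/2 : ℂ))‖ ^ 2 =
      (Real.sqrt (2 * Real.pi * ℏ) * σ₀)⁻¹ := by
  have hp : 0 < 2 * Real.pi * ℏ := by positivity
  rw [norm_mul, Complex.norm_cpow_eq_rpow_re_of_pos hp, Complex.norm_cpow_eq_rpow_re_of_pos hσ,
    mul_pow, ← Real.rpow_natCast, ← Real.rpow_natCast, ← Real.rpow_mul hp.le,
    ← Real.rpow_mul hσ.le, mul_inv, Real.sqrt_eq_rpow, ← Real.rpow_neg hp.le]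
  have e1 : (-(1/4 : ℂ)).re = -(1/4 : ℝ) := by norm_num
  have e2 : (-(1/2 : ℂ)).re = -(1/2 : ℝ) := by norm_num
  rw [e1, e2, ← Real.rpow_neg_one σ₀]
  norm_num

lemma norm_coh {ℏ σ₀ : ℝ} (hℏ : 0 < ℏ) (hσ : 0 < σ₀) (q p x : ℝ) :
    ‖coh ℏ (σ₀ : ℂ) ((σ₀ : ℂ))⁻¹ q p x‖ =
      ‖((2 * Real.pi * ℏ : ℝ) : ℂ) ^ (-(1/4 : ℂ)) * (σ₀ : ℂ) ^ (-(1/2 : ℂ))‖ *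
      Real.exp (-(1 / (4 * ℏ * σ₀ ^ 2)) * (x - q) ^ 2) := by
  unfold coh
  rw [norm_mul, Complex.norm_exp]
  congr 2
  have h1 : (σ₀ : ℂ) ≠ 0 := by exact_mod_cast hσ.ne'
  have h2 : (ℏ : ℂ) ≠ 0 := by exact_mod_cast hℏ.ne'
  have e : -((σ₀ : ℂ)⁻¹ * ((x : ℂ) - (q : ℂ)) ^ 2) / (4 * (ℏ : ℂ) * σ₀) +
      Complex.I * (p : ℂ) * ((x : ℂ) - (q : ℂ)) / (ℏ : ℂ) =
      ((-(1 / (4 * ℏ * σ₀ ^ 2)) * (x - q) ^ 2 : ℝ) : ℂ) + ((p * (x - q) / ℏ : ℝ) : ℂ) * I := by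
    push_cast
    field_simp
  rw [e]
  simp only [add_re, ofReal_re, re_ofReal_mul, I_re, mul_zero, add_zero]

lemma coh_neg (ℏ : ℝ) (σ σ' : ℂ) (q p x : ℝ) : coh ℏ σ σ' (-q) (-p) x = coh ℏ σ σ' q p (-x) := by
  unfold coh
  congr 2
  push_cast
  ring

lemma fourier_const_mul (c : ℂ) (f : ℝ → ℂ) (ξ : ℝ) : 𝓕 (fun x => c * f x) ξ = c * 𝓕 f ξ := by
  rw [Real.fourier_real_eq, Real.fourier_real_eq, ← integral_const_mul]
  congr 1
  funext x
  simp only [Circle.smul_def, smul_eq_mul]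
  ring

lemma norm_fourier_coh {ℏ σ₀ : ℝ} (hℏ : 0 < ℏ) (hσ : 0 < σ₀) (q p ξ : ℝ) :
    ‖𝓕 (fun x => coh ℏ (σ₀ : ℂ) ((σ₀ : ℂ))⁻¹ q p x) ξ‖ ^ 2 =
      (2 * Real.sqrt (2 * Real.pi * ℏ) * σ₀) *
        Real.exp (-(2 * (4 * Real.pi ^ 2 * ℏ * σ₀ ^ 2)) * (ξ - p / (2 * Real.pi * ℏ)) ^ 2) := by
  have h1 : (σ₀ : ℂ) ≠ 0 := by exact_mod_cast hσ.ne'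
  have h2 : (ℏ : ℂ) ≠ 0 := by exact_mod_cast hℏ.ne'
  have h3 : (Real.pi : ℂ) ≠ 0 := by exact_mod_cast Real.pi_ne_zero
  have hB : 0 < 1 / (4 * Real.pi * ℏ * σ₀ ^ 2) := by positivity
  set K := ((2 * Real.pi * ℏ : ℝ) : ℂ) ^ (-(1/4 : ℂ)) * (σ₀ : ℂ) ^ (-(1/2 : ℂ)) with hK
  set B := 1 / (4 * Real.pi * ℏ * σ₀ ^ 2) with hBd
  set c : ℂ := ((q / (4 * Real.pi * ℏ * σ₀ ^ 2) : ℝ) : ℂ) + ((p / (2 * Real.pi * ℏ) : ℝ) : ℂ) * I with hc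
  have e : (fun x => coh ℏ (σ₀ : ℂ) ((σ₀ : ℂ))⁻¹ q p x) = fun x : ℝ =>
      (K * cexp (((-(q ^ 2) / (4 * ℏ * σ₀ ^ 2) : ℝ) : ℂ) + ((-(p * q / ℏ) : ℝ) : ℂ) * I)) *
      cexp (-Real.pi * (B : ℂ) * x ^ 2 + 2 * Real.pi * c * x) := by
    funext x
    rw [mul_assoc, ← Complex.exp_add]
    unfold coh
    rw [← hK]
    congr 2
    rw [hc, hBd]
    push_cast
    field_simp
    ring
  rw [e, fourier_const_mul, fourier_gaussian_pi' (by simpa using hB)]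
  simp only
  have e2 : -(Real.pi : ℂ) / (B : ℂ) * ((ξ : ℂ) + I * c) ^ 2 =
      ((-(4 * Real.pi ^ 2 * ℏ * σ₀ ^ 2) * (ξ - p / (2 * Real.pi * ℏ)) ^ 2 +
        q ^ 2 / (4 * ℏ * σ₀ ^ 2) : ℝ) : ℂ) +
      ((-(4 * Real.pi ^ 2 * ℏ * σ₀ ^ 2) * (2 * (ξ - p / (2 * Real.pi * ℏ)) *
        (q / (4 * Real.pi * ℏ * σ₀ ^ 2))) : ℝ) : ℂ) * I := by
    have hI : I * c = ((q / (4 * Real.pi * ℏ * σ₀ ^ 2) : ℝ) : ℂ) * I - ((p / (2 * Real.pi * ℏ) : ℝ) : ℂ) := by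
      rw [hc]; linear_combination ((p / (2 * Real.pi * ℏ) : ℝ) : ℂ) * I_sq
    rw [hI, hBd]
    push_cast
    field_simp
    ring_nf
    rw [I_sq]
    ring
  clear_value K
  rw [e2, norm_mul, norm_mul, norm_mul, Complex.norm_exp, Complex.norm_exp]
  simp only [add_re, ofReal_re, re_ofReal_mul, I_re, mul_zero, add_zero]
  rw [norm_div, norm_one, Complex.norm_cpow_eq_rpow_re_of_pos hB]
  have e3 : ((1/2 : ℂ)).re = (1/2 : ℝ) := by norm_num
  rw [e3, ← Real.sqrt_eq_rpow]
  have hKs := norm_pref hℏ hσ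
  rw [← hK] at hKs
  have hs : 0 < Real.sqrt (2 * Real.pi * ℏ) := Real.sqrt_pos.2 (by positivity)
  have hs2 : Real.sqrt (2 * Real.pi * ℏ) ^ 2 = 2 * Real.pi * ℏ := Real.sq_sqrt (by positivity)
  have e4 : Real.exp (-(2 * (4 * Real.pi ^ 2 * ℏ * σ₀ ^ 2)) * (ξ - p / (2 * Real.pi * ℏ)) ^ 2) =
      (Real.exp (-(q ^ 2) / (4 * ℏ * σ₀ ^ 2)) *
      Real.exp (-(4 * Real.pi ^ 2 * ℏ * σ₀ ^ 2) * (ξ - p / (2 * Real.pi * ℏ)) ^ 2 +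
        q ^ 2 / (4 * ℏ * σ₀ ^ 2))) ^ 2 := by
    rw [← Real.exp_add, ← Real.exp_nat_mul]
    congr 1
    push_cast
    ring
  rw [e4]
  have e5 : ∀ k e s f : ℝ, (k * e * (1 / s * f)) ^ 2 = (k ^ 2 * (1 / s ^ 2)) * (e * f) ^ 2 := by
    intros; ring
  rw [e5, hKs, Real.sq_sqrt hB.le, hBd]
  congr 1
  field_simp
  rw [hs2]
  ring

lemma kg_one {ℏ σ₀ : ℝ} (hℏ : 0 < ℏ) (hσ : 0 < σ₀) :
    (2 * Real.sqrt (2 * Real.pi * ℏ) * σ₀) *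
      Real.sqrt (Real.pi / (2 * (4 * Real.pi ^ 2 * ℏ * σ₀ ^ 2))) = 1 := by
  have e : 2 * Real.sqrt (2 * Real.pi * ℏ) * σ₀ = Real.sqrt (8 * Real.pi * ℏ * σ₀ ^ 2) := by
    rw [eq_comm, Real.sqrt_eq_iff_eq_sq (by positivity) (by positivity), mul_pow, mul_pow,
      Real.sq_sqrt (by positivity)]
    ring
  rw [e, ← Real.sqrt_mul (by positivity), Real.sqrt_eq_one]
  have := Real.pi_pos
  field_simp
  norm_num

lemma nice_coh {ℏ σ₀ : ℝ} (hℏ : 0 < ℏ) (hσ : 0 < σ₀) (q p : ℝ) :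
    Nice (fun x => coh ℏ (σ₀ : ℂ) ((σ₀ : ℂ))⁻¹ q p x) := by
  have hcont : Continuous (fun x => coh ℏ (σ₀ : ℂ) ((σ₀ : ℂ))⁻¹ q p x) := by
    unfold coh
    fun_prop
  have hcint : Integrable (fun x => coh ℏ (σ₀ : ℂ) ((σ₀ : ℂ))⁻¹ q p x) := by
    rw [← integrable_norm_iff hcont.aestronglyMeasurable]
    simp only [norm_coh hℏ hσ]
    exact (int_gauss_shift (by positivity) q).const_mul _
  have hF : Continuous (𝓕 (fun x => coh ℏ (σ₀ : ℂ) ((σ₀ : ℂ))⁻¹ q p x)) :=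
    VectorFourier.fourierIntegral_continuous Real.continuous_fourierChar (by fun_prop) hcint
  refine ⟨hcont, hcint, ?_, ?_⟩
  · rw [memLp_two_iff_integrable_sq_norm hcont.aestronglyMeasurable]
    have : ∀ x, ‖coh ℏ (σ₀ : ℂ) ((σ₀ : ℂ))⁻¹ q p x‖ ^ 2 =
      ‖((2 * Real.pi * ℏ : ℝ) : ℂ) ^ (-(1/4 : ℂ)) * (σ₀ : ℂ) ^ (-(1/2 : ℂ))‖ ^ 2 *
      Real.exp (-(2 * (1 / (4 * ℏ * σ₀ ^ 2))) * (x - q) ^ 2) := by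
      intro x
      rw [norm_coh hℏ hσ, mul_pow, ← Real.exp_nat_mul]
      congr 2
      push_cast
      ring
    simp only [this]
    exact (int_gauss_shift (by positivity) q).const_mul _
  · rw [← integrable_norm_iff hF.aestronglyMeasurable]
    have : ∀ ξ, ‖𝓕 (fun x => coh ℏ (σ₀ : ℂ) ((σ₀ : ℂ))⁻¹ q p x) ξ‖ =
      Real.sqrt (2 * Real.sqrt (2 * Real.pi * ℏ) * σ₀) *
        Real.exp (-(4 * Real.pi ^ 2 * ℏ * σ₀ ^ 2) * (ξ - p / (2 * Real.pi * ℏ)) ^ 2) := by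
      intro ξ
      rw [← sq_eq_sq₀ (norm_nonneg _) (by positivity), norm_fourier_coh hℏ hσ, mul_pow,
        Real.sq_sqrt (by positivity), ← Real.exp_nat_mul]
      congr 2
      push_cast
      ring
    simp only [this]
    exact (int_gauss_shift (by have := Real.pi_pos; positivity) _).const_mul _


lemma real_final {ℏ M lam P Q S : ℝ} (hℏ : 0 < ℏ) (hM : 0 < M) (hlam : 0 < lam)
    (hP : 0 ≤ P) (hQ : 0 ≤ Q) (hS : 0 ≤ S) {N : ENNReal} {R : ℝ}
    (hR : R ^ 2 = 2 * ℏ ^ 3 / M ^ 2)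
    (h1 : N ≤ ENNReal.ofReal (2 * 2)) (h2 : N ≤ ENNReal.ofReal (2 * R)) :
    N ≤ ENNReal.ofReal (8 * ((ℏ / M ^ ((2 : ℝ) / 3)) ^ ((3 : ℝ) / 2 - lam)
      + Real.exp (-(1 / 2) * (M ^ ((2 : ℝ) / 3) / ℏ) ^ (2 * lam)) + P + Q + S)) := by
  have hM3 : 0 < M ^ ((2 : ℝ) / 3) := Real.rpow_pos_of_pos hM _
  set h := ℏ / M ^ ((2 : ℝ) / 3) with hh
  have hpos : 0 < h := by positivity
  have hinv : M ^ ((2 : ℝ) / 3) / ℏ = h⁻¹ := by rw [hh, inv_div]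
  have hA : 0 < h ^ ((3 : ℝ) / 2 - lam) := Real.rpow_pos_of_pos hpos _
  have hE : 0 < Real.exp (-(1 / 2) * (M ^ ((2 : ℝ) / 3) / ℏ) ^ (2 * lam)) := Real.exp_pos _
  rcases le_or_gt h 1 with hle | hgt
  · refine h2.trans (ENNReal.ofReal_le_ofReal ?_)
    have h3 : h ^ ((3 : ℝ) / 2) ≤ h ^ ((3 : ℝ) / 2 - lam) :=
      Real.rpow_le_rpow_of_exponent_ge hpos hle (by linarith)
    have h4 : (h ^ ((3 : ℝ) / 2)) ^ 2 = ℏ ^ 3 / M ^ 2 := by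
      rw [← Real.rpow_natCast, ← Real.rpow_mul hpos.le]
      have : (3 : ℝ) / 2 * ((2 : ℕ) : ℝ) = ((3 : ℕ) : ℝ) := by norm_num
      rw [this, Real.rpow_natCast, hh, div_pow, ← Real.rpow_natCast (M ^ ((2 : ℝ) / 3)),
        ← Real.rpow_mul hM.le]
      have : (2 : ℝ) / 3 * ((3 : ℕ) : ℝ) = ((2 : ℕ) : ℝ) := by norm_num
      rw [this, Real.rpow_natCast]
    have h5 : 0 < h ^ ((3 : ℝ) / 2) := Real.rpow_pos_of_pos hpos _
    have h6 : R ≤ 4 * h ^ ((3 : ℝ) / 2) := by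
      refine (abs_le_of_sq_le_sq' ?_ (by positivity)).2
      rw [mul_pow, h4, hR]
      have : 0 ≤ ℏ ^ 3 / M ^ 2 := by positivity
      rw [mul_div_assoc]
      nlinarith
    linarith
  · refine h1.trans (ENNReal.ofReal_le_ofReal ?_)
    have h3 : (M ^ ((2 : ℝ) / 3) / ℏ) ^ (2 * lam) ≤ 1 := by
      rw [hinv]
      exact Real.rpow_le_one (by positivity) (inv_le_one_of_one_le₀ hgt.le) (by positivity)
    have h4 := Real.add_one_le_exp (-(1 / 2) * (M ^ ((2 : ℝ) / 3) / ℏ) ^ (2 * lam))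
    linarith

lemma final_bound {ℏ m σ₀ α : ℝ} (hℏ : 0 < ℏ) (hm : 0 < m) (hσ : 0 < σ₀) (hα : α ≠ 0)
    (Ωp Ωm : Lp ℂ 2 (volume : Measure ℝ) →L[ℂ] Lp ℂ 2 (volume : Measure ℝ))
    (hp : ∀ (g : ℝ → ℂ), Integrable g volume → ∀ gL : Lp ℂ 2 (volume : Measure ℝ),
        (gL : ℝ → ℂ) =ᵐ[volume] g → (Ωp gL : ℝ → ℂ) =ᵐ[volume] waveOpQ ℏ m α 1 g)
    (hmm : ∀ (g : ℝ → ℂ), Integrable g volume → ∀ gL : Lp ℂ 2 (volume : Measure ℝ),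
        (gL : ℝ → ℂ) =ᵐ[volume] g → (Ωm gL : ℝ → ℂ) =ᵐ[volume] waveOpQ ℏ m α (-1) g)
    {lam : ℝ} (hlam : 0 < lam) (q p : ℝ)
    (ψL : Lp ℂ 2 (volume : Measure ℝ))
    (hψL : (ψL : ℝ → ℂ) =ᵐ[volume] (fun x => coh ℏ (σ₀ : ℂ) ((σ₀ : ℂ))⁻¹ q p x)) :
      eLpNorm (fun x : ℝ =>
          (ContinuousLinearMap.adjoint Ωp (Ωm ψL) : ℝ → ℂ) x -
          (coh ℏ (σ₀ : ℂ) ((σ₀ : ℂ))⁻¹ q p x -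
            (1 - 2 * Complex.I * ((|p| : ℝ) : ℂ) / ((m : ℂ) * ((2 * α / ℏ : ℝ) : ℂ)))⁻¹ *
              (coh ℏ (σ₀ : ℂ) ((σ₀ : ℂ))⁻¹ q p x + coh ℏ (σ₀ : ℂ) ((σ₀ : ℂ))⁻¹ (-q) (-p) x)))
        2 volume
      ≤ ENNReal.ofReal (8 * (
          (ℏ / (m * |α| * σ₀) ^ ((2 : ℝ) / 3)) ^ ((3 : ℝ) / 2 - lam)
        + Real.exp (-(1 / 2) * ((m * |α| * σ₀) ^ ((2 : ℝ) / 3) / ℏ) ^ (2 * lam))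
        + Real.exp (-(σ₀ ^ 2 * p ^ 2 / ℏ))
        + Real.exp (-(q ^ 2 / (8 * ℏ * σ₀ ^ 2)))
        + Real.exp (-(m * |α| * |q| / (8 * ℏ ^ 2))))) := by
  have hπ := Real.pi_pos
  have hN := nice_coh hℏ hσ q p
  set b := 2 * Real.pi * ℏ ^ 2 / (m * α) with hb
  set ξ₀ := p / (2 * Real.pi * ℏ) with hξ₀
  have hmc : (m : ℂ) ≠ 0 := by exact_mod_cast hm.ne'
  have hαc : (α : ℂ) ≠ 0 := by exact_mod_cast hα
  have hℏc : (ℏ : ℂ) ≠ 0 := by exact_mod_cast hℏ.ne'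
  have hπc : (Real.pi : ℂ) ≠ 0 := by exact_mod_cast hπ.ne'
  have hden : 1 - 2 * Complex.I * ((|p| : ℝ) : ℂ) / ((m : ℂ) * ((2 * α / ℏ : ℝ) : ℂ)) =
      den b (-1) ξ₀ := by
    simp only [den]
    rw [hb, hξ₀, abs_div, abs_of_pos (by positivity : 0 < 2 * Real.pi * ℏ)]
    push_cast
    field_simp
    try ring
  have key := abstract_bound hℏ.ne' hm.ne' hα hN (-(den b (-1) ξ₀)⁻¹) Ωp Ωm hp hmm ψL hψL
  rw [← hb] at key
  have e : (fun x : ℝ =>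
          (ContinuousLinearMap.adjoint Ωp (Ωm ψL) : ℝ → ℂ) x -
          (coh ℏ (σ₀ : ℂ) ((σ₀ : ℂ))⁻¹ q p x -
            (1 - 2 * Complex.I * ((|p| : ℝ) : ℂ) / ((m : ℂ) * ((2 * α / ℏ : ℝ) : ℂ)))⁻¹ *
              (coh ℏ (σ₀ : ℂ) ((σ₀ : ℂ))⁻¹ q p x + coh ℏ (σ₀ : ℂ) ((σ₀ : ℂ))⁻¹ (-q) (-p) x))) =
      fun x : ℝ => (ContinuousLinearMap.adjoint Ωp (Ωm ψL) : ℝ → ℂ) x -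
        (coh ℏ (σ₀ : ℂ) ((σ₀ : ℂ))⁻¹ q p x + -(den b (-1) ξ₀)⁻¹ *
          (coh ℏ (σ₀ : ℂ) ((σ₀ : ℂ))⁻¹ q p x + coh ℏ (σ₀ : ℂ) ((σ₀ : ℂ))⁻¹ q p (-x))) := by
    funext x
    rw [hden, coh_neg]
    ring
  rw [e]
  have hu : Continuous (fun ξ => -(den b (-1) ξ)⁻¹ - -(den b (-1) ξ₀)⁻¹) :=
    ((continuous_den b (-1)).inv₀ (den_ne b (-1))).neg.sub continuous_const
  have hue : ∀ ξ, -(den b (-1) (-ξ))⁻¹ - -(den b (-1) ξ₀)⁻¹ =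
      -(den b (-1) ξ)⁻¹ - -(den b (-1) ξ₀)⁻¹ := fun ξ => by rw [den_neg]
  have hγ : 0 < 4 * Real.pi ^ 2 * ℏ * σ₀ ^ 2 := by positivity
  have hκ : 0 < 2 * Real.sqrt (2 * Real.pi * ℏ) * σ₀ := by positivity
  have hA := norm_fourier_coh hℏ hσ q p
  have b1 := bound_sym hN.contF hu hue (by norm_num) (bound_two hγ hκ (kg_one hℏ hσ) hA
    (fun ξ => norm_res_le_two b ξ ξ₀))
  have b2 := bound_sym hN.contF hu hue (by positivity) (bound_lin hγ hκ (kg_one hℏ hσ) hA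
    (fun ξ => norm_res_le b ξ ξ₀))
  refine real_final hℏ (by positivity) hlam (Real.exp_pos _).le (Real.exp_pos _).le
    (Real.exp_pos _).le ?_ (key.trans b1) (key.trans b2)
  rw [mul_pow, sq_abs, Real.sq_sqrt (by positivity), hb, mul_pow, mul_pow, sq_abs]
  field_simp
  try ring

end DeltaScat

/-- Theorem 2, Eq. (t2_2): semiclassical approximation of the quantum
scattering operator `S_α = (Ω_α^+)^* ∘ Ω_α^-` applied to a coherent state by the classical
scattering operator `S^cl_β`, `β = 2α/ℏ`.  The quantum wave operators are the bounded operators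
on `L²(ℝ)` given a.e. by the stationary representation, and `(·)^*` is the Hilbert adjoint. -/
theorem statement3 :
    ∃ C : ℝ, 0 < C ∧
      ∀ (ℏ m σ₀ α : ℝ), 0 < ℏ → 0 < m → 0 < σ₀ → α ≠ 0 →
      ∀ (Ωp Ωm : Lp ℂ 2 (volume : Measure ℝ) →L[ℂ] Lp ℂ 2 (volume : Measure ℝ)),
      (∀ (g : ℝ → ℂ), Integrable g volume → ∀ gL : Lp ℂ 2 (volume : Measure ℝ),
        (gL : ℝ → ℂ) =ᵐ[volume] g → (Ωp gL : ℝ → ℂ) =ᵐ[volume] waveOpQ ℏ m α 1 g) →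
      (∀ (g : ℝ → ℂ), Integrable g volume → ∀ gL : Lp ℂ 2 (volume : Measure ℝ),
        (gL : ℝ → ℂ) =ᵐ[volume] g → (Ωm gL : ℝ → ℂ) =ᵐ[volume] waveOpQ ℏ m α (-1) g) →
      ∀ lam : ℝ, 0 < lam →
      ∀ q p : ℝ, q * p ≠ 0 →
      ∀ ψL : Lp ℂ 2 (volume : Measure ℝ),
        (ψL : ℝ → ℂ) =ᵐ[volume] (fun x => coh ℏ (σ₀ : ℂ) ((σ₀ : ℂ))⁻¹ q p x) →
      eLpNorm (fun x : ℝ =>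
          (ContinuousLinearMap.adjoint Ωp (Ωm ψL) : ℝ → ℂ) x -
          (coh ℏ (σ₀ : ℂ) ((σ₀ : ℂ))⁻¹ q p x -
            (1 - 2 * Complex.I * ((|p| : ℝ) : ℂ) / ((m : ℂ) * ((2 * α / ℏ : ℝ) : ℂ)))⁻¹ *
              (coh ℏ (σ₀ : ℂ) ((σ₀ : ℂ))⁻¹ q p x + coh ℏ (σ₀ : ℂ) ((σ₀ : ℂ))⁻¹ (-q) (-p) x)))
        2 volume
      ≤ ENNReal.ofReal (C * (
          (ℏ / (m * |α| * σ₀) ^ ((2 : ℝ) / 3)) ^ ((3 : ℝ) / 2 - lam)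
        + Real.exp (-(1 / 2) * ((m * |α| * σ₀) ^ ((2 : ℝ) / 3) / ℏ) ^ (2 * lam))
        + Real.exp (-(σ₀ ^ 2 * p ^ 2 / ℏ))
        + Real.exp (-(q ^ 2 / (8 * ℏ * σ₀ ^ 2)))
        + Real.exp (-(m * |α| * |q| / (8 * ℏ ^ 2))))) := by
  refine ⟨8, by norm_num, ?_⟩
  intro ℏ m σ₀ α hℏ hm hσ hα Ωp Ωm hp hmm lam hlam q p _ ψL hψL
  exact DeltaScat.final_bound hℏ hm hσ hα Ωp Ωm hp hmm hlam q p ψL hψL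
end

section
/- Let m>0, z∈ℂ with Im z ≠ 0, and let q,p∈ℝ with q≠0 and p≠0. Then lim_{R→∞} (1/(2π)) ∫_{−R}^{R} e^{ikq}/((kp/m) − z) dk = θ(qp·Im z)·sgn(Im z)·(i m/|p|)·e^{i m z q/p}, where θ is the Heaviside function (θ(x)=1 for x>0, θ(x)=0 for x≤0). In particular the limit is 0 whenever qp·Im z < 0. -/
open MeasureTheory Complex Filter

noncomputable section

lemma aux_contour (f : ℂ → ℂ) (C R0 q : ℝ) (hC : 0 ≤ C) (hq : 0 < q)
    (hf : ∀ z : ℂ, 0 ≤ z.im → DifferentiableAt ℂ f z)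
    (hb : ∀ z : ℂ, 0 ≤ z.im → R0 ≤ ‖z‖ →
      ‖f z‖ ≤ C * (Real.exp (-q * z.im) / ‖z‖ + 1 / ‖z‖ ^ 2)) :
    Tendsto (fun R : ℝ => ∫ k in (-R)..R, f (k : ℂ)) atTop (nhds 0) := by
  have hside : ∀ R : ℝ, 0 < R → R0 ≤ R → ∀ s : ℝ, |s| = R →
      ‖∫ y in (0:ℝ)..R, f ((s : ℂ) + y * I)‖ ≤ C * (1 / q + 1) / R := by
    intro R hR hR0 s hs
    have h1 : ∀ y ∈ Set.Ioc (0:ℝ) R, ‖f ((s : ℂ) + y * I)‖ ≤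
        C * (Real.exp (-q * y) / R + 1 / R ^ 2) := by
      intro y hy
      have hn : R ≤ ‖(s : ℂ) + y * I‖ := by
        have := Complex.abs_re_le_norm ((s : ℂ) + y * I)
        simp at this; rw [hs] at this; exact this
      have := hb ((s : ℂ) + y * I) (by simpa using hy.1.le) (hR0.trans hn)
      have e : ((s : ℂ) + y * I).im = y := by simp
      rw [e] at this
      refine this.trans ?_
      gcongr
    have hint : ∫ y in (0:ℝ)..R, C * (Real.exp (-q * y) / R + 1 / R ^ 2) =
        C * ((1 - Real.exp (-q * R)) / q / R + 1 / R) := by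
      have hd : ∀ y ∈ Set.uIcc (0:ℝ) R, HasDerivAt
          (fun y : ℝ => C * (- Real.exp (-q * y) / q / R + y / R ^ 2))
          (C * (Real.exp (-q * y) / R + 1 / R ^ 2)) y := by
        intro y _
        have h0 : HasDerivAt (fun y : ℝ => -q * y) (-q) y := by
          simpa using (hasDerivAt_id y).const_mul (-q)
        have := (((h0.exp.neg.div_const q).div_const R).add
          ((hasDerivAt_id y).div_const (R ^ 2))).const_mul C
        refine this.congr_deriv ?_
        field_simp
      rw [intervalIntegral.integral_eq_sub_of_hasDerivAt hd
        (Continuous.intervalIntegrable (by fun_prop) _ _)]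
      simp
      field_simp
      ring
    refine (intervalIntegral.norm_integral_le_of_norm_le hR.le
      (Eventually.of_forall h1) (Continuous.intervalIntegrable (by fun_prop) _ _)).trans ?_
    rw [hint, mul_div_assoc]
    gcongr
    rw [add_div]
    gcongr
    linarith [Real.exp_pos (-q * R)]
  have htop : ∀ R : ℝ, 0 < R → R0 ≤ R →
      ‖∫ x in (-R)..R, f ((x : ℂ) + R * I)‖ ≤ 2 * C * (Real.exp (-q * R) + 1 / R) := by
    intro R hR hR0
    have h1 : ∀ x ∈ Set.uIoc (-R) R, ‖f ((x : ℂ) + R * I)‖ ≤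
        C * (Real.exp (-q * R) / R + 1 / R ^ 2) := by
      intro x hx
      have hn : R ≤ ‖(x : ℂ) + R * I‖ := by
        have := Complex.abs_im_le_norm ((x : ℂ) + R * I)
        simp at this; rw [abs_of_pos hR] at this; exact this
      have := hb ((x : ℂ) + R * I) (by simpa using hR.le) (hR0.trans hn)
      have e : ((x : ℂ) + R * I).im = R := by simp
      rw [e] at this
      refine this.trans ?_
      gcongr
    refine (intervalIntegral.norm_integral_le_of_norm_le_const h1).trans (le_of_eq ?_)
    rw [abs_of_pos (by linarith)]
    field_simp
    ring
  have hbound : ∀ R : ℝ, 0 < R → R0 ≤ R → ‖∫ k in (-R)..R, f (k : ℂ)‖ ≤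
      2 * C * (Real.exp (-q * R) + 1 / R) + 2 * (C * (1 / q + 1) / R) := by
    intro R hR hR0
    have := integral_boundary_rect_eq_zero_of_differentiableOn f (((-R : ℝ)) : ℂ)
      ((R : ℂ) + R * I) (by
        intro z hz
        refine (hf z ?_).differentiableWithinAt
        have := hz.2
        simp [Set.uIcc_of_le hR.le] at this
        exact this.1)
    simp only [ofReal_re, ofReal_im, add_re, mul_re, I_re, I_im, mul_zero, mul_one,
      add_im, mul_im, zero_add, add_zero, sub_zero, ofReal_zero, zero_mul] at this
    have h2 := hside R hR hR0 R (abs_of_pos hR)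
    have h3 := hside R hR hR0 (-R) (by rw [abs_neg, abs_of_pos hR])
    have h4 := htop R hR hR0
    have e : ∫ k in (-R)..R, f (k : ℂ) = (∫ x in (-R)..R, f ((x : ℂ) + R * I))
       - I • (∫ y in (0:ℝ)..R, f ((R : ℂ) + y * I))
       + I • (∫ y in (0:ℝ)..R, f (((-R : ℝ) : ℂ) + y * I)) := by
      linear_combination this
    rw [e]
    refine (norm_add_le _ _).trans ?_
    refine (add_le_add_left (norm_sub_le _ _) _).trans ?_
    rw [norm_smul, norm_smul, norm_I]
    linarith
  refine squeeze_zero_norm' (a := fun R : ℝ =>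
    2 * C * (Real.exp (-q * R) + 1 / R) + 2 * (C * (1 / q + 1) / R)) ?_ ?_
  · filter_upwards [eventually_gt_atTop 0, eventually_ge_atTop R0] with R h1 h2
    exact hbound R h1 h2
  · have t1 : Tendsto (fun R : ℝ => Real.exp (-q * R)) atTop (nhds 0) :=
      Real.tendsto_exp_atBot.comp (tendsto_id.const_mul_atTop_of_neg (by linarith))
    have t2 : Tendsto (fun R : ℝ => 1 / R) atTop (nhds 0) := by
      simpa using tendsto_inv_atTop_zero (𝕜 := ℝ)
    have t3 : Tendsto (fun R : ℝ => C * (1 / q + 1) / R) atTop (nhds 0) :=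
      tendsto_const_nhds.div_atTop tendsto_id
    simpa using ((t1.add t2).const_mul (2 * C)).add (t3.const_mul 2)

lemma aux_ne (w : ℂ) (hw : w.im ≠ 0) (k : ℝ) : (k : ℂ) - w ≠ 0 := by
  intro h
  have := congrArg Complex.im h
  simp at this
  exact hw this

lemma aux_cauchy (w : ℂ) (hw : 0 < w.im) :
    Tendsto (fun R : ℝ => ∫ k in (-R)..R,
      (w - (starRingEnd ℂ) w) / (((k : ℂ) - (starRingEnd ℂ) w) * ((k : ℂ) - w)))
      atTop (nhds (2 * Real.pi * I)) := by
  have key : ∀ R : ℝ, ∫ k in (-R)..R,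
      (w - (starRingEnd ℂ) w) / (((k : ℂ) - (starRingEnd ℂ) w) * ((k : ℂ) - w)) =
      ((Real.arctan ((R - w.re) / w.im) - Real.arctan ((-R - w.re) / w.im) : ℝ) : ℂ)
        * (2 * I) := by
    intro R
    have h1 : ∀ k : ℝ,
        (w - (starRingEnd ℂ) w) / (((k : ℂ) - (starRingEnd ℂ) w) * ((k : ℂ) - w)) =
        ((1 / (1 + ((k - w.re) / w.im) ^ 2) * (1 / w.im) : ℝ) : ℂ) * (2 * I) := by
      intro k
      have e1 : w - (starRingEnd ℂ) w = 2 * I * w.im := by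
        apply Complex.ext <;> simp
        ring
      have e2 : ((k : ℂ) - (starRingEnd ℂ) w) * ((k : ℂ) - w) =
          (((k - w.re) ^ 2 + w.im ^ 2 : ℝ) : ℂ) := by
        apply Complex.ext <;> simp only [mul_re, mul_im, sub_re, sub_im, conj_re, conj_im, ofReal_re, ofReal_im] <;> ring
      rw [e1, e2]
      have h3 : (1 / (1 + ((k - w.re) / w.im) ^ 2) * (1 / w.im) : ℝ) =
        w.im / ((k - w.re) ^ 2 + w.im ^ 2) := by
        have : (k - w.re) ^ 2 + w.im ^ 2 ≠ 0 := by positivity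
        have : w.im ^ 2 + (k - w.re) ^ 2 ≠ 0 := by positivity
        field_simp
        try ring
      rw [h3]
      push_cast
      ring
    simp_rw [h1]
    rw [intervalIntegral.integral_mul_const, intervalIntegral.integral_ofReal]
    congr 2
    refine intervalIntegral.integral_eq_sub_of_hasDerivAt
      (f := fun k : ℝ => Real.arctan ((k - w.re) / w.im)) ?_ ?_
    · intro k _
      exact (((hasDerivAt_id k).sub_const w.re).div_const w.im).arctan
    · refine Continuous.intervalIntegrable ?_ _ _
      have : ∀ k : ℝ, 1 + ((k - w.re) / w.im) ^ 2 ≠ 0 := fun k => by positivity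
      fun_prop (disch := exact this _)
  simp_rw [key]
  have t1 : Tendsto (fun R : ℝ => Real.arctan ((R - w.re) / w.im)) atTop
      (nhds (Real.pi / 2)) := by
    refine (Real.tendsto_arctan_atTop.mono_right nhdsWithin_le_nhds).comp ?_
    exact (tendsto_atTop_add_const_right _ (-w.re) tendsto_id).atTop_div_const hw
  have t2 : Tendsto (fun R : ℝ => Real.arctan ((-R - w.re) / w.im)) atTop
      (nhds (-(Real.pi / 2))) := by
    refine (Real.tendsto_arctan_atBot.mono_right nhdsWithin_le_nhds).comp ?_
    exact (tendsto_atBot_add_const_right _ (-w.re) tendsto_neg_atTop_atBot).atBot_div_const hw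
  have t3 := ((Complex.continuous_ofReal.tendsto _).comp (t1.sub t2)).mul_const (2 * I)
  have e : (2 * Real.pi * I : ℂ) = ((Real.pi / 2 - -(Real.pi / 2) : ℝ) : ℂ) * (2 * I) := by
    push_cast
    ring
  rw [e]
  exact t3

lemma aux_half (w z : ℂ) (h : 2 * ‖w‖ + 1 ≤ ‖z‖) : ‖z‖ / 2 ≤ ‖z - w‖ := by
  have := norm_sub_norm_le z w
  linarith [norm_nonneg w]

lemma aux_exp (q : ℝ) (z : ℂ) : ‖Complex.exp (I * z * q)‖ = Real.exp (-q * z.im) := by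
  rw [Complex.norm_exp]
  congr 1
  simp
  ring

lemma aux_neg (w : ℂ) (hw : w.im < 0) (q : ℝ) (hq : 0 < q) :
    Tendsto (fun R : ℝ => ∫ k in (-R)..R, Complex.exp (I * (k : ℂ) * q) / ((k : ℂ) - w))
      atTop (nhds 0) := by
  refine aux_contour (fun z => Complex.exp (I * z * q) / (z - w)) 2 (2 * ‖w‖ + 1) q
    (by norm_num) hq ?_ ?_
  · intro z hz
    have : z - w ≠ 0 := by
      intro h
      rw [sub_eq_zero] at h
      rw [h] at hz
      linarith
    fun_prop (disch := exact this)
  · intro z hz hn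
    have h1 := aux_half w z hn
    have hp : 0 < ‖z‖ := by linarith [norm_nonneg w]
    rw [norm_div, aux_exp]
    calc Real.exp (-q * z.im) / ‖z - w‖ ≤ Real.exp (-q * z.im) / (‖z‖ / 2) := by gcongr
      _ = 2 * (Real.exp (-q * z.im) / ‖z‖ + 0) := by field_simp; try ring
      _ ≤ _ := by gcongr; positivity

lemma aux_pos (w : ℂ) (hw : 0 < w.im) (q : ℝ) (hq : 0 < q) :
    Tendsto (fun R : ℝ => ∫ k in (-R)..R, Complex.exp (I * (k : ℂ) * q) / ((k : ℂ) - w))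
      atTop (nhds (2 * Real.pi * I * Complex.exp (I * w * q))) := by
  set c := (starRingEnd ℂ) w with hc
  have hcim : c.im < 0 := by simp [hc, hw]
  have hcn : ‖c‖ = ‖w‖ := by simp [hc]
  set E := Complex.exp (I * w * q) with hE
  set N : ℂ → ℂ := fun z => Complex.exp (I * z * q) - E * ((w - c) / (z - c)) with hN
  have hzc : ∀ z : ℂ, 0 ≤ z.im → z - c ≠ 0 := by
    intro z hz h
    rw [sub_eq_zero] at h
    rw [h] at hz
    linarith
  have hNw : N w = 0 := by
    simp only [hN]
    rw [div_self (hzc w hw.le)]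
    simp [hE]
  have hNd : ∀ z : ℂ, z - c ≠ 0 → DifferentiableAt ℂ N z := by
    intro z this
    simp only [hN]
    fun_prop (disch := exact this)
  have hds : ∀ z, z ≠ w → dslope N w z = N z / (z - w) := by
    intro z h
    rw [dslope_of_ne _ h, slope_def_field, hNw, sub_zero]
  have h0 : Tendsto (fun R : ℝ => ∫ k in (-R)..R, dslope N w (k : ℂ)) atTop (nhds 0) := by
    refine aux_contour (dslope N w) (2 + 4 * (‖E‖ * ‖w - c‖)) (2 * ‖w‖ + 1) q
      (by positivity) hq ?_ ?_
    · have hopen : IsOpen {z : ℂ | z - c ≠ 0} := isOpen_ne_fun (by fun_prop) (by fun_prop)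
      have hD : DifferentiableOn ℂ (dslope N w) {z : ℂ | z - c ≠ 0} := by
        rw [Complex.differentiableOn_dslope (hopen.mem_nhds (hzc w hw.le))]
        intro z hz
        exact (hNd z hz).differentiableWithinAt
      intro z hz
      exact hD.differentiableAt (hopen.mem_nhds (hzc z hz))
    · intro z hz hn
      have h1 := aux_half w z hn
      have h2 := aux_half c z (by rw [hcn]; exact hn)
      have hp : 0 < ‖z‖ := by linarith [norm_nonneg w]
      have hne : z ≠ w := by
        rintro rfl
        linarith [norm_nonneg z]
      rw [hds z hne, norm_div]
      have hNn : ‖N z‖ ≤ Real.exp (-q * z.im) + ‖E‖ * (‖w - c‖ / (‖z‖ / 2)) := by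
        simp only [hN]
        refine (norm_sub_le _ _).trans ?_
        rw [aux_exp, norm_mul, norm_div]
        gcongr
      calc ‖N z‖ / ‖z - w‖
          ≤ (Real.exp (-q * z.im) + ‖E‖ * (‖w - c‖ / (‖z‖ / 2))) / (‖z‖ / 2) := by gcongr
        _ = 2 * (Real.exp (-q * z.im) / ‖z‖) + 4 * (‖E‖ * ‖w - c‖) * (1 / ‖z‖ ^ 2) := by
          field_simp; try ring
        _ ≤ _ := by
          have a1 : 0 ≤ Real.exp (-q * z.im) / ‖z‖ := by positivity
          have a2 : 0 ≤ 1 / ‖z‖ ^ 2 := by positivity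
          have a3 : 0 ≤ ‖E‖ * ‖w - c‖ := by positivity
          nlinarith [mul_nonneg a3 a1]
  have h1 := h0.add ((aux_cauchy w hw).const_mul E)
  have e : 2 * Real.pi * I * E = 0 + E * (2 * Real.pi * I) := by ring
  rw [e]
  refine h1.congr ?_
  intro R
  have hkw := aux_ne w hw.ne'
  have hkc := aux_ne c hcim.ne
  have hkne : ∀ k : ℝ, (k : ℂ) ≠ w := fun k => sub_ne_zero.mp (hkw k)
  rw [← intervalIntegral.integral_const_mul, ← intervalIntegral.integral_add]
  · refine intervalIntegral.integral_congr ?_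
    intro k _
    have := hkw k
    have := hkc k
    simp only []
    rw [hds _ (hkne k), ← hc]
    simp only [hN]
    field_simp
    try ring
  · refine Continuous.intervalIntegrable ?_ _ _
    simp_rw [hds _ (hkne _), hN]
    fun_prop (disch := first | exact hkw | exact hkc | exact hkw _ | exact hkc _)
  · refine Continuous.intervalIntegrable ?_ _ _
    rw [← hc]
    fun_prop (disch := exact fun k => mul_ne_zero (hkc k) (hkw k))

lemma aux_refl (w : ℂ) (q : ℝ) (R : ℝ) :
    ∫ k in (-R)..R, Complex.exp (I * (k : ℂ) * q) / ((k : ℂ) - w) =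
    - ∫ k in (-R)..R, Complex.exp (I * (k : ℂ) * ((-q : ℝ) : ℂ)) / ((k : ℂ) - (-w)) := by
  have := intervalIntegral.integral_comp_neg (a := -R) (b := R)
    (fun k : ℝ => Complex.exp (I * (k : ℂ) * q) / ((k : ℂ) - w))
  rw [neg_neg] at this
  rw [← this, ← intervalIntegral.integral_neg]
  refine intervalIntegral.integral_congr ?_
  intro k _
  simp only
  rw [← div_neg]
  push_cast
  congr 2 <;> ring

lemma aux_all (w : ℂ) (hw : w.im ≠ 0) (q : ℝ) (hq : q ≠ 0) :
    Tendsto (fun R : ℝ => ∫ k in (-R)..R, Complex.exp (I * (k : ℂ) * q) / ((k : ℂ) - w))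
      atTop (nhds (heav (q * w.im) * Real.sign q * (2 * Real.pi * I) *
        Complex.exp (I * w * q))) := by
  rcases lt_or_gt_of_ne hq with hq' | hq'
  · simp_rw [aux_refl w q]
    rcases lt_or_gt_of_ne hw with hw' | hw'
    · have := (aux_pos (-w) (by simpa using hw') (-q) (by linarith)).neg
      convert this using 2
      rw [heav, if_pos (mul_pos_of_neg_of_neg hq' hw'), Real.sign_of_neg hq']
      push_cast
      rw [show I * -w * -(q : ℂ) = I * w * q by ring]
      ring
    · have := (aux_neg (-w) (by simpa using hw') (-q) (by linarith)).neg
      convert this using 2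
      rw [heav, if_neg (by nlinarith)]
      simp
  · rcases lt_or_gt_of_ne hw with hw' | hw'
    · convert aux_neg w hw' q hq' using 2
      rw [heav, if_neg (by nlinarith)]
      simp
    · convert aux_pos w hw' q hq' using 2
      rw [heav, if_pos (mul_pos hq' hw'), Real.sign_of_pos hq']
      simp

/-- computation of the convolution kernel `g_z(q,p)` of the resolvent of
`L₀ = -i(p/m)∂_q`, as an improper symmetric integral. -/
theorem statement6 (m : ℝ) (hm : 0 < m) (z : ℂ) (hz : z.im ≠ 0) (q p : ℝ)
    (hq : q ≠ 0) (hp : p ≠ 0) :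
    Tendsto (fun R : ℝ =>
        (1 / (2 * (Real.pi : ℂ))) *
          ∫ k in (-R)..R, Complex.exp (Complex.I * (k : ℂ) * (q : ℂ)) /
            ((k : ℂ) * (p : ℂ) / (m : ℂ) - z))
      atTop
      (nhds (((heav (q * p * z.im) : ℝ) : ℂ) * ((Real.sign z.im : ℝ) : ℂ) *
        (Complex.I * (m : ℂ) / ((|p| : ℝ) : ℂ)) *
        Complex.exp (Complex.I * (m : ℂ) * z * (q : ℂ) / (p : ℂ)))) ∧
    (q * p * z.im < 0 →
      Tendsto (fun R : ℝ =>
          (1 / (2 * (Real.pi : ℂ))) *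
            ∫ k in (-R)..R, Complex.exp (Complex.I * (k : ℂ) * (q : ℂ)) /
              ((k : ℂ) * (p : ℂ) / (m : ℂ) - z))
        atTop (nhds 0)) := by
  have main : Tendsto (fun R : ℝ =>
        (1 / (2 * (Real.pi : ℂ))) *
          ∫ k in (-R)..R, Complex.exp (Complex.I * (k : ℂ) * (q : ℂ)) /
            ((k : ℂ) * (p : ℂ) / (m : ℂ) - z))
      atTop
      (nhds (((heav (q * p * z.im) : ℝ) : ℂ) * ((Real.sign z.im : ℝ) : ℂ) *
        (Complex.I * (m : ℂ) / ((|p| : ℝ) : ℂ)) *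
        Complex.exp (Complex.I * (m : ℂ) * z * (q : ℂ) / (p : ℂ)))) := by
    have hmC : (m : ℂ) ≠ 0 := by exact_mod_cast hm.ne'
    have hpC : (p : ℂ) ≠ 0 := by exact_mod_cast hp
    have hpi : (Real.pi : ℂ) ≠ 0 := by exact_mod_cast Real.pi_ne_zero
    set w : ℂ := ((m / p : ℝ) : ℂ) * z with hwdef
    have him : w.im = m / p * z.im := by simp [hwdef]
    have hw : w.im ≠ 0 := by
      rw [him]
      exact mul_ne_zero (div_ne_zero hm.ne' hp) hz
    have h := ((aux_all w hw q hq).const_mul ((m : ℂ) / p)).const_mul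
      (1 / (2 * (Real.pi : ℂ)))
    have hheav : heav (q * w.im) = heav (q * p * z.im) := by
      have : q * w.im = q * p * z.im * (m / p ^ 2) := by
        rw [him]; field_simp
      unfold heav
      rw [this]
      have hpos : 0 < m / p ^ 2 := by positivity
      simp only [mul_pos_iff_of_pos_right hpos]
    have hexp : I * w * q = I * m * z * q / p := by
      rw [hwdef]; push_cast; field_simp
    rw [hheav, hexp] at h
    have hL : ((heav (q * p * z.im) : ℝ) : ℂ) * ((Real.sign z.im : ℝ) : ℂ) *
        (Complex.I * (m : ℂ) / ((|p| : ℝ) : ℂ)) *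
        Complex.exp (Complex.I * (m : ℂ) * z * (q : ℂ) / (p : ℂ)) =
        1 / (2 * (Real.pi : ℂ)) * ((m : ℂ) / p * (heav (q * p * z.im) * Real.sign q *
          (2 * Real.pi * I) * Complex.exp (I * m * z * q / p))) := by
      by_cases hpos : 0 < q * p * z.im
      · have hs : Real.sign z.im / |p| = Real.sign q / p := by
          rcases lt_or_gt_of_ne hq with h1 | h1 <;> rcases lt_or_gt_of_ne hp with h2 | h2 <;>
          rcases lt_or_gt_of_ne hz with h3 | h3 <;>
          first
          | (exfalso
             have := mul_pos_of_neg_of_neg h1 h2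
             nlinarith)
          | (exfalso
             have := mul_neg_of_neg_of_pos h1 h2
             nlinarith)
          | (exfalso
             have := mul_neg_of_pos_of_neg h1 h2
             nlinarith)
          | (exfalso
             have := mul_pos h1 h2
             nlinarith)
          | simp [Real.sign_of_neg, Real.sign_of_pos, abs_of_neg, abs_of_pos, h1, h2, h3, div_neg, neg_div]
        have hs' : ((Real.sign z.im : ℝ) : ℂ) / ((|p| : ℝ) : ℂ) =
            ((Real.sign q : ℝ) : ℂ) / (p : ℂ) := by exact_mod_cast hs
        calc _ = ((heav (q * p * z.im) : ℝ) : ℂ) *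
              (((Real.sign z.im : ℝ) : ℂ) / ((|p| : ℝ) : ℂ)) * (I * m) *
              Complex.exp (Complex.I * (m : ℂ) * z * (q : ℂ) / (p : ℂ)) := by ring
          _ = _ := by
            rw [hs']
            field_simp
      · have : heav (q * p * z.im) = 0 := by rw [heav, if_neg hpos]
        rw [this]
        simp
    rw [hL]
    refine h.congr ?_
    intro R
    congr 1
    rw [← intervalIntegral.integral_const_mul]
    refine intervalIntegral.integral_congr ?_
    intro k _
    have hkw := aux_ne w hw k
    have e : (k : ℂ) * p / m - z = ((k : ℂ) - w) * (p / m) := by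
      rw [hwdef]; push_cast; field_simp
    simp only
    rw [e]
    field_simp
  refine ⟨main, fun hneg => ?_⟩
  have : heav (q * p * z.im) = 0 := by rw [heav, if_neg hneg.not_gt]
  rw [this] at main
  simpa using main
end
end

section
/- Let m>0 and β∈ℝ\{0}. Define bounded linear operators on L²(ℝ²) by (W_β^±f)(q,p) := f(q,p) − θ(∓qp)·(1 ± 2i|p|/(mβ))⁻¹·f_ev(q,p), where f_ev(q,p) := f(q,p)+f(−q,−p). Then the classical scattering operator S^cl_β := (W_β^+)^* ∘ W_β^− (Hilbert adjoint in L²(ℝ²)) is given explicitly by (S^cl_β f)(q,p) = f(q,p) − (1 − 2i|p|/(mβ))⁻¹ · f_ev(q,p) for almost every (q,p)∈ℝ². -/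
open MeasureTheory Complex Filter

noncomputable section

/-- Classical wave operators `W_β^±`; `s = 1` gives `W_β^+`, `s = -1` gives `W_β^-`. -/
def Wcl (m β s : ℝ) (f : ℝ × ℝ → ℂ) : ℝ × ℝ → ℂ := fun z =>
  f z - ((heav (-(s * z.1 * z.2)) : ℝ) : ℂ) *
    (1 + (s : ℂ) * 2 * Complex.I * ((|z.2| : ℝ) : ℂ) / ((m : ℂ) * (β : ℂ)))⁻¹ *
    (f z + f (-z.1, -z.2))

theorem s9_ae_ne : ∀ᵐ z : ℝ × ℝ, z.1 * z.2 ≠ 0 := by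
  have h1 : ∀ᵐ z : ℝ × ℝ, z.1 ≠ 0 :=
    Measure.quasiMeasurePreserving_fst.ae (p := fun x : ℝ => x ≠ 0) (Measure.ae_ne volume 0)
  have h2 : ∀ᵐ z : ℝ × ℝ, z.2 ≠ 0 :=
    Measure.quasiMeasurePreserving_snd.ae (p := fun x : ℝ => x ≠ 0) (Measure.ae_ne volume 0)
  filter_upwards [h1, h2] with z a b
  exact mul_ne_zero a b

theorem s9_den (m β p : ℝ) :
    ‖(1 - 2 * Complex.I * ((|p| : ℝ) : ℂ) / ((m : ℂ) * (β : ℂ)))⁻¹‖ ≤ 1 := by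
  rw [norm_inv]
  apply inv_le_one_of_one_le₀
  refine le_trans ?_ (Complex.abs_re_le_norm _)
  have : (1 - 2 * Complex.I * ((|p| : ℝ) : ℂ) / ((m : ℂ) * (β : ℂ)))
      = ((1 : ℝ) : ℂ) + ((-(2 * |p| / (m * β)) : ℝ) : ℂ) * Complex.I := by
    push_cast; ring
  rw [this]
  simp only [Complex.add_re, Complex.re_ofReal_mul, Complex.ofReal_re, Complex.I_re]
  simp

theorem s9_conj (m β p : ℝ) :
    (starRingEnd ℂ) ((1 - 2 * Complex.I * ((|p| : ℝ) : ℂ) / ((m : ℂ) * (β : ℂ)))⁻¹)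
      = (1 + 2 * Complex.I * ((|p| : ℝ) : ℂ) / ((m : ℂ) * (β : ℂ)))⁻¹ := by
  simp only [map_inv₀, map_sub, map_one, map_div₀, map_mul, Complex.conj_I, Complex.conj_ofReal,
    map_ofNat]
  congr 1
  ring

theorem s9_mem (m β : ℝ) (f : ℝ × ℝ → ℂ) (hf : MemLp f 2 (volume : Measure (ℝ × ℝ))) :
    MemLp (fun z : ℝ × ℝ => f z -
          (1 - 2 * Complex.I * ((|z.2| : ℝ) : ℂ) / ((m : ℂ) * (β : ℂ)))⁻¹ *
            (f z + f (-z.1, -z.2))) 2 (volume : Measure (ℝ × ℝ)) := by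
  have hR : MemLp (fun z : ℝ × ℝ => f (-z.1, -z.2)) 2 (volume : Measure (ℝ × ℝ)) :=
    hf.comp_measurePreserving (Measure.measurePreserving_neg (volume : Measure (ℝ × ℝ)))
  have hF := hf.add hR
  refine hf.sub (hF.of_le (AEStronglyMeasurable.mul ?_ hF.1) (Eventually.of_forall fun z => ?_))
  · apply Measurable.aestronglyMeasurable
    fun_prop
  · rw [norm_mul]
    exact mul_le_of_le_one_left (norm_nonneg _) (s9_den m β z.2)

/-- the classical scattering operator `S^cl_β = (W_β^+)^* ∘ W_β^-` (with the
Hilbert adjoint in `L²(ℝ²)`) is given by `(S^cl_β f)(q,p) = f(q,p) − (1−2i|p|/(mβ))⁻¹ f_ev(q,p)`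
almost everywhere. -/
theorem statement9 (m β : ℝ) (hm : 0 < m) (hβ : β ≠ 0)
    (Wp Wm : Lp ℂ 2 (volume : Measure (ℝ × ℝ)) →L[ℂ] Lp ℂ 2 (volume : Measure (ℝ × ℝ)))
    (hWp : ∀ (f : ℝ × ℝ → ℂ) (fL : Lp ℂ 2 (volume : Measure (ℝ × ℝ))),
      (fL : ℝ × ℝ → ℂ) =ᵐ[(volume : Measure (ℝ × ℝ))] f →
      (Wp fL : ℝ × ℝ → ℂ) =ᵐ[(volume : Measure (ℝ × ℝ))] Wcl m β 1 f)
    (hWm : ∀ (f : ℝ × ℝ → ℂ) (fL : Lp ℂ 2 (volume : Measure (ℝ × ℝ))),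
      (fL : ℝ × ℝ → ℂ) =ᵐ[(volume : Measure (ℝ × ℝ))] f →
      (Wm fL : ℝ × ℝ → ℂ) =ᵐ[(volume : Measure (ℝ × ℝ))] Wcl m β (-1) f) :
    ∀ (f : ℝ × ℝ → ℂ) (fL : Lp ℂ 2 (volume : Measure (ℝ × ℝ))),
      (fL : ℝ × ℝ → ℂ) =ᵐ[(volume : Measure (ℝ × ℝ))] f →
      (ContinuousLinearMap.adjoint Wp (Wm fL) : ℝ × ℝ → ℂ) =ᵐ[(volume : Measure (ℝ × ℝ))]
        fun z => f z -
          (1 - 2 * Complex.I * ((|z.2| : ℝ) : ℂ) / ((m : ℂ) * (β : ℂ)))⁻¹ *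
            (f z + f (-z.1, -z.2)) := by
  intro f fL hf
  have hfm : MemLp f 2 (volume : Measure (ℝ × ℝ)) := (memLp_congr_ae hf).1 (Lp.memLp fL)
  have hm' := s9_mem m β f hfm
  have key : ContinuousLinearMap.adjoint Wp (Wm fL) = hm'.toLp _ := by
    refine ext_inner_right ℂ fun u => ?_
    rw [ContinuousLinearMap.adjoint_inner_left, ← sub_eq_zero, L2.inner_def, L2.inner_def,
      ← integral_sub (L2.integrable_inner _ _) (L2.integrable_inner _ _)]
    let D : ℝ × ℝ → ℂ := fun z => ((heav (-(z.1 * z.2)) : ℝ) : ℂ) *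
      (1 + 2 * Complex.I * ((|z.2| : ℝ) : ℂ) / ((m : ℂ) * (β : ℂ)))⁻¹ *
      ((starRingEnd ℂ) (f (-z)) * u z - (starRingEnd ℂ) (f z) * u (-z))
    have hD : ∀ z, D (-z) = - D z := by
      intro z
      simp only [D, Prod.fst_neg, Prod.snd_neg, neg_mul_neg, abs_neg, neg_neg]
      ring
    have h0 : ∫ z, D z = 0 := by
      have h1 : ∫ z, D (-z) = ∫ z, D z := integral_neg_eq_self D volume
      simp only [hD, integral_neg] at h1
      exact self_eq_neg.1 h1.symm
    rw [← h0]
    apply integral_congr_ae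
    filter_upwards [hWm f fL hf, hWp u u (EventuallyEq.refl _ _), hm'.coeFn_toLp, s9_ae_ne]
      with z h1 h2 h3 h4
    rw [h1, h2, h3]
    have hz : ((-z.1, -z.2) : ℝ × ℝ) = -z := rfl
    simp only [Wcl, D, hz, RCLike.inner_apply]
    have e1 : (1 + ((-1 : ℝ) : ℂ) * 2 * Complex.I * ((|z.2| : ℝ) : ℂ) / ((m : ℂ) * (β : ℂ)))
        = 1 - 2 * Complex.I * ((|z.2| : ℝ) : ℂ) / ((m : ℂ) * (β : ℂ)) := by
      push_cast; ring
    have e2 : (1 + ((1 : ℝ) : ℂ) * 2 * Complex.I * ((|z.2| : ℝ) : ℂ) / ((m : ℂ) * (β : ℂ)))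
        = 1 + 2 * Complex.I * ((|z.2| : ℝ) : ℂ) / ((m : ℂ) * (β : ℂ)) := by
      push_cast; ring
    rw [e1, e2]
    simp only [map_sub, map_mul, map_add, s9_conj, Complex.conj_ofReal]
    rcases lt_or_gt_of_ne h4 with h | h
    · have a1 : heav (-(-1 * z.1 * z.2)) = 0 := by
        rw [heav, if_neg]; linarith
      have a2 : heav (-(1 * z.1 * z.2)) = 1 := by
        rw [heav, if_pos]; linarith
      have a3 : heav (-(z.1 * z.2)) = 1 := by
        rw [heav, if_pos]; linarith
      rw [a1, a2, a3]
      push_cast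
      ring
    · have a1 : heav (-(-1 * z.1 * z.2)) = 1 := by
        rw [heav, if_pos]; linarith
      have a2 : heav (-(1 * z.1 * z.2)) = 0 := by
        rw [heav, if_neg]; linarith
      have a3 : heav (-(z.1 * z.2)) = 0 := by
        rw [heav, if_neg]; linarith
      rw [a1, a2, a3]
      push_cast
      ring
  rw [key]
  exact hm'.coeFn_toLp
end
end

section
/- Let m>0 and β∈ℝ\{0}. The bounded operators W_β^± on L²(ℝ²) defined by (W_β^±f)(q,p) := f(q,p) − θ(∓qp)·(1 ± 2i|p|/(mβ))⁻¹·f_ev(q,p), with f_ev(q,p) := f(q,p)+f(−q,−p), are unitary: for every f∈L²(ℝ²), W_β^±((W_β^±)^*f) = f and (W_β^±)^*(W_β^±f) = f, where (·)^* denotes the Hilbert adjoint in L²(ℝ²). Moreover W_β^+∘W_β^− = W_β^−∘W_β^+. -/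
open MeasureTheory Complex Filter

noncomputable section

/-- The multiplier in the wave operator. -/
def kfun (m β s : ℝ) (z : ℝ × ℝ) : ℂ :=
  ((heav (-(s * z.1 * z.2)) : ℝ) : ℂ) *
    (1 + (s : ℂ) * 2 * Complex.I * ((|z.2| : ℝ) : ℂ) / ((m : ℂ) * (β : ℂ)))⁻¹

lemma Wcl_eq (m β s : ℝ) (f : ℝ × ℝ → ℂ) (z : ℝ × ℝ) :
    Wcl m β s f z = f z - kfun m β s z * (f z + f (-z)) := rfl

lemma kfun_neg (m β s : ℝ) (z : ℝ × ℝ) : kfun m β s (-z) = kfun m β s z := by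
  simp [kfun]

lemma cden_eq (m β s p : ℝ) :
    (1 + (s : ℂ) * 2 * Complex.I * ((p : ℝ) : ℂ) / ((m : ℂ) * (β : ℂ)))
      = ⟨1, s * 2 * p / (m * β)⟩ := by
  have : (s : ℂ) * 2 * Complex.I * ((p : ℝ) : ℂ) / ((m : ℂ) * (β : ℂ))
      = ((s * 2 * p / (m * β) : ℝ) : ℂ) * Complex.I := by
    push_cast; ring
  rw [this]
  generalize s * 2 * p / (m * β) = x
  apply Complex.ext <;> simp

lemma kfun_re (m β s : ℝ) (z : ℝ × ℝ) :
    (kfun m β s z).re = (kfun m β s z).re ^ 2 + (kfun m β s z).im ^ 2 := by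
  unfold kfun
  rw [cden_eq]
  generalize s * 2 * |z.2| / (m * β) = x
  have hx : (1 + x * x) ≠ 0 := by nlinarith [mul_self_nonneg x]
  unfold heav
  split_ifs
  · simp [Complex.inv_re, Complex.inv_im, Complex.normSq_mk]
    field_simp
  · simp

lemma kfun_conj (m β s : ℝ) (z : ℝ × ℝ) :
    kfun m (-β) s z = (starRingEnd ℂ) (kfun m β s z) := by
  unfold kfun
  rw [cden_eq, cden_eq, map_mul, map_inv₀, Complex.conj_ofReal]
  congr 2
  apply Complex.ext <;> simp [div_neg]

lemma kfun_meas (m β s : ℝ) : Measurable (kfun m β s) := by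
  have h : Measurable heav := by
    unfold heav
    exact Measurable.ite measurableSet_Ioi measurable_const measurable_const
  have h1 : Measurable fun z : ℝ × ℝ => heav (-(s * z.1 * z.2)) := h.comp (by fun_prop)
  have h2 : Measurable fun z : ℝ × ℝ => |z.2| := measurable_snd.abs
  unfold kfun
  refine (Complex.measurable_ofReal.comp h1).mul (Measurable.inv ?_)
  exact measurable_const.add (((Complex.measurable_ofReal.comp h2).const_mul _).div_const _)

lemma kfun_norm (m β s : ℝ) (z : ℝ × ℝ) : ‖kfun m β s z‖ ≤ 1 := by
  have h := kfun_re m β s z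
  have h2 := Complex.sq_norm (kfun m β s z)
  rw [Complex.normSq_apply] at h2
  have h3 := Complex.re_le_norm (kfun m β s z)
  nlinarith [norm_nonneg (kfun m β s z)]

lemma Wcl_normsq (m β s : ℝ) (f : ℝ × ℝ → ℂ) (z : ℝ × ℝ) :
    ‖Wcl m β s f z‖ ^ 2 + ‖Wcl m β s f (-z)‖ ^ 2 = ‖f z‖ ^ 2 + ‖f (-z)‖ ^ 2 := by
  have h := kfun_re m β s z
  rw [Wcl_eq, Wcl_eq, kfun_neg, neg_neg]
  generalize kfun m β s z = k at *
  generalize f z = a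
  generalize f (-z) = b
  simp only [Complex.sq_norm, Complex.normSq_apply, Complex.sub_re, Complex.sub_im,
    Complex.mul_re, Complex.mul_im, Complex.add_re, Complex.add_im]
  linear_combination (-2 * ((a.re + b.re) ^ 2 + (a.im + b.im) ^ 2)) * h

lemma Wcl_inv (m β s : ℝ) (f : ℝ × ℝ → ℂ) : Wcl m β s (Wcl m (-β) s f) = f := by
  funext z
  have h := kfun_re m β s z
  simp only [Wcl_eq, kfun_neg, neg_neg, kfun_conj]
  have h2 : kfun m β s z + (starRingEnd ℂ) (kfun m β s z)
      = 2 * (kfun m β s z * (starRingEnd ℂ) (kfun m β s z)) := by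
    rw [Complex.add_conj, Complex.mul_conj, Complex.normSq_apply]
    push_cast
    have h' := congrArg (fun x : ℝ => (x : ℂ)) h
    push_cast at h'
    linear_combination 2 * h'
  linear_combination (-(f z + f (-z))) * h2

lemma Wcl_comm (m β s t : ℝ) (f : ℝ × ℝ → ℂ) :
    Wcl m β s (Wcl m β t f) = Wcl m β t (Wcl m β s f) := by
  funext z
  simp only [Wcl_eq, kfun_neg, neg_neg]
  ring

lemma mp_neg : MeasurePreserving (fun z : ℝ × ℝ => -z) volume volume :=
  Measure.measurePreserving_neg _

lemma Wcl_memLp (m β s : ℝ) (f : ℝ × ℝ → ℂ) (hf : MemLp f 2 volume) :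
    MemLp (Wcl m β s f) 2 volume := by
  have h1 : MemLp (fun z => f z + f (-z)) 2 volume :=
    hf.add (hf.comp_measurePreserving mp_neg)
  have h2 : MemLp (fun z => kfun m β s z * (f z + f (-z))) 2 volume := by
    refine h1.of_le ((kfun_meas m β s).aestronglyMeasurable.mul h1.1) (ae_of_all _ fun z => ?_)
    rw [norm_mul]
    exact mul_le_of_le_one_left (norm_nonneg _) (kfun_norm m β s z)
  exact hf.sub h2

lemma normsq_eq (f : Lp ℂ 2 (volume : Measure (ℝ × ℝ))) :
    2 * ‖f‖ ^ 2 = ∫ z, (‖f z‖ ^ 2 + ‖f (-z)‖ ^ 2) := by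
  have hi : Integrable (fun z => ‖f z‖ ^ 2) (volume : Measure (ℝ × ℝ)) :=
    (Lp.memLp f).integrable_norm_pow (by norm_num)
  have hi2 : Integrable (fun z => ‖f (-z)‖ ^ 2) (volume : Measure (ℝ × ℝ)) :=
    hi.comp_neg
  have h : ‖f‖ ^ 2 = ∫ z, ‖f z‖ ^ 2 := by
    have := L2.inner_def (𝕜 := ℂ) f f
    rw [inner_self_eq_norm_sq_to_K] at this
    simp only [inner_self_eq_norm_sq_to_K] at this
    have e : ∀ z, ((‖f z‖ : ℂ)) ^ 2 = ((‖f z‖ ^ 2 : ℝ) : ℂ) := fun z => by push_cast; rfl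
    have e2 : ((‖f‖ ^ 2 : ℝ) : ℂ) = ((∫ z, ‖f z‖ ^ 2 : ℝ) : ℂ) := by
      rw [← integral_complex_ofReal]
      push_cast
      exact this
    exact_mod_cast e2
  rw [integral_add hi hi2, integral_neg_eq_self (fun z => ‖f z‖ ^ 2) volume, h]
  ring

lemma W_unitary (m β s : ℝ)
    (W : Lp ℂ 2 (volume : Measure (ℝ × ℝ)) →L[ℂ] Lp ℂ 2 (volume : Measure (ℝ × ℝ)))
    (hW : ∀ (f : ℝ × ℝ → ℂ) (fL : Lp ℂ 2 (volume : Measure (ℝ × ℝ))),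
      (fL : ℝ × ℝ → ℂ) =ᵐ[(volume : Measure (ℝ × ℝ))] f →
      (W fL : ℝ × ℝ → ℂ) =ᵐ[(volume : Measure (ℝ × ℝ))] Wcl m β s f)
    (f : Lp ℂ 2 (volume : Measure (ℝ × ℝ))) :
    W (ContinuousLinearMap.adjoint W f) = f ∧ ContinuousLinearMap.adjoint W (W f) = f := by
  have hn : ∀ g, ‖W g‖ = ‖g‖ := by
    intro g
    have h : 2 * ‖W g‖ ^ 2 = 2 * ‖g‖ ^ 2 := by
      rw [normsq_eq, normsq_eq]
      apply integral_congr_ae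
      have h1 := hW g g (ae_eq_refl _)
      have h2 := mp_neg.quasiMeasurePreserving.ae_eq_comp h1
      filter_upwards [h1, h2] with z e1 e2
      simp only [Function.comp_apply] at e2
      rw [e1, e2, Wcl_normsq]
    have h' : ‖W g‖ ^ 2 = ‖g‖ ^ 2 := by linarith
    exact (sq_eq_sq₀ (norm_nonneg _) (norm_nonneg _)).1 h'
  have hadj : ∀ g, ContinuousLinearMap.adjoint W (W g) = g := by
    have := (ContinuousLinearMap.norm_map_iff_adjoint_comp_self W).1 hn
    intro g
    exact congrArg (fun T => T g) this
  refine ⟨?_, hadj f⟩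
  have hm := Wcl_memLp m (-β) s f (Lp.memLp f)
  have hs : W hm.toLp = f := by
    apply Lp.ext
    have := hW _ _ hm.coeFn_toLp
    rwa [Wcl_inv] at this
  rw [← hs, hadj]

/-- the classical wave operators `W_β^±` are unitary on `L²(ℝ²)`
(`W_β^±(W_β^±)^* = (W_β^±)^*W_β^± = id`, with the Hilbert adjoint), and they commute:
`W_β^+ ∘ W_β^- = W_β^- ∘ W_β^+`. -/
theorem statement10 (m β : ℝ) (hm : 0 < m) (hβ : β ≠ 0)
    (Wp Wm : Lp ℂ 2 (volume : Measure (ℝ × ℝ)) →L[ℂ] Lp ℂ 2 (volume : Measure (ℝ × ℝ)))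
    (hWp : ∀ (f : ℝ × ℝ → ℂ) (fL : Lp ℂ 2 (volume : Measure (ℝ × ℝ))),
      (fL : ℝ × ℝ → ℂ) =ᵐ[(volume : Measure (ℝ × ℝ))] f →
      (Wp fL : ℝ × ℝ → ℂ) =ᵐ[(volume : Measure (ℝ × ℝ))] Wcl m β 1 f)
    (hWm : ∀ (f : ℝ × ℝ → ℂ) (fL : Lp ℂ 2 (volume : Measure (ℝ × ℝ))),
      (fL : ℝ × ℝ → ℂ) =ᵐ[(volume : Measure (ℝ × ℝ))] f →
      (Wm fL : ℝ × ℝ → ℂ) =ᵐ[(volume : Measure (ℝ × ℝ))] Wcl m β (-1) f) :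
    (∀ f : Lp ℂ 2 (volume : Measure (ℝ × ℝ)),
      Wp (ContinuousLinearMap.adjoint Wp f) = f ∧ ContinuousLinearMap.adjoint Wp (Wp f) = f) ∧
    (∀ f : Lp ℂ 2 (volume : Measure (ℝ × ℝ)),
      Wm (ContinuousLinearMap.adjoint Wm f) = f ∧ ContinuousLinearMap.adjoint Wm (Wm f) = f) ∧
    (∀ f : Lp ℂ 2 (volume : Measure (ℝ × ℝ)), Wp (Wm f) = Wm (Wp f)) := by
  refine ⟨W_unitary m β 1 Wp hWp, W_unitary m β (-1) Wm hWm, fun f => ?_⟩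
  apply Lp.ext
  have h1 := hWp _ _ (hWm f f (ae_eq_refl _))
  have h2 := hWm _ _ (hWp f f (ae_eq_refl _))
  rw [Wcl_comm] at h1
  exact h1.trans h2.symm
end
end

section
/- Fix ℏ>0, m>0, t∈ℝ. Let (q,p)∈ℝ² and σ,σ̆∈ℂ with Re σ>0, Re σ̆>0 and Re(conj(σ)·σ̆)=1. Then the free Schrödinger evolution of the coherent state ψ^ℏ(σ,σ̆,q,p;·), defined as the inverse Fourier transform of k ↦ e^{−iℏtk²/(2m)}·ψ̂^ℏ(σ,σ̆,q,p;k), equals e^{(i/ℏ)A_t}·ψ^ℏ(σ_t, σ̆, q_t, p; ·) pointwise, where A_t := p²t/(2m), σ_t := σ + iσ̆t/(2m), and q_t := q + pt/m. -/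
open MeasureTheory Complex Filter

lemma aux_mul_cpow {a b : ℂ} (ha : 0 < a.re) (hb : 0 < b.re) (c : ℂ) :
    (a * b) ^ c = a ^ c * b ^ c := by
  have ha0 : a ≠ 0 := by rintro rfl; simp at ha
  have hb0 : b ≠ 0 := by rintro rfl; simp at hb
  have h1 := abs_lt.mp (Complex.abs_arg_lt_pi_div_two_iff.mpr (Or.inl ha))
  have h2 := abs_lt.mp (Complex.abs_arg_lt_pi_div_two_iff.mpr (Or.inl hb))
  have hl : Complex.log (a * b) = Complex.log a + Complex.log b :=
    Complex.log_mul (x := a) (y := b) ha0 hb0 (by constructor <;> linarith [h1.1, h1.2, h2.1, h2.2])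
  rw [Complex.cpow_def_of_ne_zero (mul_ne_zero ha0 hb0), Complex.cpow_def_of_ne_zero ha0,
    Complex.cpow_def_of_ne_zero hb0, hl, add_mul, Complex.exp_add]

lemma aux_inv_cpow {a : ℂ} (ha : 0 < a.re) (c : ℂ) : (a⁻¹) ^ c = (a ^ c)⁻¹ := by
  apply Complex.inv_cpow
  have h1 := abs_lt.mp (Complex.abs_arg_lt_pi_div_two_iff.mpr (Or.inl ha))
  linarith [h1.2, Real.pi_pos]

lemma aux_inv_re {a : ℂ} (ha : 0 < a.re) : 0 < (a⁻¹).re := by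
  have ha0 : a ≠ 0 := by rintro rfl; simp at ha
  rw [Complex.inv_re]
  exact div_pos ha (Complex.normSq_pos.mpr ha0)

lemma aux_scale_re {a : ℂ} (ha : 0 < a.re) {r : ℝ} (hr : 0 < r) : 0 < ((r : ℂ) * a).re := by
  rw [Complex.re_ofReal_mul]; positivity

lemma aux_ft (ℏ : ℝ) (hℏ : 0 < ℏ) (q p : ℝ) (w σ' : ℂ) (hw : 0 < w.re) (hσ' : σ' ≠ 0) (k : ℝ) :
    ft (fun y => coh ℏ (w * σ') σ' q p y) k =
      ((((Real.sqrt (2 * Real.pi))⁻¹ : ℝ) : ℂ) *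
        (((2 * Real.pi * ℏ : ℝ) : ℂ) ^ (-(1/4 : ℂ)) * (w * σ') ^ (-(1/2 : ℂ))) *
        ((4 * Real.pi * ℏ : ℝ) * w) ^ (1 / 2 : ℂ)) *
        Complex.exp (-(Complex.I * k * q) - ℏ * w * (k - p / ℏ) ^ 2) := by
  have hw0 : w ≠ 0 := by rintro rfl; simp at hw
  have hh : (ℏ : ℂ) ≠ 0 := by exact_mod_cast hℏ.ne'
  have hb : (-(((4 * ℏ)⁻¹ : ℝ) * w⁻¹) : ℂ).re < 0 := by
    rw [Complex.neg_re, neg_lt_zero]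
    exact aux_scale_re (aux_inv_re hw) (by positivity)
  have key := integral_cexp_quadratic hb
    (2 * (((4 * ℏ)⁻¹ : ℝ) * w⁻¹) * q + Complex.I * p / ℏ - Complex.I * k)
    (-(((4 * ℏ)⁻¹ : ℝ) * w⁻¹) * q ^ 2 - Complex.I * p * q / ℏ)
  have e1 : ((Real.pi : ℂ) / - -(((4 * ℏ)⁻¹ : ℝ) * w⁻¹)) = (4 * Real.pi * ℏ : ℝ) * w := by
    push_cast; field_simp
  rw [e1] at key
  unfold ft coh
  have : ∀ y : ℝ, Complex.exp (-(Complex.I) * (k : ℂ) * (y : ℂ)) *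
      (((2 * Real.pi * ℏ : ℝ) : ℂ) ^ (-(1/4 : ℂ)) * (w * σ') ^ (-(1/2 : ℂ)) *
    Complex.exp (-(σ' * ((y : ℂ) - (q : ℂ)) ^ 2) / (4 * (ℏ : ℂ) * (w * σ')) +
      Complex.I * (p : ℂ) * ((y : ℂ) - (q : ℂ)) / (ℏ : ℂ))) =
      (((2 * Real.pi * ℏ : ℝ) : ℂ) ^ (-(1/4 : ℂ)) * (w * σ') ^ (-(1/2 : ℂ))) *
      Complex.exp (-(((4 * ℏ)⁻¹ : ℝ) * w⁻¹) * (y : ℂ) ^ 2 +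
        (2 * (((4 * ℏ)⁻¹ : ℝ) * w⁻¹) * q + Complex.I * p / ℏ - Complex.I * k) * y +
        (-(((4 * ℏ)⁻¹ : ℝ) * w⁻¹) * q ^ 2 - Complex.I * p * q / ℏ)) := by
    intro y
    rw [mul_left_comm, ← Complex.exp_add]
    congr 2
    push_cast
    field_simp
    ring
  rw [integral_congr_ae (Filter.Eventually.of_forall this)]
  have hexp : (-(((4 * ℏ)⁻¹ : ℝ) * w⁻¹) * (q : ℂ) ^ 2 - Complex.I * p * q / ℏ -
      (2 * (((4 * ℏ)⁻¹ : ℝ) * w⁻¹) * q + Complex.I * p / ℏ - Complex.I * k) ^ 2 /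
        (4 * -(((4 * ℏ)⁻¹ : ℝ) * w⁻¹))) =
      -(Complex.I * k * q) - ℏ * w * (k - p / ℏ) ^ 2 := by
    push_cast
    field_simp
    ring_nf
    simp only [Complex.I_sq]
    ring
  rw [integral_const_mul, key, hexp]
  ring

lemma aux_const (ℏ : ℝ) (hℏ : 0 < ℏ) (w s σ' : ℂ) (hw : 0 < w.re) (hs : 0 < s.re)
    (hσ' : 0 < σ'.re) :
    (((Real.sqrt (2 * Real.pi))⁻¹ : ℝ) : ℂ) * ((((Real.sqrt (2 * Real.pi))⁻¹ : ℝ) : ℂ) *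
      (w * σ') ^ (-(1/2 : ℂ)) * ((4 * Real.pi * ℏ : ℝ) * w) ^ (1 / 2 : ℂ) *
      ((Real.pi / ℏ : ℝ) * s⁻¹) ^ (1 / 2 : ℂ)) = (s * σ') ^ (-(1/2 : ℂ)) := by
  have hpi := Real.pi_pos
  have hw0 : w ≠ 0 := by rintro rfl; simp at hw
  rw [aux_mul_cpow hw hσ', aux_mul_cpow hs hσ',
    aux_mul_cpow (a := ((4 * Real.pi * ℏ : ℝ) : ℂ)) (by rw [Complex.ofReal_re]; positivity) hw,
    aux_mul_cpow (a := ((Real.pi / ℏ : ℝ) : ℂ)) (by rw [Complex.ofReal_re]; positivity)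
      (aux_inv_re hs), aux_inv_cpow hs, Complex.cpow_neg w, Complex.cpow_neg s]
  have hwc : w ^ (1/2 : ℂ) ≠ 0 := by simp [Complex.cpow_eq_zero_iff, hw0]
  have e : ((4 * Real.pi * ℏ : ℝ) : ℂ) ^ (1 / 2 : ℂ) * ((Real.pi / ℏ : ℝ) : ℂ) ^ (1 / 2 : ℂ)
      = ((2 * Real.pi : ℝ) : ℂ) := by
    rw [← aux_mul_cpow (by rw [Complex.ofReal_re]; positivity)
      (by rw [Complex.ofReal_re]; positivity), ← Complex.ofReal_mul]
    have : (4 * Real.pi * ℏ) * (Real.pi / ℏ) = (2 * Real.pi) ^ 2 := by field_simp; ring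
    rw [this, show (1 / 2 : ℂ) = ((1 / 2 : ℝ) : ℂ) by push_cast; rfl,
      ← Complex.ofReal_cpow (by positivity), ← Real.sqrt_eq_rpow, Real.sqrt_sq (by positivity)]
  have e2 : (((Real.sqrt (2 * Real.pi))⁻¹ : ℝ) : ℂ) * (((Real.sqrt (2 * Real.pi))⁻¹ : ℝ) : ℂ) *
      ((2 * Real.pi : ℝ) : ℂ) = 1 := by
    rw [← Complex.ofReal_mul, ← Complex.ofReal_mul, ← mul_inv,
      Real.mul_self_sqrt (by positivity), inv_mul_cancel₀ (by positivity), Complex.ofReal_one]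
  have e3 : (w ^ (1/2 : ℂ))⁻¹ * w ^ (1/2 : ℂ) = 1 := inv_mul_cancel₀ hwc
  rw [← e] at e2
  linear_combination ((s ^ (1/2 : ℂ))⁻¹ * σ' ^ (-(1/2 : ℂ))) * e2 + (
    (((Real.sqrt (2 * Real.pi))⁻¹ : ℝ) : ℂ) * (((Real.sqrt (2 * Real.pi))⁻¹ : ℝ) : ℂ) *
     (((4 * Real.pi * ℏ : ℝ) : ℂ) ^ (1 / 2 : ℂ) * ((Real.pi / ℏ : ℝ) : ℂ) ^ (1 / 2 : ℂ)) *
     (s ^ (1/2 : ℂ))⁻¹ * σ' ^ (-(1/2 : ℂ))) * e3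

/-- the free Schrödinger evolution of a Gaussian coherent state is again a
Gaussian coherent state, up to the classical phase `e^{iA_t/ℏ}`. -/
theorem statement12 (ℏ m t : ℝ) (hℏ : 0 < ℏ) (hm : 0 < m) (q p : ℝ) (σ σ' : ℂ)
    (hσ : 0 < σ.re) (hσ' : 0 < σ'.re) (hadm : ((starRingEnd ℂ) σ * σ').re = 1) :
    ∀ x : ℝ,
      (((Real.sqrt (2 * Real.pi))⁻¹ : ℝ) : ℂ) *
          (∫ k : ℝ, Complex.exp (Complex.I * (k : ℂ) * (x : ℂ)) *
            (Complex.exp (-(Complex.I) * (ℏ : ℂ) * (t : ℂ) * (k : ℂ) ^ 2 / (2 * (m : ℂ))) *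
              ft (fun y => coh ℏ σ σ' q p y) k)) =
        Complex.exp (Complex.I / (ℏ : ℂ) * ((p ^ 2 * t / (2 * m) : ℝ) : ℂ)) *
          coh ℏ (σ + Complex.I * σ' * (t : ℂ) / (2 * (m : ℂ))) σ' (q + p * t / m) p x := by
  intro x
  have hσ'0 : σ' ≠ 0 := by rintro rfl; simp at hσ'
  have hh : (ℏ : ℂ) ≠ 0 := by exact_mod_cast hℏ.ne'
  have hmc : (m : ℂ) ≠ 0 := by exact_mod_cast hm.ne'
  obtain ⟨w, rfl⟩ : ∃ w, σ = w * σ' := ⟨σ / σ', by field_simp⟩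
  have hw : 0 < w.re := by
    have h : ((starRingEnd ℂ) (w * σ') * σ').re = w.re * Complex.normSq σ' := by
      simp [Complex.normSq_apply]; ring
    rw [h] at hadm
    have := Complex.normSq_pos.mpr hσ'0
    by_contra hc
    nlinarith
  set s : ℂ := w + Complex.I * (t / (2 * m) : ℝ) with hsdef
  have hs : 0 < s.re := by
    rw [hsdef, Complex.add_re, Complex.re_mul_ofReal, Complex.I_re, zero_mul, add_zero]; exact hw
  have hs0 : s ≠ 0 := by intro h; rw [h] at hs; simp at hs
  have hσt : w * σ' + Complex.I * σ' * (t : ℂ) / (2 * (m : ℂ)) = s * σ' := by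
    rw [hsdef]; push_cast; ring
  have hws : w = s - Complex.I * (t / (2 * m) : ℝ) := by rw [hsdef]; ring
  rw [hσt]
  have hb : (-((ℏ : ℂ) * s)).re < 0 := by
    rw [Complex.neg_re, neg_lt_zero]; exact aux_scale_re hs hℏ
  have key := integral_cexp_quadratic hb
    (Complex.I * x - Complex.I * q + 2 * w * p) (-(w * p ^ 2 / ℏ))
  have e1 : ((Real.pi : ℂ) / - -((ℏ : ℂ) * s)) = (Real.pi / ℏ : ℝ) * s⁻¹ := by
    push_cast; field_simp
  rw [e1] at key
  simp_rw [aux_ft ℏ hℏ q p w σ' hw hσ'0]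
  generalize hC : ((((Real.sqrt (2 * Real.pi))⁻¹ : ℝ) : ℂ) *
        (((2 * Real.pi * ℏ : ℝ) : ℂ) ^ (-(1/4 : ℂ)) * (w * σ') ^ (-(1/2 : ℂ))) *
        ((4 * Real.pi * ℏ : ℝ) * w) ^ (1 / 2 : ℂ)) = C
  have : ∀ k : ℝ, Complex.exp (Complex.I * (k : ℂ) * (x : ℂ)) *
      (Complex.exp (-(Complex.I) * (ℏ : ℂ) * (t : ℂ) * (k : ℂ) ^ 2 / (2 * (m : ℂ))) *
      (C * Complex.exp (-(Complex.I * k * q) - ℏ * w * (k - p / ℏ) ^ 2))) =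
      C * Complex.exp (-((ℏ : ℂ) * s) * (k : ℂ) ^ 2 +
        (Complex.I * x - Complex.I * q + 2 * w * p) * k + (-(w * p ^ 2 / ℏ))) := by
    intro k
    rw [mul_left_comm _ C, mul_left_comm _ C, ← Complex.exp_add, ← Complex.exp_add]
    congr 2
    rw [hsdef]
    push_cast
    field_simp
    ring
  simp_rw [this]
  rw [integral_const_mul, key, ← hC]
  unfold coh
  rw [← aux_const ℏ hℏ w s σ' hw hs hσ']
  have hexp : Complex.exp (-(w * p ^ 2 / ℏ) -
      (Complex.I * x - Complex.I * q + 2 * w * p) ^ 2 / (4 * -((ℏ : ℂ) * s))) =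
      Complex.exp (Complex.I / (ℏ : ℂ) * ((p ^ 2 * t / (2 * m) : ℝ) : ℂ)) *
      Complex.exp (-(σ' * ((x : ℂ) - ((q + p * t / m : ℝ) : ℂ)) ^ 2) / (4 * (ℏ : ℂ) * (s * σ')) +
      Complex.I * (p : ℂ) * ((x : ℂ) - ((q + p * t / m : ℝ) : ℂ)) / (ℏ : ℂ)) := by
    rw [← Complex.exp_add]
    congr 1
    rw [hws]
    clear_value s
    push_cast
    field_simp
    ring_nf
    simp only [Complex.I_sq]
    ring
  rw [hexp]
  ring
end
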